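/- Let $A \subset \mathbb{R}$ be a compact set and let $d \ge 10$ be an integer. If the Hausdorff dimension of $A$ satisfies $\dim_H(A) > \frac{d-2}{2(d-4)} - \frac{40}{57(d-4)}$ (equivalently, $\dim_H(A) > \frac{d+1}{2d} - \frac{23d-228}{114d(d-4)}$), then the distance set $\Delta(A^d)$ of the $d$-fold Cartesian product $A^d \subset \mathbb{R}^d$ has non-empty interior. -/

import Mathlib

/-- The distance set `Δ(E) = {|x - y| : x, y ∈ E}` of a set `E ⊆ ℝⁿ`. -/
def distSet {n : ℕ} (E : Set (EuclideanSpace ℝ (Fin n))) : Set ℝ :=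
  {t : ℝ | ∃ x ∈ E, ∃ y ∈ E, dist x y = t}

/-- The `n`-fold Cartesian product `Aⁿ ⊆ ℝⁿ` of a set `A ⊆ ℝ`. -/
def prodSet (A : Set ℝ) (n : ℕ) : Set (EuclideanSpace ℝ (Fin n)) :=
  {x | ∀ i, x i ∈ A}

section MattilaSjolinProof

open MeasureTheory Set Filter Topology
open scoped ENNReal NNReal

/-- Gaussian weight. -/
noncomputable def gs (x : ℝ) : ℝ≥0∞ := ENNReal.ofReal (Real.exp (-(x^2)/2))

lemma gs_meas : Measurable gs := by unfold gs; fun_prop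

lemma gs_le_one (x : ℝ) : gs x ≤ 1 := by
  unfold gs
  rw [ENNReal.ofReal_le_one, Real.exp_le_one_iff]
  nlinarith [sq_nonneg x]

lemma gs_anti {x y : ℝ} (h : |x| ≤ |y|) : gs y ≤ gs x := by
  unfold gs
  apply ENNReal.ofReal_le_ofReal
  apply Real.exp_le_exp.mpr
  have := sq_le_sq.mpr h
  linarith

lemma gs_lower {x : ℝ} {b : ℝ} (h : |x| ≤ b) : 1 ≤ ENNReal.ofReal (Real.exp (b^2/2)) * gs x := by
  unfold gs
  rw [← ENNReal.ofReal_mul (by positivity), ← Real.exp_add]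
  rw [ENNReal.one_le_ofReal, Real.one_le_exp_iff]
  have : x^2 ≤ b^2 := sq_le_sq' (by linarith [neg_abs_le x]) (by linarith [le_abs_self x])
  linarith

noncomputable def c0 : ℝ≥0∞ := ∑' k : ℕ, gs k * ENNReal.ofReal (k+1)

lemma c0_ne_top : c0 ≠ ⊤ := by
  unfold c0
  have h1 : Summable (fun k : ℕ => (k:ℝ)^1 * Real.exp (-(1/2) * k)) :=
    Real.summable_pow_mul_exp_neg_nat_mul 1 (by norm_num)
  have h2 : Summable (fun k : ℕ => (k:ℝ)^0 * Real.exp (-(1/2) * k)) :=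
    Real.summable_pow_mul_exp_neg_nat_mul 0 (by norm_num)
  have h3 := h1.add h2
  have h4 : (∑' k : ℕ, ENNReal.ofReal ((k:ℝ)^1 * Real.exp (-(1/2) * k) + (k:ℝ)^0 * Real.exp (-(1/2) * k))) ≠ ⊤ :=
    h3.tsum_ofReal_ne_top
  refine ne_top_of_le_ne_top h4 (ENNReal.tsum_le_tsum fun k => ?_)
  unfold gs
  rw [← ENNReal.ofReal_mul (by positivity)]
  apply ENNReal.ofReal_le_ofReal
  have hk : (k:ℝ) ≤ (k:ℝ)^2 := by exact_mod_cast Nat.le_self_pow (by norm_num) k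
  have : Real.exp (-((k:ℝ)^2)/2) ≤ Real.exp (-(1/2) * k) := Real.exp_le_exp.mpr (by linarith)
  calc _ ≤ Real.exp (-(1/2) * k) * (k+1) := by gcongr
    _ = _ := by ring

lemma gauss_layer {α : Type*} [MeasurableSpace α] (m : Measure α) (X : α → ℝ) (hX : Measurable X)
    (A : ℝ≥0∞) (h : ∀ r : ℝ, 1 ≤ r → m {a | |X a| ≤ r} ≤ A * ENNReal.ofReal r) :
    ∫⁻ a, gs (X a) ∂m ≤ c0 * A := by
  have hms : ∀ k : ℕ, MeasurableSet {a | |X a| ≤ (k:ℝ)+1} := fun k =>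
    measurableSet_le (by fun_prop) measurable_const
  calc ∫⁻ a, gs (X a) ∂m
      ≤ ∫⁻ a, ∑' k : ℕ, gs k * ({a | |X a| ≤ (k:ℝ)+1}.indicator 1 a) ∂m := by
        apply lintegral_mono
        intro a
        refine le_trans ?_ (ENNReal.le_tsum ⌊|X a|⌋₊)
        have h1 : |X a| ≤ (⌊|X a|⌋₊:ℝ)+1 := (Nat.lt_floor_add_one _).le
        rw [indicator_of_mem (by exact h1)]
        simp only [Pi.one_apply, mul_one]
        apply gs_anti
        rw [abs_of_nonneg (by positivity)]
        exact Nat.floor_le (abs_nonneg _)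
    _ = ∑' k : ℕ, gs k * m {a | |X a| ≤ (k:ℝ)+1} := by
        rw [lintegral_tsum]
        · congr 1; ext k
          rw [lintegral_const_mul _ (measurable_one.indicator (hms k)), lintegral_indicator_one (hms k)]
        · intro k
          exact ((measurable_one.indicator (hms k)).const_mul _).aemeasurable
    _ ≤ ∑' k : ℕ, gs k * ENNReal.ofReal (k+1) * A := by
        apply ENNReal.tsum_le_tsum
        intro k
        rw [mul_assoc, mul_comm _ A]
        gcongr
        exact h _ (by linarith [Nat.cast_nonneg (α := ℝ) k])
    _ = c0 * A := by rw [ENNReal.tsum_mul_right]; rfl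

/-- Frostman condition. -/
def Frost (μ : Measure ℝ) (C : ℝ≥0∞) (s : ℝ) : Prop :=
  ∀ x r : ℝ, 0 < r → μ (Icc (x-r) (x+r)) ≤ C * ENNReal.ofReal (r^s)

lemma frost_gauss {μ : Measure ℝ} {C : ℝ≥0∞} {s : ℝ} (hs : s ≤ 1) (hF : Frost μ C s) (x : ℝ) {r : ℝ} (hr : 0 < r) :
    ∫⁻ z, gs ((z - x)/r) ∂μ ≤ c0 * (C * ENNReal.ofReal (r^s)) := by
  apply gauss_layer _ _ (by fun_prop)
  intro k hk
  have : {a : ℝ | |(a - x)/r| ≤ k} = Icc (x - k*r) (x + k*r) := by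
    ext a
    simp only [mem_setOf_eq, mem_Icc, abs_div, abs_of_pos hr, div_le_iff₀ hr, abs_le]
    constructor <;> rintro ⟨h1, h2⟩ <;> constructor <;> linarith
  rw [this]
  refine (hF x (k*r) (by positivity)).trans ?_
  rw [mul_assoc, ← ENNReal.ofReal_mul (by positivity), mul_comm (r^s), Real.mul_rpow (by linarith) hr.le]
  gcongr
  calc k^s ≤ k^(1:ℝ) := Real.rpow_le_rpow_of_exponent_le hk hs
    _ = k := Real.rpow_one k

/-- Fubini identity for L² norms of oscillatory integrals, in inequality form. -/
lemma osc_sq {Θ Ω : Type*} [MeasurableSpace Θ] [MeasurableSpace Ω] (m : Measure Θ) [IsFiniteMeasure m]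
    (P : Measure Ω) [SFinite P] (Φ : Θ → Ω → ℂ) (hΦ : Measurable (Function.uncurry Φ))
    (A : Ω → ℝ) (hA : Integrable A P) (hΦA : ∀ θ ω, ‖Φ θ ω‖ ≤ A ω) :
    (∫ θ, ((‖∫ ω, Φ θ ω ∂P‖^2 : ℝ) : ℂ) ∂m) =
      ∫ w : Ω × Ω, (∫ θ, Φ θ w.1 * (starRingEnd ℂ) (Φ θ w.2) ∂m) ∂(P.prod P) := by
  have h1 : ∀ θ, ((‖∫ ω, Φ θ ω ∂P‖^2 : ℝ) : ℂ) = ∫ w : Ω × Ω, Φ θ w.1 * (starRingEnd ℂ) (Φ θ w.2) ∂(P.prod P) := by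
    intro θ
    rw [integral_prod_mul (fun ω => Φ θ ω) (fun ω => (starRingEnd ℂ) (Φ θ ω)), integral_conj, Complex.mul_conj,
      Complex.normSq_eq_norm_sq]
  simp_rw [h1]
  rw [integral_integral_swap]
  have hInt : Integrable (fun q : Θ × (Ω × Ω) => (1:ℝ) * (A q.2.1 * A q.2.2)) (m.prod (P.prod P)) :=
    (integrable_const (1:ℝ)).mul_prod (hA.mul_prod hA)
  refine hInt.mono' ?_ ?_
  · apply Measurable.aestronglyMeasurable
    have a1 : Measurable (fun q : Θ × (Ω × Ω) => Φ q.1 q.2.1) := hΦ.comp (by fun_prop : Measurable fun q : Θ × (Ω × Ω) => (q.1, q.2.1))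
    have a2 : Measurable (fun q : Θ × (Ω × Ω) => Φ q.1 q.2.2) := hΦ.comp (by fun_prop : Measurable fun q : Θ × (Ω × Ω) => (q.1, q.2.2))
    exact a1.mul (Complex.continuous_conj.measurable.comp a2)
  · refine ae_of_all _ fun q => ?_
    simp only [Function.uncurry, norm_mul, RCLike.norm_conj, one_mul]
    exact mul_le_mul (hΦA _ _) (hΦA _ _) (norm_nonneg _) ((norm_nonneg _).trans (hΦA q.1 _))

lemma osc_meas {Θ Ω : Type*} [MeasurableSpace Θ] [MeasurableSpace Ω]
    (P : Measure Ω) [SFinite P] (Φ : Θ → Ω → ℂ) (hΦ : Measurable (Function.uncurry Φ)) :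
    Measurable (fun θ => ∫ ω, Φ θ ω ∂P) :=
  (hΦ.stronglyMeasurable.integral_prod_right').measurable

lemma osc_lint {Θ Ω : Type*} [MeasurableSpace Θ] [MeasurableSpace Ω] (m : Measure Θ) [IsFiniteMeasure m]
    (P : Measure Ω) [SFinite P] (Φ : Θ → Ω → ℂ) (hΦ : Measurable (Function.uncurry Φ))
    (A : Ω → ℝ) (hA : Integrable A P) (hΦA : ∀ θ ω, ‖Φ θ ω‖ ≤ A ω) :
    ∫⁻ θ, ‖∫ ω, Φ θ ω ∂P‖ₑ^2 ∂m = 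
      ‖∫ w : Ω × Ω, (∫ θ, Φ θ w.1 * (starRingEnd ℂ) (Φ θ w.2) ∂m) ∂(P.prod P)‖ₑ := by
  rw [← osc_sq m P Φ hΦ A hA hΦA, integral_complex_ofReal]
  have hb : ∀ θ, ‖∫ ω, Φ θ ω ∂P‖ ≤ ∫ ω, A ω ∂P := fun θ =>
    norm_integral_le_of_norm_le hA (ae_of_all _ (hΦA θ))
  have hm := osc_meas P Φ hΦ
  have hI : Integrable (fun θ => ‖∫ ω, Φ θ ω ∂P‖^2) m := by
    refine Integrable.of_bound (hm.norm.pow_const 2).aestronglyMeasurable ((∫ ω, A ω ∂P)^2) (ae_of_all _ fun θ => ?_)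
    rw [norm_pow, norm_norm]
    exact pow_le_pow_left₀ (norm_nonneg _) (hb θ) 2
  have h0 : 0 ≤ ∫ θ, ‖∫ ω, Φ θ ω ∂P‖^2 ∂m := integral_nonneg fun θ => by positivity
  rw [← ofReal_norm, Complex.norm_real, Real.norm_of_nonneg h0,
    ofReal_integral_eq_lintegral_ofReal hI (ae_of_all _ fun θ => by positivity)]
  congr 1; ext θ
  rw [ENNReal.ofReal_pow (norm_nonneg _), ofReal_norm]

lemma osc_up {Θ Ω : Type*} [MeasurableSpace Θ] [MeasurableSpace Ω] (m : Measure Θ) [IsFiniteMeasure m]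
    (P : Measure Ω) [SFinite P] (Φ : Θ → Ω → ℂ) (hΦ : Measurable (Function.uncurry Φ))
    (A : Ω → ℝ) (hA : Integrable A P) (hΦA : ∀ θ ω, ‖Φ θ ω‖ ≤ A ω) :
    ∫⁻ θ, ‖∫ ω, Φ θ ω ∂P‖ₑ^2 ∂m ≤
      ∫⁻ w, ‖(∫ θ, Φ θ w.1 * (starRingEnd ℂ) (Φ θ w.2) ∂m)‖ₑ ∂(P.prod P) := by
  rw [osc_lint m P Φ hΦ A hA hΦA]
  exact enorm_integral_le_lintegral_enorm _

lemma osc_low {Θ Ω : Type*} [MeasurableSpace Θ] [MeasurableSpace Ω] (m : Measure Θ) [IsFiniteMeasure m]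
    (P : Measure Ω) [IsFiniteMeasure P] (Φ : Θ → Ω → ℂ) (hΦ : Measurable (Function.uncurry Φ))
    (hΦA : ∀ θ ω, ‖Φ θ ω‖ ≤ 1) (k : Ω × Ω → ℝ) (hk0 : ∀ w, 0 ≤ k w)
    (hk : ∀ w, ∫ θ, Φ θ w.1 * (starRingEnd ℂ) (Φ θ w.2) ∂m = (k w : ℂ)) (hkm : Measurable k) (hk1 : ∀ w, k w ≤ 1) :
    ∫⁻ w, ENNReal.ofReal (k w) ∂(P.prod P) = ∫⁻ θ, ‖∫ ω, Φ θ ω ∂P‖ₑ^2 ∂m := by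
  rw [osc_lint m P Φ hΦ (fun _ => 1) (integrable_const _) hΦA]
  simp_rw [hk]
  rw [integral_complex_ofReal, ← ofReal_norm, Complex.norm_real, Real.norm_of_nonneg (integral_nonneg hk0),
    ofReal_integral_eq_lintegral_ofReal _ (ae_of_all _ hk0)]
  refine Integrable.of_bound hkm.aestronglyMeasurable 1 (ae_of_all _ fun w => ?_)
  rw [Real.norm_of_nonneg (hk0 w)]; exact hk1 w

/-- centered Gaussian measure with standard deviation `Q`. -/
noncomputable def ga (Q : ℝ) : Measure ℝ := ProbabilityTheory.gaussianReal 0 (Real.toNNReal (Q^2))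

instance (Q : ℝ) : IsProbabilityMeasure (ga Q) := by unfold ga; infer_instance

lemma ga_lint {Q : ℝ} (hQ : 0 < Q) (f : ℝ → ℝ≥0∞) (hf : Measurable f) :
    ∫⁻ x, f x ∂(ga Q) = ENNReal.ofReal (1/(Q*√(2*Real.pi))) * ∫⁻ x, f x * gs (x/Q) := by
  unfold ga
  have hv : Real.toNNReal (Q^2) ≠ 0 := by
    simpa using hQ.ne'
  rw [ProbabilityTheory.gaussianReal_of_var_ne_zero _ hv, lintegral_withDensity_eq_lintegral_mul _ (by fun_prop) hf,
    ← lintegral_const_mul _ (by have := gs_meas; fun_prop)]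
  congr 1; ext x
  simp only [Pi.mul_apply, ProbabilityTheory.gaussianPDF, ProbabilityTheory.gaussianPDFReal, gs, sub_zero]
  rw [ENNReal.ofReal_mul (by positivity), Real.coe_toNNReal _ (by positivity)]
  have e1 : √(2*Real.pi*Q^2) = Q*√(2*Real.pi) := by
    rw [Real.sqrt_mul (by positivity), Real.sqrt_sq hQ.le, mul_comm]
  have e2 : -x^2/(2*Q^2) = -((x/Q)^2)/2 := by field_simp
  rw [e1, e2, one_div]
  ring

lemma ga_char (Q x : ℝ) : ∫ η, Complex.exp (Complex.I * (η * x)) ∂(ga Q) = (Real.exp (-((Q*x)^2)/2) : ℂ) := by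
  have := ProbabilityTheory.charFun_gaussianReal (μ := 0) (v := Real.toNNReal (Q^2)) x
  rw [charFun_apply_real] at this
  unfold ga
  have h2 : ∀ η : ℝ, Complex.exp (Complex.I * (η * x)) = Complex.exp (x * η * Complex.I) := fun η => by
    congr 1; ring
  simp_rw [h2]
  rw [this]
  have : ((Real.toNNReal (Q^2) : ℝ≥0) : ℂ) = (Q:ℂ)^2 := by
    rw [← Complex.ofReal_pow]
    exact_mod_cast Real.coe_toNNReal (Q^2) (sq_nonneg Q)
  rw [this]
  push_cast
  congr 1; ring

lemma enorm_exp_I (x : ℝ) : ‖Complex.exp (Complex.I * x)‖ₑ = 1 := by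
  rw [← ofReal_norm, mul_comm, Complex.norm_exp_ofReal_mul_I]; simp

lemma norm_exp_I (x : ℝ) : ‖Complex.exp (Complex.I * x)‖ = 1 := by
  rw [mul_comm, Complex.norm_exp_ofReal_mul_I]

lemma conj_exp_I (x : ℝ) : (starRingEnd ℂ) (Complex.exp (Complex.I * x)) = Complex.exp (Complex.I * (-x : ℝ)) := by
  rw [← Complex.exp_conj]; simp

/-- weighted L² bound -/
lemma osc_gauss {Ω : Type*} [MeasurableSpace Ω] (P : Measure Ω) [SFinite P] (f : Ω → ℝ) (hf : Measurable f)
    (a : Ω → ℂ) (ha : Measurable a) (hai : Integrable a P) (Q : ℝ) :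
    ∫⁻ η, ‖∫ ω, a ω * Complex.exp (Complex.I * (η * f ω : ℝ)) ∂P‖ₑ^2 ∂(ga Q) ≤
      ∫⁻ w, ‖a w.1‖ₑ * ‖a w.2‖ₑ * gs (Q * (f w.1 - f w.2)) ∂(P.prod P) := by
  refine (osc_up (ga Q) P (fun η ω => a ω * Complex.exp (Complex.I * (η * f ω : ℝ))) ?_ (fun ω => ‖a ω‖) hai.norm ?_).trans ?_
  · simp only [Function.uncurry_def]; fun_prop
  · intro η ω
    rw [norm_mul, norm_exp_I, mul_one]
  · apply le_of_eq
    congr 1; ext w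
    have : ∀ η : ℝ, a w.1 * Complex.exp (Complex.I * (η * f w.1 : ℝ)) * (starRingEnd ℂ) (a w.2 * Complex.exp (Complex.I * (η * f w.2 : ℝ)))
       = (a w.1 * (starRingEnd ℂ) (a w.2)) * Complex.exp (Complex.I * (η * (f w.1 - f w.2 : ℝ))) := by
      intro η
      rw [map_mul, conj_exp_I, mul_mul_mul_comm, ← Complex.exp_add]
      congr 2; push_cast; ring
    simp_rw [this]
    rw [integral_const_mul, ga_char, enorm_mul, enorm_mul, ← ofReal_norm ((starRingEnd ℂ) _), RCLike.norm_conj, ofReal_norm]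
    congr 1
    rw [← ofReal_norm, Complex.norm_real, Real.norm_of_nonneg (by positivity)]
    rfl

lemma cs_lint {α : Type*} [MeasurableSpace α] (m : Measure α) (f g : α → ℝ≥0∞) (hf : AEMeasurable f m) (hg : AEMeasurable g m) :
    (∫⁻ a, f a * g a ∂m)^2 ≤ (∫⁻ a, f a^2 ∂m) * ∫⁻ a, g a^2 ∂m := by
  have h := ENNReal.lintegral_mul_le_Lp_mul_Lq m (p := 2) (q := 2) (by constructor <;> norm_num) hf hg
  simp only [Pi.mul_apply, ENNReal.rpow_ofNat] at h
  calc _ ≤ ((∫⁻ a, f a^2 ∂m)^(1/2:ℝ) * (∫⁻ a, g a^2 ∂m)^(1/2:ℝ))^2 := by gcongr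
    _ = _ := by
      rw [mul_pow, ← ENNReal.rpow_ofNat, ← ENNReal.rpow_mul, ← ENNReal.rpow_ofNat, ← ENNReal.rpow_mul]
      norm_num

lemma cs_one {α : Type*} [MeasurableSpace α] (m : Measure α) (f : α → ℝ≥0∞) (hf : AEMeasurable f m) :
    (∫⁻ a, f a ∂m)^2 ≤ m univ * ∫⁻ a, f a^2 ∂m := by
  have := cs_lint m (fun _ => 1) f aemeasurable_const hf
  simpa using this

/-- oscillatory integral -/
noncomputable def osc (μ : Measure ℝ) (a : ℝ → ℂ) (η : ℝ) : ℂ := ∫ z, a z * Complex.exp (Complex.I * (η * z : ℝ)) ∂μ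

lemma osc_measurable (μ : Measure ℝ) [SFinite μ] {a : ℝ → ℂ} (ha : Measurable a) : Measurable (osc μ a) := by
  unfold osc
  apply osc_meas
  simp only [Function.uncurry_def]; fun_prop

lemma integrable_bdd {μ : Measure ℝ} [IsFiniteMeasure μ] {a : ℝ → ℂ} (ha : Measurable a) {c : ℝ} (hc : ∀ᵐ z ∂μ, ‖a z‖ ≤ c) :
    Integrable a μ := Integrable.of_bound ha.aestronglyMeasurable c hc

lemma sqrt2pi_pos : 0 < √(2*Real.pi) := by positivity

lemma osc_frost {μ : Measure ℝ} [IsFiniteMeasure μ] {C : ℝ≥0∞} {s : ℝ} (hs : s ≤ 1) (hF : Frost μ C s)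
    {a : ℝ → ℂ} (ha : Measurable a) {c : ℝ} (hc : ∀ᵐ z ∂μ, ‖a z‖ ≤ c) {Q : ℝ} (hQ : 0 < Q) :
    ∫⁻ η, ‖osc μ a η‖ₑ^2 * gs (η/Q) ≤
      (ENNReal.ofReal (√(2*Real.pi)) * (ENNReal.ofReal c^2 * (μ univ * (c0 * C)))) * ENNReal.ofReal (Q^(1-s)) := by
  have hm : Measurable (fun η => ‖osc μ a η‖ₑ^2) := ((osc_measurable μ ha).enorm.pow_const 2)
  have h1 := osc_gauss μ id measurable_id a ha (integrable_bdd ha hc) Q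
  have h1' : ∫⁻ η, ‖osc μ a η‖ₑ^2 ∂(ga Q) ≤ ENNReal.ofReal c^2 * (μ univ * (c0 * C)) * ENNReal.ofReal (Q^(-s)) := by
    refine (le_of_eq rfl).trans (h1.trans ?_)
    have hc' : ∀ᵐ z ∂μ, ‖a z‖ₑ ≤ ENNReal.ofReal c := by
      filter_upwards [hc] with z hz
      rw [← ofReal_norm]; exact ENNReal.ofReal_le_ofReal hz
    have gm := gs_meas
    rw [lintegral_prod _ (by have := ha.enorm; simp only [id]; fun_prop)]
    calc _ ≤ ∫⁻ z, ENNReal.ofReal c^2 * (c0 * (C * ENNReal.ofReal (Q^(-s)))) ∂μ := by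
          apply lintegral_mono_ae
          filter_upwards [hc'] with z hz
          calc _ ≤ ∫⁻ y, ENNReal.ofReal c^2 * gs ((y - z)/(1/Q)) ∂μ := by
                apply lintegral_mono_ae
                filter_upwards [hc'] with y hy
                rw [pow_two]
                have : gs (Q * (id z - id y)) = gs ((y-z)/(1/Q)) := by
                  unfold gs; congr 3; simp only [id]; field_simp; ring
                rw [this]
                gcongr
            _ ≤ _ := by
                rw [lintegral_const_mul _ (by fun_prop)]
                gcongr
                have := frost_gauss hs hF z (r := 1/Q) (by positivity)
                rwa [one_div, Real.inv_rpow hQ.le, ← Real.rpow_neg hQ.le, ← one_div] at this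
      _ = _ := by rw [lintegral_const]; ring
  rw [ga_lint hQ _ hm] at h1'
  have e : ENNReal.ofReal (Q*√(2*Real.pi)) * ENNReal.ofReal (1/(Q*√(2*Real.pi))) = 1 := by
    rw [← ENNReal.ofReal_mul (by positivity)]
    have := sqrt2pi_pos
    rw [mul_one_div_cancel (by positivity)]; simp
  calc _ = ENNReal.ofReal (Q*√(2*Real.pi)) * (ENNReal.ofReal (1/(Q*√(2*Real.pi))) * ∫⁻ η, ‖osc μ a η‖ₑ^2 * gs (η/Q)) := by
        rw [← mul_assoc, e, one_mul]
    _ ≤ ENNReal.ofReal (Q*√(2*Real.pi)) * (ENNReal.ofReal c^2 * (μ univ * (c0 * C)) * ENNReal.ofReal (Q^(-s))) := by gcongr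
    _ = _ := by
        rw [sub_eq_add_neg, Real.rpow_add hQ, Real.rpow_one, ENNReal.ofReal_mul hQ.le, ENNReal.ofReal_mul hQ.le]
        ring

lemma osc_point {μ : Measure ℝ} [IsFiniteMeasure μ] 
    {a b : ℝ → ℂ} (hb : Measurable b) {c : ℝ} (hc : ∀ᵐ z ∂μ, ‖b z‖ ≤ c)
    (hab : ∀ᵐ z ∂μ, a z = b z * (Real.exp (-(z^2)/2) : ℂ)) (η : ℝ) :
    ‖osc μ a η‖ₑ^2 ≤ ∫⁻ x, ‖osc μ b x‖ₑ^2 * gs (x - η) := by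
  have hbi := integrable_bdd hb hc
  have e1 : osc μ a η = ∫ u, osc μ b (u+η) ∂(ga 1) := by
    unfold osc
    rw [integral_integral_swap]
    · apply integral_congr_ae
      filter_upwards [hab] with z hz
      have : ∀ u : ℝ, b z * Complex.exp (Complex.I * ((u+η) * z : ℝ)) = 
        (b z * Complex.exp (Complex.I * (η * z : ℝ))) * Complex.exp (Complex.I * (u * z)) := by
        intro u
        rw [mul_assoc, ← Complex.exp_add]
        congr 2; push_cast; ring
      simp_rw [this]
      rw [integral_const_mul, ga_char, hz, one_mul]
      ring
    · refine Integrable.mono' (((integrable_const (1:ℝ)).mul_prod hbi.norm) : Integrable (fun q : ℝ × ℝ => 1 * ‖b q.2‖) ((ga 1).prod μ)) ?_ ?_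
      · apply Measurable.aestronglyMeasurable
        simp only [Function.uncurry_def]; fun_prop
      · refine ae_of_all _ fun q => ?_
        simp only [Function.uncurry_def]
        rw [norm_mul, norm_exp_I]; linarith
  have hm := osc_measurable μ hb
  have gm := gs_meas
  rw [e1]
  calc _ ≤ (∫⁻ u, ‖osc μ b (u+η)‖ₑ ∂(ga 1))^2 := by gcongr; exact enorm_integral_le_lintegral_enorm _
    _ ≤ ∫⁻ u, ‖osc μ b (u+η)‖ₑ^2 ∂(ga 1) := by
        have := cs_one (ga 1) (fun u => ‖osc μ b (u+η)‖ₑ) (by fun_prop)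
        simpa using this
    _ = ENNReal.ofReal (1/(1*√(2*Real.pi))) * ∫⁻ u, ‖osc μ b (u+η)‖ₑ^2 * gs (u/1) := by
        rw [ga_lint one_pos _ (by fun_prop)]
    _ ≤ 1 * ∫⁻ u, ‖osc μ b (u+η)‖ₑ^2 * gs (u/1) := by
        gcongr
        rw [ENNReal.ofReal_le_one, one_mul, div_le_one sqrt2pi_pos, Real.one_le_sqrt]
        linarith [Real.pi_gt_three]
    _ = _ := by
        rw [one_mul, ← lintegral_add_right_eq_self (fun x => ‖osc μ b x‖ₑ^2 * gs (x - η)) η]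
        simp

/-- dyadic summation -/
lemma dyadic_weight (σ α : ℝ) (h : σ < α) (hα : 0 ≤ α) : ∃ K : ℝ≥0∞, K ≠ ⊤ ∧ ∀ (f : ℝ → ℝ≥0∞) (D : ℝ≥0∞), Measurable f →
    (∀ Q : ℝ, 1 ≤ Q → ∫⁻ η, f η * gs (η/Q) ≤ D * ENNReal.ofReal (Q^σ)) → 
    ∀ Q : ℝ, 1 ≤ Q → ∫⁻ η, f η * ENNReal.ofReal ((Q+|η|)^(-α)) ≤ K * D * ENNReal.ofReal (Q^(σ-α)) := by
  have hgeo : Summable (fun k : ℕ => ((2:ℝ)^(σ-α))^k) := 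
    summable_geometric_of_lt_one (by positivity) (Real.rpow_lt_one_of_one_lt_of_neg (by norm_num) (by linarith))
  refine ⟨ENNReal.ofReal (2^α * Real.exp (1/2)) * ∑' k : ℕ, ENNReal.ofReal (((2:ℝ)^(σ-α))^k), 
    ENNReal.mul_ne_top ENNReal.ofReal_ne_top hgeo.tsum_ofReal_ne_top, ?_⟩
  intro f D hf hD Q hQ
  have gm := gs_meas
  have hQ0 : 0 < Q := by linarith
  have key : ∀ η : ℝ, ENNReal.ofReal ((Q+|η|)^(-α)) ≤ 
     ENNReal.ofReal (2^α * Real.exp (1/2)) * ∑' k : ℕ, ENNReal.ofReal ((2^k*Q)^(-α)) * gs (η/(2^k*Q)) := by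
    intro η
    obtain ⟨k, hk1, hk2⟩ : ∃ k : ℕ, |η| ≤ 2^k*Q ∧ 2^k*Q ≤ 2*(Q+|η|) := by
      have hex : ∃ k : ℕ, |η| ≤ 2^k*Q := by
        obtain ⟨k, hk⟩ := pow_unbounded_of_one_lt |η| (by norm_num : (1:ℝ)<2)
        exact ⟨k, by nlinarith [abs_nonneg η, pow_pos (by norm_num : (0:ℝ)<2) k]⟩
      classical
      refine ⟨Nat.find hex, Nat.find_spec hex, ?_⟩
      rcases hn : Nat.find hex with _ | n
      · simp; nlinarith [abs_nonneg η]
      · have := Nat.find_min hex (m := n) (by omega)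
        push Not at this
        rw [pow_succ]; linarith
    refine le_trans ?_ (mul_le_mul_right (ENNReal.le_tsum k) _)
    unfold gs
    rw [← ENNReal.ofReal_mul (by positivity), ← ENNReal.ofReal_mul (by positivity)]
    apply ENNReal.ofReal_le_ofReal
    have hp : 0 < 2^k*Q := by positivity
    have a1 : (2*(Q+|η|))^(-α) ≤ (2^k*Q)^(-α) := Real.rpow_le_rpow_of_nonpos hp hk2 (by linarith)
    have a2 : (2*(Q+|η|))^(-α) = 2^(-α) * (Q+|η|)^(-α) := Real.mul_rpow (by norm_num) (by positivity)
    have a3 : 1 ≤ Real.exp (1/2) * Real.exp (-((η/(2^k*Q))^2)/2) := by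
      rw [← Real.exp_add, Real.one_le_exp_iff]
      have : (η/(2^k*Q))^2 ≤ 1 := by
        rw [sq_le_one_iff_abs_le_one, abs_div, abs_of_pos hp, div_le_one hp]; exact hk1
      linarith
    have a4 : (2:ℝ)^α * 2^(-α) = 1 := by rw [← Real.rpow_add (by norm_num)]; simp
    have p1 : 0 < (Q+|η|)^(-α) := by positivity
    calc (Q+|η|)^(-α) = 2^α * (2^(-α) * (Q+|η|)^(-α)) := by rw [← mul_assoc, a4, one_mul]
      _ ≤ 2^α * (2^k*Q)^(-α) := by rw [← a2]; gcongr
      _ ≤ 2^α * (2^k*Q)^(-α) * (Real.exp (1/2) * Real.exp (-((η/(2^k*Q))^2)/2)) := le_mul_of_one_le_right (by positivity) a3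
      _ = _ := by ring
  calc _ ≤ ∫⁻ η, ENNReal.ofReal (2^α * Real.exp (1/2)) * ∑' k : ℕ, ENNReal.ofReal ((2^k*Q)^(-α)) * (f η * gs (η/(2^k*Q))) := by
        apply lintegral_mono; intro η
        calc _ ≤ f η * (ENNReal.ofReal (2^α * Real.exp (1/2)) * ∑' k : ℕ, ENNReal.ofReal ((2^k*Q)^(-α)) * gs (η/(2^k*Q))) := by
              exact mul_le_mul_right (key η) _
          _ = _ := by
              rw [mul_left_comm, ← ENNReal.tsum_mul_left]; congr 2; ext k; ring
    _ = ENNReal.ofReal (2^α * Real.exp (1/2)) * ∑' k : ℕ, ENNReal.ofReal ((2^k*Q)^(-α)) * ∫⁻ η, f η * gs (η/(2^k*Q)) := by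
        rw [lintegral_const_mul _ (Measurable.tsum fun k => by fun_prop), lintegral_tsum (fun k => by fun_prop)]
        congr 2; ext k
        rw [lintegral_const_mul _ (by fun_prop)]
    _ ≤ ENNReal.ofReal (2^α * Real.exp (1/2)) * ∑' k : ℕ, ENNReal.ofReal (((2:ℝ)^(σ-α))^k) * (D * ENNReal.ofReal (Q^(σ-α))) := by
        refine mul_le_mul_right (ENNReal.tsum_le_tsum fun k => ?_) _
        have hk : (1:ℝ) ≤ 2^k := one_le_pow₀ (by norm_num)
        calc _ ≤ ENNReal.ofReal ((2^k*Q)^(-α)) * (D * ENNReal.ofReal ((2^k*Q)^σ)) := by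
              gcongr; exact hD _ (by nlinarith)
          _ = D * ENNReal.ofReal ((2^k*Q)^(σ-α)) := by
              rw [mul_left_comm, ← ENNReal.ofReal_mul (by positivity), ← Real.rpow_add (by positivity)]
              congr 3; ring
          _ = _ := by
              rw [Real.mul_rpow (by positivity) hQ0.le, ← Real.rpow_natCast 2 k, ← Real.rpow_mul (by norm_num), mul_comm (k:ℝ),
                Real.rpow_mul (by norm_num), Real.rpow_natCast, ENNReal.ofReal_mul (by positivity)]
              ring
    _ = _ := by rw [ENNReal.tsum_mul_right]; ring

lemma frost_moment {μ : Measure ℝ} [IsFiniteMeasure μ] {C : ℝ≥0∞} (hC : C ≠ ⊤) {s α : ℝ} (hF : Frost μ C s) (hα : 0 ≤ α) (hαs : α < s) :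
    ∃ K : ℝ≥0∞, K ≠ ⊤ ∧ ∀ h c : ℝ, 0 < h → ∫⁻ z, ENNReal.ofReal ((h+|z-c|)^(-α)) ∂μ ≤ K := by
  have hgeo : Summable (fun k : ℕ => ((2:ℝ)^(α-s))^k) := 
    summable_geometric_of_lt_one (by positivity) (Real.rpow_lt_one_of_one_lt_of_neg (by norm_num) (by linarith))
  refine ⟨μ univ + (∑' k : ℕ, ENNReal.ofReal (((2:ℝ)^(α-s))^k)) * (ENNReal.ofReal (2^α) * C), ?_, ?_⟩
  · exact ENNReal.add_ne_top.mpr ⟨measure_ne_top _ _, ENNReal.mul_ne_top hgeo.tsum_ofReal_ne_top (ENNReal.mul_ne_top ENNReal.ofReal_ne_top hC)⟩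
  intro h c hh
  have hms : ∀ n : ℕ, MeasurableSet (Icc (c-(1/2:ℝ)^n) (c+(1/2)^n)) := fun n => measurableSet_Icc
  have key : ∀ z : ℝ, ENNReal.ofReal ((h+|z-c|)^(-α)) ≤ 1 + ∑' n : ℕ, ENNReal.ofReal (((1/2:ℝ)^(n+1))^(-α)) * (Icc (c-(1/2:ℝ)^n) (c+(1/2)^n)).indicator 1 z := by
    intro z
    have hx : 0 < h+|z-c| := by positivity
    by_cases h1 : 1 ≤ h+|z-c|
    · refine le_trans ?_ le_self_add
      rw [ENNReal.ofReal_le_one]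
      exact Real.rpow_le_one_of_one_le_of_nonpos h1 (by linarith)
    · push Not at h1
      obtain ⟨n, hn1, hn2⟩ := exists_nat_pow_near_of_lt_one hx h1.le (by norm_num : (0:ℝ)<1/2) (by norm_num)
      refine le_trans ?_ le_add_self
      refine le_trans ?_ (ENNReal.le_tsum n)
      rw [indicator_of_mem]
      · simp only [Pi.one_apply, mul_one]
        apply ENNReal.ofReal_le_ofReal
        exact Real.rpow_le_rpow_of_nonpos (by positivity) hn1.le (by linarith)
      · have : |z-c| ≤ (1/2)^n := by linarith
        rw [abs_le] at this
        exact ⟨by linarith, by linarith⟩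
  calc _ ≤ ∫⁻ z, (1 + ∑' n : ℕ, ENNReal.ofReal (((1/2:ℝ)^(n+1))^(-α)) * (Icc (c-(1/2:ℝ)^n) (c+(1/2)^n)).indicator 1 z) ∂μ := lintegral_mono key
    _ = μ univ + ∑' n : ℕ, ENNReal.ofReal (((1/2:ℝ)^(n+1))^(-α)) * μ (Icc (c-(1/2:ℝ)^n) (c+(1/2)^n)) := by
        rw [lintegral_add_left measurable_const, lintegral_tsum (fun n => ((measurable_one.indicator (hms n)).const_mul _).aemeasurable)]
        simp only [lintegral_const, one_mul]
        congr 2; ext n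
        rw [lintegral_const_mul _ (measurable_one.indicator (hms n)), lintegral_indicator_one (hms n)]
    _ ≤ _ := by
        rw [← ENNReal.tsum_mul_right]
        refine add_le_add le_rfl (ENNReal.tsum_le_tsum fun n => ?_)
        calc _ ≤ ENNReal.ofReal (((1/2:ℝ)^(n+1))^(-α)) * (C * ENNReal.ofReal (((1/2:ℝ)^n)^s)) := by
              exact mul_le_mul_right (hF c _ (by positivity)) _
          _ = _ := by
              have e : ((1/2:ℝ)^(n+1))^(-α) * ((1/2:ℝ)^n)^s = ((2:ℝ)^(α-s))^n * 2^α := by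
                have : (1/2:ℝ) = 2^(-1:ℝ) := by rw [Real.rpow_neg_one]; norm_num
                rw [this, ← Real.rpow_natCast, ← Real.rpow_natCast, ← Real.rpow_natCast,← Real.rpow_mul (by norm_num), ← Real.rpow_mul (by norm_num), ← Real.rpow_mul (by norm_num), ← Real.rpow_mul (by norm_num), ← Real.rpow_mul (by norm_num), ← Real.rpow_add (by norm_num), ← Real.rpow_add (by norm_num)]
                congr 1; push_cast; ring
              rw [mul_left_comm, ← ENNReal.ofReal_mul (by positivity), e, ENNReal.ofReal_mul (by positivity)]
              ring

lemma frost_shift {μ : Measure ℝ} [IsFiniteMeasure μ] {C : ℝ≥0∞} (hC : C ≠ ⊤) {s α B : ℝ} (hF : Frost μ C s) (hα : 0 ≤ α) (hαs : α < s)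
   (hB : 1 ≤ B) (hz : ∀ᵐ z ∂μ, |z| ≤ B) :
    ∃ K : ℝ≥0∞, K ≠ ⊤ ∧ ∀ ξ w : ℝ, ∫⁻ z, ENNReal.ofReal ((1+|2*ξ*z+w|)^(-α)) ∂μ ≤ K * ENNReal.ofReal ((1+|ξ|+|w|)^(-α)) := by
  obtain ⟨K, hK, hK2⟩ := frost_moment hC hF hα hαs
  refine ⟨ENNReal.ofReal ((1/4:ℝ)^(-α)) * μ univ + ENNReal.ofReal ((1/(2+4*B):ℝ)^(-α)) * μ univ + ENNReal.ofReal ((2/(2+4*B):ℝ)^(-α)) * K, ?_, ?_⟩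
  · have := measure_ne_top μ univ
    finiteness
  intro ξ w
  have gen : ∀ (k : ℝ), 0 < k → (∀ᵐ z ∂μ, k * (1+|ξ|+|w|) ≤ 1+|2*ξ*z+w|) → ∫⁻ z, ENNReal.ofReal ((1+|2*ξ*z+w|)^(-α)) ∂μ ≤ ENNReal.ofReal (k^(-α)) * μ univ * ENNReal.ofReal ((1+|ξ|+|w|)^(-α)) := by
    intro k hk h
    calc _ ≤ ∫⁻ z, ENNReal.ofReal (k^(-α)) * ENNReal.ofReal ((1+|ξ|+|w|)^(-α)) ∂μ := by
          apply lintegral_mono_ae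
          filter_upwards [h] with z hz
          rw [← ENNReal.ofReal_mul (by positivity), ← Real.mul_rpow hk.le (by positivity)]
          exact ENNReal.ofReal_le_ofReal (Real.rpow_le_rpow_of_nonpos (by positivity) hz (by linarith))
      _ = _ := by rw [lintegral_const]; ring
  have pw := abs_nonneg w
  have pξ := abs_nonneg ξ
  by_cases c1 : 4*B*|ξ| ≤ |w|
  · refine (gen (1/4) (by norm_num) ?_).trans ?_
    · filter_upwards [hz] with z hz
      have h1 : |w| ≤ |2*ξ*z+w| + |2*ξ*z| := by
        calc |w| = |(2*ξ*z+w) - 2*ξ*z| := by ring_nf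
          _ ≤ _ := abs_sub _ _
      have h2 : |2*ξ*z| ≤ 2*B*|ξ| := by
        rw [abs_mul, abs_mul, abs_two]; nlinarith
      nlinarith
    · gcongr; exact le_self_add.trans le_self_add
  push Not at c1
  by_cases c2 : |ξ| ≤ 1
  · refine (gen (1/(2+4*B)) (by positivity) ?_).trans ?_
    · refine ae_of_all _ fun z => ?_
      rw [one_div_mul_eq_div, div_le_iff₀ (by positivity)]
      nlinarith [abs_nonneg (2*ξ*z+w)]
    · gcongr; exact le_add_self.trans le_self_add
  push Not at c2
  have hξ : ξ ≠ 0 := by rintro rfl; simp at c2; linarith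
  have pξ' : 0 < |ξ| := abs_pos.mpr hξ
  calc _ ≤ ∫⁻ z, ENNReal.ofReal ((2/(2+4*B):ℝ)^(-α)) * ENNReal.ofReal ((1+|ξ|+|w|)^(-α)) * ENNReal.ofReal ((1/(2*|ξ|)+|z-(-w/(2*ξ))|)^(-α)) ∂μ := by
        apply lintegral_mono; intro z
        simp only
        rw [← ENNReal.ofReal_mul (by positivity), ← ENNReal.ofReal_mul (by positivity), ← Real.mul_rpow (by positivity) (by positivity), ← Real.mul_rpow (by positivity) (by positivity)]
        apply ENNReal.ofReal_le_ofReal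
        apply Real.rpow_le_rpow_of_nonpos (by positivity) _ (by linarith)
        have e : 1+|2*ξ*z+w| = 2*|ξ| * (1/(2*|ξ|)+|z-(-w/(2*ξ))|) := by
          have : 2*ξ*z+w = 2*ξ*(z-(-w/(2*ξ))) := by field_simp; ring
          rw [this, abs_mul, abs_mul, abs_two]; field_simp
        rw [e]
        refine mul_le_mul_of_nonneg_right ?_ (by positivity)
        rw [div_mul_eq_mul_div, div_le_iff₀ (by positivity)]
        nlinarith
    _ = ENNReal.ofReal ((2/(2+4*B):ℝ)^(-α)) * ENNReal.ofReal ((1+|ξ|+|w|)^(-α)) * ∫⁻ z, ENNReal.ofReal ((1/(2*|ξ|)+|z-(-w/(2*ξ))|)^(-α)) ∂μ := by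
        rw [lintegral_const_mul' _ _ (by finiteness)]
    _ ≤ ENNReal.ofReal ((2/(2+4*B):ℝ)^(-α)) * ENNReal.ofReal ((1+|ξ|+|w|)^(-α)) * K := by
        gcongr; exact hK2 _ _ (by positivity)
    _ ≤ _ := by
        rw [mul_right_comm]; gcongr; exact le_add_self

lemma gs_int (Q x : ℝ) (hQ : 0 < Q) : ∫⁻ y, gs (Q*(x-y)) = ENNReal.ofReal (√(2*Real.pi)/Q) := by
  have gm := gs_meas
  have h := ga_lint (Q := 1/Q) (by positivity) (fun _ => 1) measurable_const
  simp only [lintegral_const, measure_univ, one_mul] at h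
  have e : ∫⁻ y, gs (Q*(x-y)) = ∫⁻ y, gs (y/(1/Q)) := by
    rw [← lintegral_sub_left_eq_self (fun y => gs (y/(1/Q))) x]
    congr 1; ext y; congr 1; field_simp
  rw [e]
  have hp := sqrt2pi_pos
  have e2 : ENNReal.ofReal (√(2*Real.pi)/Q) * ENNReal.ofReal (1/(1/Q*√(2*Real.pi))) = 1 := by
    rw [← ENNReal.ofReal_mul (by positivity)]
    have : √(2*Real.pi)/Q * (1/(1/Q*√(2*Real.pi))) = 1 := by field_simp
    rw [this]; simp
  rw [← one_mul (∫⁻ y, gs (y/(1/Q))), ← e2, mul_assoc, ← h, mul_one]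

lemma lint_gauss_limit (f : ℝ → ℝ≥0∞) (hf : Measurable f) (D : ℝ≥0∞) (h : ∀ Q : ℝ, 1 ≤ Q → ∫⁻ r, f r * gs (r/Q) ≤ D) :
    ∫⁻ r, f r ≤ D := by
  have gm := gs_meas
  have ht : Tendsto (fun n : ℕ => ∫⁻ r, f r * gs (r/((n:ℝ)+1))) atTop (𝓝 (∫⁻ r, f r)) := by
    apply lintegral_tendsto_of_tendsto_of_monotone
    · intro n; fun_prop
    · refine ae_of_all _ fun r n m hnm => ?_
      simp only
      gcongr
      apply gs_anti
      rw [abs_div, abs_div, abs_of_pos (by positivity : (0:ℝ) < (m:ℝ)+1), abs_of_pos (by positivity : (0:ℝ) < (n:ℝ)+1)]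
      gcongr
    · refine ae_of_all _ fun r => ?_
      have h1 : Tendsto (fun n : ℕ => gs (r/((n:ℝ)+1))) atTop (𝓝 1) := by
        have h2 : Tendsto (fun n : ℕ => r/((n:ℝ)+1)) atTop (𝓝 0) :=
          tendsto_const_nhds.div_atTop (tendsto_atTop_add_const_right _ _ tendsto_natCast_atTop_atTop)
        have h3 : Continuous gs := by unfold gs; exact ENNReal.continuous_ofReal.comp (by fun_prop)
        have := (h3.tendsto 0).comp h2
        have g0 : gs 0 = 1 := by simp [gs]
        rw [g0] at this
        exact this
      have := ENNReal.Tendsto.const_mul (a := f r) h1 (Or.inl one_ne_zero)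
      simpa using this
  exact le_of_tendsto' ht fun n => h _ (by linarith [Nat.cast_nonneg (α := ℝ) n])

lemma planch (a : ℝ → ℂ) (ha : Measurable a) (hai : Integrable a) :
    ∫⁻ r : ℝ, ‖∫ ζ, a ζ * Complex.exp (Complex.I * (r * (-ζ) : ℝ))‖ₑ^2 ≤ ENNReal.ofReal (2*Real.pi) * ∫⁻ ζ, ‖a ζ‖ₑ^2 := by
  have gm := gs_meas
  have hm : Measurable (fun r : ℝ => ‖∫ ζ, a ζ * Complex.exp (Complex.I * (r * (-ζ) : ℝ))‖ₑ^2) := by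
    refine (Measurable.enorm ?_).pow_const 2
    apply osc_meas volume (fun (r ζ : ℝ) => a ζ * Complex.exp (Complex.I * (r * (-ζ) : ℝ)))
    simp only [Function.uncurry_def]; fun_prop
  apply lint_gauss_limit _ hm
  intro Q hQ
  have hQ0 : 0 < Q := by linarith
  have h1 := osc_gauss volume (fun ζ => -ζ) measurable_neg a ha hai Q
  rw [ga_lint hQ0 _ hm] at h1
  have hp := sqrt2pi_pos
  have hS : ∫⁻ w : ℝ × ℝ, ‖a w.1‖ₑ * ‖a w.2‖ₑ * gs (Q * (-w.1 - -w.2)) ∂(volume.prod volume) ≤ ENNReal.ofReal (√(2*Real.pi)/Q) * ∫⁻ ζ, ‖a ζ‖ₑ^2 := by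
    have hae := ha.enorm
    have hA : ∫⁻ w : ℝ × ℝ, ‖a w.1‖ₑ^2 * gs (Q * (w.1 - w.2)) ∂(volume.prod volume) = ENNReal.ofReal (√(2*Real.pi)/Q) * ∫⁻ ζ, ‖a ζ‖ₑ^2 := by
      rw [lintegral_prod _ (by fun_prop), ← lintegral_const_mul _ (by fun_prop)]
      congr 1; ext x
      simp only
      rw [lintegral_const_mul _ (by fun_prop), gs_int Q x hQ0, mul_comm]
    have hB : ∫⁻ w : ℝ × ℝ, ‖a w.2‖ₑ^2 * gs (Q * (w.1 - w.2)) ∂(volume.prod volume) = ENNReal.ofReal (√(2*Real.pi)/Q) * ∫⁻ ζ, ‖a ζ‖ₑ^2 := by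
      rw [← hA, ← lintegral_prod_swap]
      congr 1; ext w
      simp only [Prod.fst_swap, Prod.snd_swap, gs]
      congr 4; ring
    have h2 : 2 * ∫⁻ w : ℝ × ℝ, ‖a w.1‖ₑ * ‖a w.2‖ₑ * gs (Q * (-w.1 - -w.2)) ∂(volume.prod volume) ≤ 2 * (ENNReal.ofReal (√(2*Real.pi)/Q) * ∫⁻ ζ, ‖a ζ‖ₑ^2) := by
      rw [two_mul (ENNReal.ofReal (√(2*Real.pi)/Q) * ∫⁻ ζ, ‖a ζ‖ₑ^2)]
      nth_rewrite 1 [← hA]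
      rw [← hB, ← lintegral_add_left (by fun_prop), ← lintegral_const_mul _ (by fun_prop)]
      apply lintegral_mono; intro w
      have e : gs (Q * (-w.1 - -w.2)) = gs (Q * (w.1 - w.2)) := by
        unfold gs; congr 3; ring
      simp only
      rw [e, ← add_mul, ← mul_assoc, ← mul_assoc]
      gcongr
      rw [← ofReal_norm, ← ofReal_norm, ← ENNReal.ofReal_pow (norm_nonneg _), ← ENNReal.ofReal_pow (norm_nonneg _), ← ENNReal.ofReal_add (by positivity) (by positivity)]
      rw [show (2:ℝ≥0∞) = ENNReal.ofReal 2 by simp, ← ENNReal.ofReal_mul (by positivity), ← ENNReal.ofReal_mul (by positivity)]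
      apply ENNReal.ofReal_le_ofReal
      nlinarith [sq_nonneg (‖a w.1‖ - ‖a w.2‖)]
    exact (ENNReal.mul_le_mul_iff_right (by norm_num) (by norm_num)).mp h2
  have h3 := h1.trans hS
  have e : ENNReal.ofReal (Q*√(2*Real.pi)) * ENNReal.ofReal (1/(Q*√(2*Real.pi))) = 1 := by
    rw [← ENNReal.ofReal_mul (by positivity)]
    rw [mul_one_div_cancel (by positivity)]; simp
  calc _ = ENNReal.ofReal (Q*√(2*Real.pi)) * (ENNReal.ofReal (1/(Q*√(2*Real.pi))) * ∫⁻ r : ℝ, ‖∫ ζ, a ζ * Complex.exp (Complex.I * (r * (-ζ) : ℝ))‖ₑ^2 * gs (r/Q)) := by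
        rw [← mul_assoc, e, one_mul]
    _ ≤ ENNReal.ofReal (Q*√(2*Real.pi)) * (ENNReal.ofReal (√(2*Real.pi)/Q) * ∫⁻ ζ, ‖a ζ‖ₑ^2) := by gcongr
    _ = _ := by
        rw [← mul_assoc, ← ENNReal.ofReal_mul (by positivity)]
        congr 2
        have : √(2*Real.pi)*√(2*Real.pi) = 2*Real.pi := Real.mul_self_sqrt (by positivity)
        field_simp
        linarith

/-- Gaussian strip mass -/
noncomputable def G (μ : Measure ℝ) (ρ t r : ℝ) : ℝ≥0∞ := ∫⁻ p, gs ((p.2 - t*p.1 - r)/ρ) ∂(μ.prod μ)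

lemma G_meas (μ : Measure ℝ) [SFinite μ] (ρ : ℝ) : Measurable (fun q : ℝ × ℝ => G μ ρ q.1 q.2) := by
  unfold G
  have gm := gs_meas
  apply Measurable.lintegral_prod_right'  (f := fun q : (ℝ × ℝ) × (ℝ × ℝ) => gs ((q.2.2 - q.1.1*q.2.1 - q.1.2)/ρ))
  fun_prop

lemma G_le (μ : Measure ℝ) [IsFiniteMeasure μ] (ρ t r : ℝ) : G μ ρ t r ≤ μ univ ^ 2 := by
  unfold G
  calc _ ≤ ∫⁻ p, 1 ∂(μ.prod μ) := lintegral_mono fun p => gs_le_one _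
    _ = _ := by rw [lintegral_one, ← univ_prod_univ, Measure.prod_prod, sq]

lemma G_ne_top (μ : Measure ℝ) [IsFiniteMeasure μ] (ρ t r : ℝ) : G μ ρ t r ≠ ⊤ :=
  ne_top_of_le_ne_top (by finiteness) (G_le μ ρ t r)

noncomputable def gr (μ : Measure ℝ) (ρ t r : ℝ) : ℝ := (1/ρ) * (G μ ρ t r).toReal

lemma gr_meas (μ : Measure ℝ) [SFinite μ] (ρ : ℝ) : Measurable (fun q : ℝ × ℝ => gr μ ρ q.1 q.2) := by
  unfold gr
  exact (G_meas μ ρ).ennreal_toReal.const_mul _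

lemma ga_int {Q : ℝ} (hQ : 0 < Q) (f : ℝ → ℂ) :
    ∫ x, f x ∂(ga Q) = ∫ x, ((1/(Q*√(2*Real.pi)) * Real.exp (-((x/Q)^2)/2) : ℝ) : ℂ) * f x := by
  unfold ga
  have hv : Real.toNNReal (Q^2) ≠ 0 := by simpa using hQ.ne'
  rw [ProbabilityTheory.integral_gaussianReal_eq_integral_smul hv]
  congr 1; ext x
  rw [Complex.real_smul]
  congr 2
  simp only [ProbabilityTheory.gaussianPDFReal, sub_zero]
  rw [Real.coe_toNNReal _ (by positivity)]
  have e1 : √(2*Real.pi*Q^2) = Q*√(2*Real.pi) := by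
    rw [Real.sqrt_mul (by positivity), Real.sqrt_sq hQ.le, mul_comm]
  have e2 : -x^2/(2*Q^2) = -((x/Q)^2)/2 := by field_simp
  rw [e1, e2, one_div]

lemma gr_rep (μ : Measure ℝ) [IsFiniteMeasure μ] {ρ : ℝ} (hρ : 0 < ρ) (t r : ℝ) :
    ((gr μ ρ t r : ℝ) : ℂ) = ∫ ζ, ((1/√(2*Real.pi) * Real.exp (-((ρ*ζ)^2)/2) : ℝ) : ℂ) * 
       (osc μ (fun _ => 1) ζ * osc μ (fun _ => 1) (-t*ζ)) * Complex.exp (Complex.I * (r * (-ζ) : ℝ)) := by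
  have hp := sqrt2pi_pos
  have e1 : (G μ ρ t r).toReal = ∫ p, Real.exp (-(((p.2 - t*p.1 - r)/ρ)^2)/2) ∂(μ.prod μ) := by
    unfold G gs
    rw [integral_eq_lintegral_of_nonneg_ae (ae_of_all _ fun p => by positivity) (by apply Measurable.aestronglyMeasurable; fun_prop)]
  have e2 : ((∫ p, Real.exp (-(((p.2 - t*p.1 - r)/ρ)^2)/2) ∂(μ.prod μ) : ℝ) : ℂ) = 
      ∫ ζ, (osc μ (fun _ => 1) ζ * osc μ (fun _ => 1) (-t*ζ)) * Complex.exp (Complex.I * (r * (-ζ) : ℝ)) ∂(ga (1/ρ)) := by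
    rw [← integral_complex_ofReal]
    have : ∀ p : ℝ × ℝ, ((Real.exp (-(((p.2 - t*p.1 - r)/ρ)^2)/2) : ℝ) : ℂ) = ∫ ζ, Complex.exp (Complex.I * (ζ * (p.2 - t*p.1 - r : ℝ))) ∂(ga (1/ρ)) := by
      intro p
      rw [ga_char]; congr 5; field_simp
    simp_rw [this]
    rw [integral_integral_swap]
    · congr 1; ext ζ
      have : ∀ p : ℝ × ℝ, Complex.exp (Complex.I * (ζ * (p.2 - t*p.1 - r : ℝ))) = 
         (((1:ℂ) * Complex.exp (Complex.I * ((-t*ζ) * p.1 : ℝ))) * ((1:ℂ) * Complex.exp (Complex.I * (ζ * p.2 : ℝ)))) * Complex.exp (Complex.I * (r * (-ζ) : ℝ)) := by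
        intro p
        rw [one_mul, one_mul, ← Complex.exp_add, ← Complex.exp_add]
        congr 1; push_cast; ring
      simp_rw [this]
      rw [integral_mul_const, integral_prod_mul (fun x : ℝ => (1:ℂ) * Complex.exp (Complex.I * ((-t*ζ) * x : ℝ))) (fun x : ℝ => (1:ℂ) * Complex.exp (Complex.I * (ζ * x : ℝ)))]
      unfold osc
      ring
    · refine Integrable.of_bound (Measurable.aestronglyMeasurable (by simp only [Function.uncurry_def]; fun_prop)) 1 (ae_of_all _ fun q => ?_)
      simp only [Function.uncurry_def]
      rw [← Complex.ofReal_mul, norm_exp_I]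
  unfold gr
  rw [e1]
  push_cast
  rw [e2, ga_int (by positivity), ← integral_const_mul]
  congr 1; ext ζ
  have : (ζ/(1/ρ)) = ρ*ζ := by field_simp
  rw [this]
  push_cast
  have h1 : (ρ:ℂ) ≠ 0 := by exact_mod_cast hρ.ne'
  field_simp

lemma enorm_osc_le (μ : Measure ℝ) [IsFiniteMeasure μ] (η : ℝ) : ‖osc μ (fun _ => 1) η‖ₑ ≤ μ univ := by
  unfold osc
  refine (enorm_integral_le_lintegral_enorm _).trans ?_
  simp only [one_mul, enorm_exp_I, lintegral_one, le_refl]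

lemma inner_t {μ : Measure ℝ} [IsFiniteMeasure μ] {C : ℝ≥0∞} (hC : C ≠ ⊤) {s : ℝ} (hs0 : 0 < s) (hs : s ≤ 1) (hF : Frost μ C s) :
    ∃ K : ℝ≥0∞, K ≠ ⊤ ∧ ∀ T ζ : ℝ, 1 ≤ T → ∫⁻ t, ‖osc μ (fun _ => 1) (-t*ζ)‖ₑ^2 * gs (t/T) ≤ K * ENNReal.ofReal T * ENNReal.ofReal ((1+|ζ|)^(-s)) := by
  have hp := sqrt2pi_pos
  have gm := gs_meas
  refine ⟨ENNReal.ofReal (√(2*Real.pi)) * (2 * (μ univ ^2 + μ univ * (c0 * C))), ?_, ?_⟩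
  · have := c0_ne_top
    have := measure_ne_top μ univ
    finiteness
  intro T ζ hT
  have hT0 : 0 < T := by linarith
  have hmo := osc_measurable μ (measurable_const (a := (1:ℂ)))
  have hm : Measurable (fun t : ℝ => ‖osc μ (fun _ => 1) (-t*ζ)‖ₑ^2) := by fun_prop
  have h1 := osc_gauss μ (fun z => -ζ*z) (by fun_prop) (fun _ => 1) measurable_const (integrable_const _) T
  have e1 : ∀ t : ℝ, ∫ ω, (1:ℂ) * Complex.exp (Complex.I * (t * (-ζ*ω) : ℝ)) ∂μ = osc μ (fun _ => 1) (-t*ζ) := by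
    intro t; unfold osc; congr 1; ext z; congr 4; ring
  simp_rw [e1] at h1
  have h2 : ∫⁻ w : ℝ × ℝ, ‖(1:ℂ)‖ₑ * ‖(1:ℂ)‖ₑ * gs (T * (-ζ*w.1 - -ζ*w.2)) ∂(μ.prod μ) ≤ 2 * (μ univ ^2 + μ univ * (c0 * C)) * ENNReal.ofReal ((1+|ζ|)^(-s)) := by
    simp only [enorm_one, one_mul]
    by_cases hζ : |ζ| ≤ 1
    · calc _ ≤ ∫⁻ w : ℝ × ℝ, 1 ∂(μ.prod μ) := lintegral_mono fun w => gs_le_one _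
        _ = μ univ ^2 * 1 := by rw [lintegral_one, ← univ_prod_univ, Measure.prod_prod, sq, mul_one]
        _ ≤ μ univ ^2 * (2 * ENNReal.ofReal ((1+|ζ|)^(-s))) := by
            gcongr
            rw [show (2:ℝ≥0∞) = ENNReal.ofReal 2 by simp, ← ENNReal.ofReal_mul (by positivity), ENNReal.one_le_ofReal]
            have : (2:ℝ)^(-1:ℝ) ≤ (1+|ζ|)^(-s) := by
              calc (2:ℝ)^(-1:ℝ) ≤ 2^(-s) := Real.rpow_le_rpow_of_exponent_le (by norm_num) (by linarith)
                _ ≤ _ := Real.rpow_le_rpow_of_nonpos (by positivity) (by linarith) (by linarith)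
            rw [Real.rpow_neg_one] at this
            linarith
        _ ≤ _ := by
            rw [← mul_assoc, mul_comm _ (2:ℝ≥0∞)]
            gcongr; exact le_self_add
    · push Not at hζ
      have hζ0 : 0 < |ζ| := by linarith
      rw [lintegral_prod _ (by fun_prop)]
      calc _ ≤ ∫⁻ z, c0 * (C * ENNReal.ofReal ((1/(T*|ζ|))^s)) ∂μ := by
            apply lintegral_mono; intro z
            refine le_trans (le_of_eq ?_) (frost_gauss hs hF z (r := 1/(T*|ζ|)) (by positivity))
            refine lintegral_congr fun y => ?_
            simp only [gs]
            congr 3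
            rw [show T*(-ζ*z - -ζ*y) = T*ζ*(y-z) by ring, show (y-z)/(1/(T*|ζ|)) = T*|ζ| * (y-z) by field_simp, mul_pow, mul_pow, mul_pow, mul_pow, sq_abs]
        _ = μ univ * (c0 * C) * ENNReal.ofReal ((1/(T*|ζ|))^s) := by rw [lintegral_const]; ring
        _ ≤ μ univ * (c0 * C) * (2 * ENNReal.ofReal ((1+|ζ|)^(-s))) := by
            gcongr
            rw [show (2:ℝ≥0∞) = ENNReal.ofReal 2 by simp, ← ENNReal.ofReal_mul (by positivity)]
            apply ENNReal.ofReal_le_ofReal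
            rw [one_div, Real.inv_rpow (by positivity), ← Real.rpow_neg (by positivity)]
            calc (T*|ζ|)^(-s) ≤ ((1+|ζ|)/2)^(-s) := Real.rpow_le_rpow_of_nonpos (by positivity) (by nlinarith) (by linarith)
              _ = 2^s * (1+|ζ|)^(-s) := by
                  rw [Real.div_rpow (by positivity) (by positivity), Real.rpow_neg (by norm_num : (0:ℝ) ≤ 2)]; field_simp
              _ ≤ 2^(1:ℝ) * (1+|ζ|)^(-s) := by gcongr; norm_num
              _ = _ := by rw [Real.rpow_one]
        _ ≤ _ := by
            rw [← mul_assoc, mul_comm _ (2:ℝ≥0∞)]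
            gcongr; exact le_add_self
  have h3 := h1.trans h2
  rw [ga_lint hT0 _ hm] at h3
  have e : ENNReal.ofReal (T*√(2*Real.pi)) * ENNReal.ofReal (1/(T*√(2*Real.pi))) = 1 := by
    rw [← ENNReal.ofReal_mul (by positivity)]
    rw [mul_one_div_cancel (by positivity)]; simp
  calc _ = ENNReal.ofReal (T*√(2*Real.pi)) * (ENNReal.ofReal (1/(T*√(2*Real.pi))) * ∫⁻ t, ‖osc μ (fun _ => 1) (-t*ζ)‖ₑ^2 * gs (t/T)) := by
        rw [← mul_assoc, e, one_mul]
    _ ≤ ENNReal.ofReal (T*√(2*Real.pi)) * (2 * (μ univ ^2 + μ univ * (c0 * C)) * ENNReal.ofReal ((1+|ζ|)^(-s))) := by gcongr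
    _ = _ := by rw [ENNReal.ofReal_mul hT0.le]; ring

lemma two_gauss {ρ ρ' e ζ : ℝ} (h0 : 0 < ρ) (h : ρ ≤ ρ') (he : 0 < e) (he1 : e ≤ 1) :
    (Real.exp (-((ρ*ζ)^2)/2) - Real.exp (-((ρ'*ζ)^2)/2))^2 ≤ ρ'^e * (1+|ζ|)^e := by
  have hρ' : 0 < ρ' := by linarith
  set D := Real.exp (-((ρ*ζ)^2)/2) - Real.exp (-((ρ'*ζ)^2)/2) with hD
  have d0 : 0 ≤ D := by
    rw [hD, sub_nonneg, Real.exp_le_exp, mul_pow, mul_pow]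
    have : ρ^2*ζ^2 ≤ ρ'^2*ζ^2 := by gcongr
    linarith
  have l1 : Real.exp (-((ρ*ζ)^2)/2) ≤ 1 := by rw [Real.exp_le_one_iff]; nlinarith [sq_nonneg (ρ*ζ)]
  have d1 : D ≤ 1 := by linarith [Real.exp_pos (-((ρ'*ζ)^2)/2)]
  have d2 : D ≤ (ρ'*|ζ|)^2 := by
    have := Real.add_one_le_exp (-((ρ'*ζ)^2)/2)
    rw [mul_pow, sq_abs, ← mul_pow]; nlinarith [sq_nonneg (ρ'*ζ)]
  have main : D^2 ≤ (ρ'*|ζ|)^e := by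
    by_cases hx : 1 ≤ ρ'*|ζ|
    · calc D^2 ≤ 1 := by nlinarith
        _ ≤ _ := Real.one_le_rpow hx he.le
    · push Not at hx
      rcases (by positivity : 0 ≤ ρ'*|ζ|).eq_or_lt with h1 | h1
      · rw [← h1] at d2 ⊢
        have : D = 0 := by nlinarith
        rw [this, Real.zero_rpow he.ne']; norm_num
      · calc D^2 ≤ D := by nlinarith
          _ ≤ (ρ'*|ζ|)^2 := d2
          _ = (ρ'*|ζ|)^(2:ℝ) := by norm_num
          _ ≤ _ := Real.rpow_le_rpow_of_exponent_ge h1 hx.le (by linarith)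
  refine main.trans ?_
  rw [Real.mul_rpow hρ'.le (abs_nonneg _)]
  gcongr
  linarith

lemma gauss_osc_integrable (μ : Measure ℝ) [IsFiniteMeasure μ] {ρ : ℝ} (hρ : 0 < ρ) (t r : ℝ) :
    Integrable (fun ζ => ((1/√(2*Real.pi) * Real.exp (-((ρ*ζ)^2)/2) : ℝ) : ℂ) * 
       (osc μ (fun _ => 1) ζ * osc μ (fun _ => 1) (-t*ζ)) * Complex.exp (Complex.I * (r * (-ζ) : ℝ))) := by
  have hmo := osc_measurable μ (measurable_const (a := (1:ℂ)))
  have h1 : Integrable (fun ζ : ℝ => 1/√(2*Real.pi) * Real.exp (-(ρ^2/2) * ζ^2) * (μ univ).toReal^2) :=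
    ((integrable_exp_neg_mul_sq (by positivity)).const_mul _).mul_const _
  refine h1.mono' (Measurable.aestronglyMeasurable (by fun_prop)) (ae_of_all _ fun ζ => ?_)
  have ho : ∀ η, ‖osc μ (fun _ => 1) η‖ ≤ (μ univ).toReal := by
    intro η
    rw [← toReal_enorm]; exact ENNReal.toReal_mono (measure_ne_top _ _) (enorm_osc_le μ η)
  rw [norm_mul, norm_mul, norm_exp_I, mul_one, Complex.norm_real, Real.norm_of_nonneg (by positivity), norm_mul]
  have : -((ρ*ζ)^2)/2 = -(ρ^2/2) * ζ^2 := by ring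
  rw [this, sq (μ univ).toReal]
  gcongr <;> exact ho _

lemma diff_L2 {μ : Measure ℝ} [IsFiniteMeasure μ] {C : ℝ≥0∞} (hC : C ≠ ⊤) {s : ℝ} (hs0 : 1/2 < s) (hs : s ≤ 1) (hF : Frost μ C s) :
    ∃ K : ℝ≥0∞, K ≠ ⊤ ∧ ∀ T ρ ρ' : ℝ, 1 ≤ T → 0 < ρ → ρ ≤ ρ' → 
     ∫⁻ t, ∫⁻ r, gs (t/T) * ENNReal.ofReal ((gr μ ρ t r - gr μ ρ' t r)^2) ≤ K * ENNReal.ofReal (T * ρ'^(s-1/2)) := by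
  obtain ⟨K1, hK1, h1⟩ := inner_t hC (by linarith) hs hF
  obtain ⟨K2, hK2, h2⟩ := dyadic_weight (1-s) (1/2) (by linarith) (by norm_num)
  have hmo := osc_measurable μ (measurable_const (a := (1:ℂ)))
  have gm := gs_meas
  have hp := sqrt2pi_pos
  have h3 := h2 (fun η => ‖osc μ (fun _ => 1) η‖ₑ^2) _ (by fun_prop) (fun Q hQ => osc_frost hs hF (a := fun _ => 1) measurable_const (c := 1) (ae_of_all _ fun z => by simp) (by linarith)) 1 le_rfl
  set D := K2 * (ENNReal.ofReal (√(2*Real.pi)) * (ENNReal.ofReal 1^2 * (μ univ * (c0 * C)))) * ENNReal.ofReal (1^(1-s-1/2)) with hD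
  have hDt : D ≠ ⊤ := by
    have := c0_ne_top
    have := measure_ne_top μ univ
    finiteness
  refine ⟨ENNReal.ofReal (2*Real.pi) * K1 * D, by finiteness, ?_⟩
  intro T ρ ρ' hT hρ hρρ'
  have hρ' : 0 < ρ' := by linarith
  set a : ℝ → ℝ → ℂ := fun t ζ => ((1/√(2*Real.pi) * Real.exp (-((ρ*ζ)^2)/2) : ℝ) : ℂ) * 
       (osc μ (fun _ => 1) ζ * osc μ (fun _ => 1) (-t*ζ)) - ((1/√(2*Real.pi) * Real.exp (-((ρ'*ζ)^2)/2) : ℝ) : ℂ) * 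
       (osc μ (fun _ => 1) ζ * osc μ (fun _ => 1) (-t*ζ)) with ha
  have hI : ∀ {ρ : ℝ}, 0 < ρ → ∀ t, Integrable (fun ζ => ((1/√(2*Real.pi) * Real.exp (-((ρ*ζ)^2)/2) : ℝ) : ℂ) * 
       (osc μ (fun _ => 1) ζ * osc μ (fun _ => 1) (-t*ζ))) := by
    intro ρ hρ t
    have := gauss_osc_integrable μ hρ t 0
    simpa using this
  have hai : ∀ t, Integrable (a t) := fun t => (hI hρ t).sub (hI hρ' t)
  have ham : ∀ t, Measurable (a t) := fun t => by simp only [ha]; fun_prop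
  have hab : ∀ t ζ, ‖a t ζ‖ₑ^2 ≤ ENNReal.ofReal (ρ'^(s-1/2)) * (ENNReal.ofReal ((1+|ζ|)^(s-1/2)) * ‖osc μ (fun _ => 1) ζ‖ₑ^2 * ‖osc μ (fun _ => 1) (-t*ζ)‖ₑ^2) := by
    intro t ζ
    have : a t ζ = ((1/√(2*Real.pi) * (Real.exp (-((ρ*ζ)^2)/2) - Real.exp (-((ρ'*ζ)^2)/2)) : ℝ) : ℂ) * (osc μ (fun _ => 1) ζ * osc μ (fun _ => 1) (-t*ζ)) := by
      simp only [ha]; push_cast; ring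
    have er : ∀ x y z : ℝ≥0∞, (x*(y*z))^2 = x^2*(y^2*z^2) := fun x y z => by ring
    rw [this, enorm_mul, enorm_mul, er, mul_assoc (ENNReal.ofReal ((1+|ζ|)^(s-1/2))), ← mul_assoc (ENNReal.ofReal (ρ'^(s-1/2)))]
    refine mul_le_mul_left ?_ _
    rw [← ENNReal.ofReal_mul (by positivity), ← ofReal_norm, Complex.norm_real, ← ENNReal.ofReal_pow (norm_nonneg _), Real.norm_eq_abs, sq_abs, mul_pow (1/√(2*Real.pi))]
    apply ENNReal.ofReal_le_ofReal
    have tg := two_gauss (ζ := ζ) hρ hρρ' (by linarith : 0 < s-1/2) (by linarith)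
    have : (1/√(2*Real.pi))^2 ≤ 1 := by
      rw [div_pow, Real.sq_sqrt (by positivity), one_pow, div_le_one (by positivity)]
      linarith [Real.pi_gt_three]
    calc _ ≤ 1 * (Real.exp (-((ρ*ζ)^2)/2) - Real.exp (-((ρ'*ζ)^2)/2))^2 := mul_le_mul_of_nonneg_right this (sq_nonneg _)
      _ ≤ _ := by rw [one_mul]; exact tg
  have hin : ∀ t, ∫⁻ r, gs (t/T) * ENNReal.ofReal ((gr μ ρ t r - gr μ ρ' t r)^2) ≤ gs (t/T) * (ENNReal.ofReal (2*Real.pi) * ∫⁻ ζ, ‖a t ζ‖ₑ^2) := by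
    intro t
    rw [lintegral_const_mul' _ _ (ne_top_of_le_ne_top ENNReal.one_ne_top (gs_le_one _))]
    gcongr
    refine le_trans (le_of_eq ?_) (planch (a t) (ham t) (hai t))
    congr 1; ext r
    have : ((gr μ ρ t r - gr μ ρ' t r : ℝ) : ℂ) = ∫ ζ, a t ζ * Complex.exp (Complex.I * (r * (-ζ) : ℝ)) := by
      rw [Complex.ofReal_sub, gr_rep μ hρ, gr_rep μ hρ', ← integral_sub (gauss_osc_integrable μ hρ t r) (gauss_osc_integrable μ hρ' t r)]
      congr 1; ext ζ
      simp only [ha]; ring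
    rw [← this, ← ofReal_norm, Complex.norm_real, ← ENNReal.ofReal_pow (norm_nonneg _), Real.norm_eq_abs, sq_abs]
  calc _ ≤ ∫⁻ t, gs (t/T) * (ENNReal.ofReal (2*Real.pi) * ∫⁻ ζ, ENNReal.ofReal (ρ'^(s-1/2)) * (ENNReal.ofReal ((1+|ζ|)^(s-1/2)) * ‖osc μ (fun _ => 1) ζ‖ₑ^2 * ‖osc μ (fun _ => 1) (-t*ζ)‖ₑ^2)) := by
        apply lintegral_mono; intro t
        refine (hin t).trans ?_
        exact mul_le_mul_right (mul_le_mul_right (lintegral_mono fun ζ => hab t ζ) _) _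
    _ = ENNReal.ofReal (2*Real.pi) * ENNReal.ofReal (ρ'^(s-1/2)) * ∫⁻ t, ∫⁻ ζ, gs (t/T) * (ENNReal.ofReal ((1+|ζ|)^(s-1/2)) * ‖osc μ (fun _ => 1) ζ‖ₑ^2 * ‖osc μ (fun _ => 1) (-t*ζ)‖ₑ^2) := by
        rw [← lintegral_const_mul' _ _ (by finiteness)]
        congr 1; ext t
        rw [lintegral_const_mul' _ _ (by finiteness), lintegral_const_mul' _ _ (ne_top_of_le_ne_top ENNReal.one_ne_top (gs_le_one _))]
        ring
    _ = ENNReal.ofReal (2*Real.pi) * ENNReal.ofReal (ρ'^(s-1/2)) * ∫⁻ ζ, ENNReal.ofReal ((1+|ζ|)^(s-1/2)) * ‖osc μ (fun _ => 1) ζ‖ₑ^2 * ∫⁻ t, ‖osc μ (fun _ => 1) (-t*ζ)‖ₑ^2 * gs (t/T) := by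
        rw [lintegral_lintegral_swap (by fun_prop)]
        congr 2; ext ζ
        rw [← lintegral_const_mul _ (by fun_prop)]
        congr 1; ext t; ring
    _ ≤ ENNReal.ofReal (2*Real.pi) * ENNReal.ofReal (ρ'^(s-1/2)) * ∫⁻ ζ, K1 * ENNReal.ofReal T * (‖osc μ (fun _ => 1) ζ‖ₑ^2 * ENNReal.ofReal ((1+|ζ|)^(-(1/2):ℝ))) := by
        refine mul_le_mul_right (lintegral_mono fun ζ => ?_) _
        calc _ ≤ ENNReal.ofReal ((1+|ζ|)^(s-1/2)) * ‖osc μ (fun _ => 1) ζ‖ₑ^2 * (K1 * ENNReal.ofReal T * ENNReal.ofReal ((1+|ζ|)^(-s))) := by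
              exact mul_le_mul_right (h1 T ζ hT) _
          _ = _ := by
              rw [show (-(1/2):ℝ) = (s-1/2) + (-s) by ring, Real.rpow_add (by positivity), ENNReal.ofReal_mul (by positivity)]
              ring
    _ ≤ ENNReal.ofReal (2*Real.pi) * ENNReal.ofReal (ρ'^(s-1/2)) * (K1 * ENNReal.ofReal T * D) := by
        rw [lintegral_const_mul _ (by fun_prop)]
        gcongr
    _ = _ := by rw [ENNReal.ofReal_mul (by linarith : (0:ℝ) ≤ T)]; ring

def cr (p p' p'' : ℝ × ℝ) : ℝ := (p''.1-p.1)*(p'.2-p.2) - (p''.2-p.2)*(p'.1-p.1)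

noncomputable def strip (μ : Measure ℝ) (ρ : ℝ) (p p' : ℝ × ℝ) : ℝ≥0∞ := (μ.prod μ) {p'' | |cr p p' p''| ≤ ρ}

lemma strip_meas (μ : Measure ℝ) [SFinite μ] (ρ : ℝ) : Measurable (fun w : (ℝ × ℝ) × (ℝ × ℝ) => strip μ ρ w.1 w.2) := by
  unfold strip
  have : MeasurableSet {q : ((ℝ × ℝ) × (ℝ × ℝ)) × (ℝ × ℝ) | |cr q.1.1 q.1.2 q.2| ≤ ρ} := by
    unfold cr
    exact measurableSet_le (by fun_prop) measurable_const
  exact measurable_measure_prodMk_left this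

lemma strip_le_G {μ : Measure ℝ} [IsFiniteMeasure μ] {B : ℝ} (hB : 1 ≤ B) (hz : ∀ᵐ z ∂μ, |z| ≤ B)
    {T ρ : ℝ} (hT : 1 ≤ T) (hρ : 0 < ρ) {p p' : ℝ × ℝ} (hp : |p.1| ≤ B) 
    (hv : 1/T ≤ |p'.1-p.1|) {t' r' : ℝ} (ht : |t' - (p'.2-p.2)/(p'.1-p.1)| ≤ ρ*T)
    (hr : |r' - (p.2 - (p'.2-p.2)/(p'.1-p.1)*p.1)| ≤ ρ*T) : 
    strip μ ρ p p' ≤ ENNReal.ofReal (Real.exp ((2*B+2)^2/2)) * G μ (ρ*T) t' r' := by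
  have gm := gs_meas
  have hT0 : 0 < T := by linarith
  have hms : MeasurableSet {p'' : ℝ × ℝ | |cr p p' p''| ≤ ρ} := by
    unfold cr
    exact measurableSet_le (by fun_prop) measurable_const
  unfold strip G
  rw [← lintegral_const_mul _ (by fun_prop), ← lintegral_indicator_one hms]
  have hz2 : ∀ᵐ p'' ∂(μ.prod μ), |p''.1| ≤ B := Measure.quasiMeasurePreserving_fst.ae hz
  apply lintegral_mono_ae
  filter_upwards [hz2] with p'' hb
  by_cases hm : |cr p p' p''| ≤ ρ
  · rw [indicator_of_mem (by exact hm)]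
    apply gs_lower
    rw [abs_div, abs_of_pos (by positivity : 0 < ρ*T), div_le_iff₀ (by positivity)]
    set v := p'.1-p.1 with hvd
    have hv0 : 0 < |v| := lt_of_lt_of_le (by positivity) hv
    have hv1 : v ≠ 0 := abs_pos.mp hv0
    set t := (p'.2-p.2)/v with htd
    have e : p''.2 - t'*p''.1 - r' = -(cr p p' p'')/v + (-(t'-t)*p''.1 + -(r' - (p.2 - t*p.1))) := by
      have : p'.2 - p.2 = t * v := by rw [htd]; field_simp
      unfold cr
      rw [this, ← hvd]; field_simp; ring
    rw [e]
    have h1 : |-(cr p p' p'')/v| ≤ ρ*T := by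
      rw [abs_div, abs_neg, div_le_iff₀ hv0]
      have : 1 ≤ T*|v| := by rw [div_le_iff₀ hT0] at hv; linarith
      nlinarith
    have h2 : |-(t'-t)*p''.1| ≤ (ρ*T)*B := by
      rw [abs_mul, abs_neg]; gcongr
    have h3 : |-(r' - (p.2 - t*p.1))| ≤ ρ*T := by rw [abs_neg]; exact hr
    have h4 := abs_add_le (-(cr p p' p'')/v) (-(t'-t)*p''.1 + -(r' - (p.2 - t*p.1)))
    have h5 := abs_add_le (-(t'-t)*p''.1) (-(r' - (p.2 - t*p.1)))
    have : 0 < ρ*T := by positivity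
    nlinarith
  · rw [indicator_of_notMem (by exact hm)]; exact zero_le

set_option maxHeartbeats 1000000 in
lemma bad_n {μ : Measure ℝ} [IsFiniteMeasure μ] {C : ℝ≥0∞} (hC : C ≠ ⊤) {s : ℝ} (hs0 : 1/2 < s) (hs : s ≤ 1) (hF : Frost μ C s)
    {B : ℝ} (hB : 1 ≤ B) (hz : ∀ᵐ z ∂μ, |z| ≤ B) :
    ∃ K : ℝ≥0∞, K ≠ ⊤ ∧ ∀ T M ρ : ℝ, 1 ≤ T → 0 < M → 0 < ρ → ρ ≤ 1 → 
     ((μ.prod μ).prod (μ.prod μ)) {w | 1/T ≤ |w.2.1-w.1.1| ∧ ENNReal.ofReal (M*ρ) < strip μ ρ w.1 w.2} ≤ K * ENNReal.ofReal (T * (T/M)^(s-1/2)) := by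
  obtain ⟨K, hK, hD⟩ := diff_L2 hC hs0 hs hF
  have gm := gs_meas
  set b := Real.exp ((2*B+2)^2/2) with hb
  have hb0 : 0 < b := Real.exp_pos _
  set m := (μ univ).toReal with hm
  refine ⟨ENNReal.ofReal b^3 * K * ENNReal.ofReal ((2*(m^2+1)*b)^(s-1/2)), by finiteness, ?_⟩
  intro T M ρ hT hM hρ hρ1
  have hT0 : 0 < T := by linarith
  set R := ρ*T with hR
  have hR0 : 0 < R := by positivity
  set l := M/(b*T) with hl
  have hl0 : 0 < l := by positivity
  set E : ℝ → ℝ → ℝ≥0∞ := fun t r => if l < gr μ R t r then 1 else 0 with hE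
  have hEm : Measurable (fun q : ℝ × ℝ => E q.1 q.2) := by
    apply Measurable.ite (measurableSet_lt measurable_const (gr_meas μ R)) <;> exact measurable_const
  have hEm' : Measurable (Function.uncurry E) := hEm
  have hgr := gr_meas μ R
  set H : (ℝ × ℝ) × (ℝ × ℝ) → ℝ≥0∞ := fun w => ∫⁻ q : ℝ × ℝ, gs (q.1/T) * E q.1 q.2 * (gs ((w.1.2 - q.1*w.1.1 - q.2)/R) * gs ((w.2.2 - q.1*w.2.1 - q.2)/R)) with hH
  have hz2 : ∀ᵐ p ∂(μ.prod μ), |p.1| ≤ B ∧ |p.2| ≤ B := 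
    (Measure.quasiMeasurePreserving_fst.ae hz).and (Measure.quasiMeasurePreserving_snd.ae hz)
  have hz4 : ∀ᵐ w ∂((μ.prod μ).prod (μ.prod μ)), (|w.1.1| ≤ B ∧ |w.1.2| ≤ B) ∧ (|w.2.1| ≤ B ∧ |w.2.2| ≤ B) := 
    (Measure.quasiMeasurePreserving_fst.ae hz2).and (Measure.quasiMeasurePreserving_snd.ae hz2)
  set Bad := {w : (ℝ × ℝ) × (ℝ × ℝ) | 1/T ≤ |w.2.1-w.1.1| ∧ ENNReal.ofReal (M*ρ) < strip μ ρ w.1 w.2} with hBad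
  have hBm : MeasurableSet Bad := by
    have := strip_meas μ ρ
    have h2 : Measurable (fun w : (ℝ × ℝ) × (ℝ × ℝ) => |w.2.1-w.1.1|) := by fun_prop
    exact (measurableSet_le measurable_const h2).inter (measurableSet_lt measurable_const this)
  -- pointwise lower bound
  have hlow : ∀ w ∈ Bad, ((|w.1.1| ≤ B ∧ |w.1.2| ≤ B) ∧ (|w.2.1| ≤ B ∧ |w.2.2| ≤ B)) → 1 ≤ ENNReal.ofReal b^3 * ENNReal.ofReal (1/(4*R^2)) * H w := by
    intro w hw ⟨⟨b1, b2⟩, ⟨b3, b4⟩⟩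
    obtain ⟨hw1, hw2⟩ := hw
    set v := w.2.1-w.1.1 with hv
    have hv0 : 0 < |v| := lt_of_lt_of_le (by positivity) hw1
    have hv1 : v ≠ 0 := abs_pos.mp hv0
    set t := (w.2.2-w.1.2)/v with ht
    set r := w.1.2 - t*w.1.1 with hr
    have htb : |t| ≤ 2*B*T := by
      rw [ht, abs_div, div_le_iff₀ hv0]
      have h1 : |w.2.2-w.1.2| ≤ 2*B := by
        have := abs_sub w.2.2 w.1.2; linarith
      have h2 : 1 ≤ T*|v| := by rw [div_le_iff₀ hT0] at hw1; linarith
      nlinarith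
    have hr2 : w.2.2 - t*w.2.1 = r := by
      have : w.2.2 - w.1.2 = t * v := by rw [ht]; field_simp
      rw [hr]; rw [hv] at this; linarith
    have key : ∀ q ∈ Icc (t-R) (t+R) ×ˢ Icc (r-R) (r+R), 1 ≤ ENNReal.ofReal b^3 * (gs (q.1/T) * E q.1 q.2 * (gs ((w.1.2 - q.1*w.1.1 - q.2)/R) * gs ((w.2.2 - q.1*w.2.1 - q.2)/R))) := by
      rintro ⟨t', r'⟩ ⟨hq1, hq2⟩
      simp only [mem_Icc] at hq1 hq2
      have ht' : |t'-t| ≤ R := by rw [abs_le]; constructor <;> linarith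
      have hr' : |r'-r| ≤ R := by rw [abs_le]; constructor <;> linarith
      have g1 : 1 ≤ ENNReal.ofReal b * gs (t'/T) := by
        apply gs_lower
        rw [abs_div, abs_of_pos hT0, div_le_iff₀ hT0]
        have : |t'| ≤ |t'-t| + |t| := by simpa using abs_add_le (t'-t) t
        have : R ≤ T := by rw [hR]; nlinarith
        nlinarith
      have gx : ∀ x y : ℝ, |x| ≤ B → y - t*x = r → 1 ≤ ENNReal.ofReal b * gs ((y - t'*x - r')/R) := by
        intro x y hx hy
        apply gs_lower
        rw [abs_div, abs_of_pos hR0, div_le_iff₀ hR0]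
        rw [show y - t'*x - r' = (-(t'-t)*x) + (-(r'-r)) by linarith]
        have h2 : |-(t'-t)*x| ≤ R*B := by rw [abs_mul, abs_neg]; gcongr
        have h3 : |-(r'-r)| ≤ R := by rw [abs_neg]; exact hr'
        have h4 := abs_add_le (-(t'-t)*x) (-(r'-r))
        nlinarith
      have gE : E t' r' = 1 := by
        simp only [hE]
        rw [if_pos]
        have h1 := hw2.trans_le (strip_le_G hB hz hT hρ b1 hw1 ht' hr')
        rw [← hb, ← ENNReal.ofReal_toReal (G_ne_top μ (ρ*T) t' r'), ← ENNReal.ofReal_mul hb0.le, ENNReal.ofReal_lt_ofReal_iff_of_nonneg (by positivity)] at h1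
        unfold gr
        rw [← hR] at h1
        rw [hl, div_lt_iff₀ (by positivity)]
        have e : 1/R * (G μ R t' r').toReal * (b*T) = (b * (G μ R t' r').toReal)/ρ := by
          generalize (G μ R t' r').toReal = g
          rw [hR]; field_simp
        rw [e, lt_div_iff₀ hρ]; exact h1
      simp only
      rw [gE]
      calc (1:ℝ≥0∞) = 1*1*1 := by simp
        _ ≤ (ENNReal.ofReal b * gs (t'/T)) * (ENNReal.ofReal b * gs ((w.1.2 - t'*w.1.1 - r')/R)) * (ENNReal.ofReal b * gs ((w.2.2 - t'*w.2.1 - r')/R)) := by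
            exact mul_le_mul' (mul_le_mul' g1 (gx _ _ b1 rfl)) (gx _ _ b3 hr2)
        _ = _ := by ring
    have hvol : (volume : Measure (ℝ × ℝ)) (Icc (t-R) (t+R) ×ˢ Icc (r-R) (r+R)) = ENNReal.ofReal (4*R^2) := by
      rw [Measure.volume_eq_prod, Measure.prod_prod, Real.volume_Icc, Real.volume_Icc, ← ENNReal.ofReal_mul (by linarith)]
      congr 1; ring
    calc (1:ℝ≥0∞) = ENNReal.ofReal (1/(4*R^2)) * ENNReal.ofReal (4*R^2) := by
          rw [← ENNReal.ofReal_mul (by positivity), one_div_mul_cancel (by positivity)]; simp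
      _ = ENNReal.ofReal (1/(4*R^2)) * ∫⁻ q in Icc (t-R) (t+R) ×ˢ Icc (r-R) (r+R), 1 := by
          rw [setLIntegral_one, hvol]
      _ ≤ ENNReal.ofReal (1/(4*R^2)) * ∫⁻ q in Icc (t-R) (t+R) ×ˢ Icc (r-R) (r+R), ENNReal.ofReal b^3 * (gs (q.1/T) * E q.1 q.2 * (gs ((w.1.2 - q.1*w.1.1 - q.2)/R) * gs ((w.2.2 - q.1*w.2.1 - q.2)/R))) := by
          refine mul_le_mul_right ?_ _
          exact setLIntegral_mono (by fun_prop) key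
      _ ≤ ENNReal.ofReal (1/(4*R^2)) * (ENNReal.ofReal b^3 * H w) := by
          refine mul_le_mul_right ?_ _
          rw [hH, ← lintegral_const_mul _ (by fun_prop)]
          exact setLIntegral_le_lintegral _ _
      _ = _ := by ring
  have step1 : ((μ.prod μ).prod (μ.prod μ)) Bad ≤ ENNReal.ofReal b^3 * ENNReal.ofReal (1/(4*R^2)) * ∫⁻ w, H w ∂((μ.prod μ).prod (μ.prod μ)) := by
    rw [← lintegral_indicator_one hBm, ← lintegral_const_mul' _ _ (by finiteness)]
    apply lintegral_mono_ae
    filter_upwards [hz4] with w hw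
    by_cases hwB : w ∈ Bad
    · rw [indicator_of_mem hwB]; exact hlow w hwB hw
    · rw [indicator_of_notMem hwB]; exact zero_le
  have step2 : ∫⁻ w, H w ∂((μ.prod μ).prod (μ.prod μ)) = ∫⁻ q : ℝ × ℝ, gs (q.1/T) * E q.1 q.2 * G μ R q.1 q.2 ^ 2 := by
    rw [hH, lintegral_lintegral_swap (by fun_prop)]
    refine lintegral_congr fun q => ?_
    rw [lintegral_const_mul _ (by fun_prop)]
    congr 1
    rw [lintegral_prod_mul (f := fun p : ℝ × ℝ => gs ((p.2 - q.1*p.1 - q.2)/R)) (g := fun p : ℝ × ℝ => gs ((p.2 - q.1*p.1 - q.2)/R)) (by fun_prop) (by fun_prop)]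
    rw [sq]; rfl
  have step3 : ENNReal.ofReal (1/(4*R^2)) * ∫⁻ q : ℝ × ℝ, gs (q.1/T) * E q.1 q.2 * G μ R q.1 q.2 ^ 2 = ∫⁻ t, ∫⁻ r, gs (t/T) * (E t r * ENNReal.ofReal ((1/4)*(gr μ R t r)^2)) := by
    rw [← lintegral_const_mul' _ _ (by finiteness), Measure.volume_eq_prod, lintegral_prod _ (by have := G_meas μ R; fun_prop)]
    refine lintegral_congr fun t => lintegral_congr fun r => ?_
    have : ENNReal.ofReal ((1/4)*(gr μ R t r)^2) = ENNReal.ofReal (1/(4*R^2)) * G μ R t r ^2 := by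
      nth_rewrite 1 [← ENNReal.ofReal_toReal (G_ne_top μ R t r)]
      rw [← ENNReal.ofReal_pow (by positivity), ← ENNReal.ofReal_mul (by positivity)]
      congr 1; unfold gr; field_simp
    simp only
    rw [this]; ring
  rw [step2, mul_assoc, step3] at step1
  refine step1.trans ?_
  have grle : ∀ ρ t r, 0 < ρ → gr μ ρ t r ≤ m^2/ρ := by
    intro ρ t r hρ
    unfold gr
    have : (G μ ρ t r).toReal ≤ m^2 := by
      rw [hm, ← ENNReal.toReal_pow]; exact ENNReal.toReal_mono (by finiteness) (G_le μ ρ t r)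
    rw [one_div_mul_eq_div]; gcongr
  set ρ' := 2*(m^2+1)/l with hρ'
  have hρ'0 : 0 < ρ' := by positivity
  have hρ'e : ρ' = (2*(m^2+1)*b)*(T/M) := by rw [hρ', hl]; field_simp
  by_cases hRρ : R ≤ ρ'
  · have h1 := hD T R ρ' hT hR0 hRρ
    calc _ ≤ ENNReal.ofReal b^3 * ∫⁻ t, ∫⁻ r, gs (t/T) * ENNReal.ofReal ((gr μ R t r - gr μ ρ' t r)^2) := by
          refine mul_le_mul_right (lintegral_mono fun t => lintegral_mono fun r => mul_le_mul_right ?_ _) _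
          simp only [hE]
          split_ifs with hlt
          · rw [one_mul]
            apply ENNReal.ofReal_le_ofReal
            have h2 := grle ρ' t r hρ'0
            have h3 : m^2/ρ' ≤ l/2 := by
              rw [hρ', div_div_eq_mul_div, div_le_iff₀ (by positivity)]; nlinarith
            have h4 : (gr μ R t r)/2 ≤ gr μ R t r - gr μ ρ' t r := by linarith
            have h5 : 0 ≤ (gr μ R t r)/2 := by linarith
            calc (1/4)*(gr μ R t r)^2 = (gr μ R t r/2)^2 := by ring
              _ ≤ _ := pow_le_pow_left₀ h5 h4 2
          · rw [zero_mul]; exact zero_le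
      _ ≤ ENNReal.ofReal b^3 * (K * ENNReal.ofReal (T * ρ'^(s-1/2))) := mul_le_mul_right h1 _
      _ = _ := by
          rw [hρ'e, Real.mul_rpow (by positivity) (by positivity), show T * ((2*(m^2+1)*b)^(s-1/2) * (T/M)^(s-1/2)) = (2*(m^2+1)*b)^(s-1/2) * (T * (T/M)^(s-1/2)) by ring,
            ENNReal.ofReal_mul (by positivity)]; ring
  · push Not at hRρ
    have : ∀ t r, E t r = 0 := by
      intro t r
      simp only [hE]
      rw [if_neg]; push Not
      refine (grle R t r hR0).trans ?_
      rw [div_le_iff₀ hR0]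
      have : l*ρ' = 2*(m^2+1) := by rw [hρ']; field_simp
      nlinarith [sq_nonneg m]
    simp [this]

def Good (μ : Measure ℝ) (T K β : ℝ) : Set ((ℝ × ℝ) × (ℝ × ℝ)) :=
  {w | 1/T ≤ |w.2.1-w.1.1| ∧ ∀ n : ℕ, strip μ ((1/2)^n) w.1 w.2 ≤ ENNReal.ofReal (K * ((1/2:ℝ)^n)^(1-β))}

lemma Good_meas (μ : Measure ℝ) [SFinite μ] (T K β : ℝ) : MeasurableSet (Good μ T K β) := by
  have h2 : Measurable (fun w : (ℝ × ℝ) × (ℝ × ℝ) => |w.2.1-w.1.1|) := by fun_prop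
  have e : Good μ T K β = {w | 1/T ≤ |w.2.1-w.1.1|} ∩ ⋂ n : ℕ, {w | strip μ ((1/2)^n) w.1 w.2 ≤ ENNReal.ofReal (K * ((1/2:ℝ)^n)^(1-β))} := by
    ext w; simp [Good]
  rw [e]
  exact (measurableSet_le measurable_const h2).inter (MeasurableSet.iInter fun n => measurableSet_le (strip_meas μ _) measurable_const)

lemma bad_total {μ : Measure ℝ} [IsFiniteMeasure μ] {C : ℝ≥0∞} (hC : C ≠ ⊤) {s : ℝ} (hs0 : 1/2 < s) (hs : s ≤ 1) (hF : Frost μ C s)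
    {B : ℝ} (hB : 1 ≤ B) (hz : ∀ᵐ z ∂μ, |z| ≤ B) {β : ℝ} (hβ : 0 < β) :
    ∃ D : ℝ≥0∞, D ≠ ⊤ ∧ ∀ T K : ℝ, 1 ≤ T → 0 < K → 
     ((μ.prod μ).prod (μ.prod μ)) (Good μ T K β)ᶜ ≤ D * (ENNReal.ofReal (T^(-s)) + ENNReal.ofReal (T * (T/K)^(s-1/2))) := by
  obtain ⟨D1, hD1, h1⟩ := bad_n hC hs0 hs hF hB hz
  set q : ℝ := (1/2:ℝ)^(β*(s-1/2)) with hq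
  have hq0 : 0 < q := by positivity
  have hq1 : q < 1 := Real.rpow_lt_one (by norm_num) (by norm_num) (by nlinarith)
  have hgeo : ∑' n : ℕ, ENNReal.ofReal (q^n) ≠ ⊤ := by
    simp_rw [ENNReal.ofReal_pow hq0.le]
    rw [ENNReal.tsum_geometric]
    simp only [ne_eq, ENNReal.inv_eq_top, tsub_eq_zero_iff_le, not_le]
    simpa using hq1
  refine ⟨μ univ^3 * C + D1 * ∑' n : ℕ, ENNReal.ofReal (q^n), by finiteness, ?_⟩
  intro T K hT hK
  have hT0 : 0 < T := by linarith
  set S0 : Set ((ℝ × ℝ) × (ℝ × ℝ)) := {w | |w.2.1-w.1.1| < 1/T} with hS0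
  set S : ℕ → Set ((ℝ × ℝ) × (ℝ × ℝ)) := fun n => {w | 1/T ≤ |w.2.1-w.1.1| ∧ ENNReal.ofReal ((K*((1/2:ℝ)^n)^(-β))*(1/2)^n) < strip μ ((1/2)^n) w.1 w.2} with hS
  have hsub : (Good μ T K β)ᶜ ⊆ S0 ∪ ⋃ n, S n := by
    intro w hw
    by_cases h0 : |w.2.1-w.1.1| < 1/T
    · left; exact h0
    · right
      push Not at h0
      by_contra hcon
      apply hw
      refine ⟨h0, fun n => ?_⟩
      by_contra hlt
      push Not at hlt
      apply hcon
      refine mem_iUnion.2 ⟨n, h0, ?_⟩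
      convert hlt using 2
      have : (0:ℝ) < (1/2)^n := by positivity
      rw [sub_eq_add_neg, add_comm, Real.rpow_add this, Real.rpow_one]; ring
  have hm0 : ((μ.prod μ).prod (μ.prod μ)) S0 ≤ μ univ^3 * C * ENNReal.ofReal (T^(-s)) := by
    have hd : Measurable (fun w : (ℝ × ℝ) × (ℝ × ℝ) => |w.2.1-w.1.1|) := by fun_prop
    rw [Measure.prod_apply (measurableSet_lt hd measurable_const)]
    calc _ ≤ ∫⁻ p : ℝ × ℝ, (C * ENNReal.ofReal (T^(-s)) * μ univ) ∂(μ.prod μ) := by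
          refine lintegral_mono fun p => ?_
          calc _ ≤ (μ.prod μ) (Icc (p.1-1/T) (p.1+1/T) ×ˢ univ) := by
                apply measure_mono
                intro x hx
                have hx' : |x.1 - p.1| < 1/T := hx
                rw [abs_lt] at hx'
                exact ⟨⟨by linarith, by linarith⟩, trivial⟩
            _ = μ (Icc (p.1-1/T) (p.1+1/T)) * μ univ := Measure.prod_prod _ _
            _ ≤ _ := by
                refine mul_le_mul_left ?_ _
                have := hF p.1 (1/T) (by positivity)
                rwa [one_div, Real.inv_rpow hT0.le, ← Real.rpow_neg hT0.le, ← one_div] at this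
      _ = _ := by
          rw [lintegral_const, ← univ_prod_univ, Measure.prod_prod]; ring
  have hmn : ∀ n, ((μ.prod μ).prod (μ.prod μ)) (S n) ≤ D1 * ENNReal.ofReal (T * (T/K)^(s-1/2)) * ENNReal.ofReal (q^n) := by
    intro n
    have hn : (0:ℝ) < (1/2)^n := by positivity
    have hn1 : ((1/2:ℝ)^n) ≤ 1 := pow_le_one₀ (by norm_num) (by norm_num)
    refine (h1 T (K*((1/2:ℝ)^n)^(-β)) ((1/2)^n) hT (by positivity) hn hn1).trans (le_of_eq ?_)
    rw [mul_assoc, ← ENNReal.ofReal_mul (by positivity)]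
    congr 2
    have e1 : T/(K*((1/2:ℝ)^n)^(-β)) = (T/K) * ((1/2:ℝ)^n)^β := by
      rw [Real.rpow_neg hn.le]; field_simp
    have e2 : (((1/2:ℝ)^n)^β)^(s-1/2) = q^n := by
      rw [hq, ← Real.rpow_mul hn.le, ← Real.rpow_natCast, ← Real.rpow_natCast, ← Real.rpow_mul (by norm_num), ← Real.rpow_mul (by norm_num)]
      congr 1; ring
    rw [e1, Real.mul_rpow (by positivity) (by positivity), e2]; ring
  calc _ ≤ ((μ.prod μ).prod (μ.prod μ)) (S0 ∪ ⋃ n, S n) := measure_mono hsub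
    _ ≤ ((μ.prod μ).prod (μ.prod μ)) S0 + ∑' n, ((μ.prod μ).prod (μ.prod μ)) (S n) := 
        (measure_union_le _ _).trans (add_le_add le_rfl (measure_iUnion_le _))
    _ ≤ μ univ^3 * C * ENNReal.ofReal (T^(-s)) + ∑' n, D1 * ENNReal.ofReal (T * (T/K)^(s-1/2)) * ENNReal.ofReal (q^n) := 
        add_le_add hm0 (ENNReal.tsum_le_tsum hmn)
    _ = μ univ^3 * C * ENNReal.ofReal (T^(-s)) + D1 * (∑' n : ℕ, ENNReal.ofReal (q^n)) * ENNReal.ofReal (T * (T/K)^(s-1/2)) := by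
        rw [ENNReal.tsum_mul_left]; ring
    _ ≤ _ := by
        rw [mul_add]
        exact add_le_add (mul_le_mul_left le_self_add _) (mul_le_mul_left le_add_self _)

lemma tube {μ : Measure ℝ} [IsFiniteMeasure μ] {B : ℝ} (hB : 1 ≤ B) (hz : ∀ᵐ z ∂μ, |z| ≤ B) {β : ℝ} (hβ : 0 ≤ β) (hβ1 : β < 1)
    {T K : ℝ} (hK : 1 ≤ K) {p : ℝ × ℝ} (hp1 : |p.1| ≤ B) (hp2 : |p.2| ≤ B) (y1 y2 h : ℝ) (hh : 1 ≤ h) :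
    (μ.prod μ) {p' | (p,p') ∈ Good μ T K β ∧ |y1*(p'.2-p.2) - y2*(p'.1-p.1)| ≤ h} ≤ 
      (2 + μ univ^2) * ENNReal.ofReal (K*(8*B*h)*((1+|y1|)^(-((1-β)/2)) * (1+|y2|)^(-((1-β)/2)))) := by
  set S := {p' : ℝ × ℝ | (p,p') ∈ Good μ T K β ∧ |y1*(p'.2-p.2) - y2*(p'.1-p.1)| ≤ h} with hS
  set Y := max |y1| |y2| with hY
  have hY0 : 0 ≤ Y := le_max_of_le_left (abs_nonneg _)
  set δ := 8*B*h/(1+Y) with hδ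
  have hBh : 1 ≤ B*h := by nlinarith
  have hδ0 : 0 < δ := by positivity
  have hz2 : ∀ᵐ p ∂(μ.prod μ), |p.1| ≤ B ∧ |p.2| ≤ B := 
    (Measure.quasiMeasurePreserving_fst.ae hz).and (Measure.quasiMeasurePreserving_snd.ae hz)
  have main : (μ.prod μ) S ≤ (2 + μ univ^2) * ENNReal.ofReal (K*δ^(1-β)) := by
    by_cases h1 : 1 ≤ δ
    · calc (μ.prod μ) S ≤ (μ.prod μ) univ := measure_mono (subset_univ _)
        _ = μ univ^2 * 1 := by rw [← univ_prod_univ, Measure.prod_prod]; ring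
        _ ≤ _ := by
          apply mul_le_mul' le_add_self
          rw [ENNReal.one_le_ofReal]
          have := Real.one_le_rpow h1 (by linarith : 0 ≤ 1-β)
          nlinarith
    · push Not at h1
      have hY1 : 7 ≤ Y := by
        rw [hδ, div_lt_one (by positivity)] at h1
        nlinarith
      obtain ⟨n, hn1, hn2⟩ := exists_nat_pow_near_of_lt_one hδ0 h1.le (by norm_num : (0:ℝ) < 1/2) (by norm_num)
      have hae : (μ.prod μ) S ≤ (μ.prod μ) (S ∩ {p | |p.1| ≤ B ∧ |p.2| ≤ B}) := by
        apply measure_mono_ae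
        filter_upwards [hz2] with x hx hxS
        exact ⟨hxS, hx⟩
      refine hae.trans ?_
      by_cases hne : (S ∩ {p | |p.1| ≤ B ∧ |p.2| ≤ B}).Nonempty
      · obtain ⟨p0, ⟨hg, hy0⟩, hb1, hb2⟩ := hne
        have hsub : S ∩ {p | |p.1| ≤ B ∧ |p.2| ≤ B} ⊆ {p'' | |cr p p0 p''| ≤ (1/2)^n} := by
          rintro x ⟨⟨_, hy⟩, hx1, hx2⟩
          show |cr p p0 x| ≤ (1/2)^n
          refine le_trans ?_ hn2
          rw [hδ, le_div_iff₀ (by positivity)]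
          have c1 : |x.1-p.1| ≤ 2*B := by have := abs_sub x.1 p.1; linarith
          have c2 : |x.2-p.2| ≤ 2*B := by have := abs_sub x.2 p.2; linarith
          have c3 : |p0.1-p.1| ≤ 2*B := by have := abs_sub p0.1 p.1; linarith
          have c4 : |p0.2-p.2| ≤ 2*B := by have := abs_sub p0.2 p.2; linarith
          have gen : ∀ y u u0 : ℝ, |u| ≤ 2*B → |u0| ≤ 2*B → y * cr p p0 x = u * (y1*(p0.2-p.2) - y2*(p0.1-p.1)) - u0 * (y1*(x.2-p.2) - y2*(x.1-p.1)) → |y| * |cr p p0 x| ≤ 4*B*h := by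
            intro y u u0 hu hu0 e
            rw [← abs_mul, e]
            refine (abs_sub _ _).trans ?_
            rw [abs_mul, abs_mul]
            have : |u| * |y1*(p0.2-p.2) - y2*(p0.1-p.1)| ≤ 2*B*h := by gcongr
            have : |u0| * |y1*(x.2-p.2) - y2*(x.1-p.1)| ≤ 2*B*h := by gcongr
            linarith
          have g1 := gen y1 (x.1-p.1) (p0.1-p.1) c1 c3 (by unfold cr; ring)
          have g2 := gen y2 (x.2-p.2) (p0.2-p.2) c2 c4 (by unfold cr; ring)
          have g3 : Y * |cr p p0 x| ≤ 4*B*h := by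
            rw [hY]; rcases max_cases |y1| |y2| with ⟨e, _⟩ | ⟨e, _⟩ <;> rw [e] <;> assumption
          have : 0 ≤ |cr p p0 x| := abs_nonneg _
          nlinarith
        calc _ ≤ strip μ ((1/2)^n) p p0 := measure_mono hsub
          _ ≤ ENNReal.ofReal (K * ((1/2:ℝ)^n)^(1-β)) := hg.2 n
          _ ≤ ENNReal.ofReal (2*(K*δ^(1-β))) := by
              apply ENNReal.ofReal_le_ofReal
              have : ((1/2:ℝ)^n)^(1-β) ≤ 2*δ^(1-β) := by
                calc ((1/2:ℝ)^n)^(1-β) ≤ (2*δ)^(1-β) := by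
                      apply Real.rpow_le_rpow (by positivity) _ (by linarith)
                      rw [pow_succ] at hn1; linarith
                  _ = 2^(1-β) * δ^(1-β) := Real.mul_rpow (by norm_num) hδ0.le
                  _ ≤ 2^(1:ℝ) * δ^(1-β) := by gcongr <;> linarith
                  _ = _ := by rw [Real.rpow_one]
              nlinarith
          _ = 2 * ENNReal.ofReal (K*δ^(1-β)) := by rw [ENNReal.ofReal_mul (by norm_num)]; simp
          _ ≤ _ := mul_le_mul_left le_self_add _
      · rw [not_nonempty_iff_eq_empty] at hne
        rw [hne, measure_empty]; exact zero_le
  refine main.trans (mul_le_mul_right (ENNReal.ofReal_le_ofReal ?_) _)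
  have hK0 : 0 < K := by linarith
  rw [mul_assoc]
  refine mul_le_mul_of_nonneg_left ?_ hK0.le
  have e1 : δ^(1-β) = (8*B*h)^(1-β) * ((1+Y)^(-((1-β)/2)) * (1+Y)^(-((1-β)/2))) := by
    rw [hδ, Real.div_rpow (by positivity) (by positivity), ← Real.rpow_add (by positivity), show -((1-β)/2)+ -((1-β)/2) = -(1-β) by ring, Real.rpow_neg (by positivity)]; rfl
  rw [e1]
  have e2 : (8*B*h)^(1-β) ≤ 8*B*h := by
    calc (8*B*h)^(1-β) ≤ (8*B*h)^(1:ℝ) := Real.rpow_le_rpow_of_exponent_le (by nlinarith) (by linarith)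
      _ = _ := Real.rpow_one _
  have e3 : ∀ y : ℝ, |y| ≤ Y → (1+Y)^(-((1-β)/2)) ≤ (1+|y|)^(-((1-β)/2)) := fun y hy => 
    Real.rpow_le_rpow_of_nonpos (by positivity) (by linarith) (by linarith)
  have e4 := e3 y1 (le_max_left _ _)
  have e5 := e3 y2 (le_max_right _ _)
  gcongr

lemma zint {B : ℝ} (hB : 1 ≤ B) {T : ℝ} (hT : 1 ≤ T) (y1 y2 v1 v2 : ℝ) (h1 : |v1| ≤ 2*B) (h2 : |v2| ≤ 2*B) (hv : 1/T ≤ |v1|) :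
    ∫⁻ ζ, gs (y1 - 2*ζ*v1) * gs (y2 - 2*ζ*v2) ≤ ENNReal.ofReal (√(2*Real.pi) * T) * gs ((y1*v2 - y2*v1)/(3*B)) := by
  have hT0 : 0 < T := by linarith
  have hv0 : 0 < |v1| := lt_of_lt_of_le (by positivity) hv
  have hv1 : v1 ≠ 0 := abs_pos.mp hv0
  have gm := gs_meas
  set N := v1^2+v2^2 with hN
  have hN0 : 0 < N := by positivity
  set q := √N with hq
  have hq0 : 0 < q := Real.sqrt_pos.2 hN0
  have hq2 : q^2 = N := Real.sq_sqrt hN0.le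
  have e : ∀ ζ, gs (y1 - 2*ζ*v1) * gs (y2 - 2*ζ*v2) = gs ((y1*v2 - y2*v1)/q) * gs ((2*q)*((y1*v1+y2*v2)/(2*N) - ζ)) := by
    intro ζ
    unfold gs
    rw [← ENNReal.ofReal_mul (by positivity), ← ENNReal.ofReal_mul (by positivity), ← Real.exp_add, ← Real.exp_add]
    congr 2
    have : ((y1*v2 - y2*v1)/q)^2 + ((2*q)*((y1*v1+y2*v2)/(2*N) - ζ))^2 = (y1 - 2*ζ*v1)^2 + (y2 - 2*ζ*v2)^2 := by
      rw [div_pow, mul_pow, mul_pow, hq2]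
      field_simp
      rw [hN]; ring
    linarith
  simp_rw [e]
  rw [lintegral_const_mul _ (by fun_prop), gs_int _ _ (by positivity), mul_comm]
  apply mul_le_mul'
  · apply ENNReal.ofReal_le_ofReal
    rw [div_le_iff₀ (by positivity)]
    have : |v1| ≤ q := by
      rw [hq]; apply Real.le_sqrt_of_sq_le; rw [sq_abs, hN]; nlinarith [sq_nonneg v2]
    have h3 : 1 ≤ T*|v1| := by rw [div_le_iff₀ hT0] at hv; linarith
    have h4 : 1 ≤ T*(2*q) := by nlinarith
    have := sqrt2pi_pos
    rw [mul_assoc]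
    nlinarith
  · apply gs_anti
    rw [abs_div, abs_div, abs_of_pos hq0, abs_of_pos (by positivity : 0 < 3*B)]
    gcongr
    rw [hq]
    apply Real.sqrt_le_iff.2
    constructor
    · positivity
    · have a1 : v1^2 ≤ (2*B)^2 := sq_le_sq' (by linarith [neg_abs_le v1]) (by linarith [le_abs_self v1])
      have a2 : v2^2 ≤ (2*B)^2 := sq_le_sq' (by linarith [neg_abs_le v2]) (by linarith [le_abs_self v2])
      nlinarith

lemma good_int {μ : Measure ℝ} [IsFiniteMeasure μ] {C : ℝ≥0∞} (hC : C ≠ ⊤) {s : ℝ} (hs0 : 1/2 < s) (hF : Frost μ C s)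
    {B : ℝ} (hB : 1 ≤ B) (hz : ∀ᵐ z ∂μ, |z| ≤ B) {β : ℝ} (hβ : 0 ≤ β) (hβ1 : β < 1) :
    ∃ D : ℝ≥0∞, D ≠ ⊤ ∧ ∀ T K ξ a b : ℝ, 1 ≤ K → 
      ∫⁻ w in Good μ T K β, gs (((a+2*ξ*w.1.1)*(w.2.2-w.1.2) - (b+2*ξ*w.1.2)*(w.2.1-w.1.1))/(3*B)) ∂((μ.prod μ).prod (μ.prod μ)) 
        ≤ D * ENNReal.ofReal K * (ENNReal.ofReal ((1+|ξ|+|a|)^(-((1-β)/2))) * ENNReal.ofReal ((1+|ξ|+|b|)^(-((1-β)/2)))) := by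
  obtain ⟨K1, hK1, h1⟩ := frost_shift hC (α := (1-β)/2) hF (by linarith) (by linarith) hB hz
  have gm := gs_meas
  refine ⟨c0 * ((2+μ univ^2) * ENNReal.ofReal (24*B^2)) * K1^2, by have := c0_ne_top; finiteness, ?_⟩
  intro T K ξ a b hK
  have hz2 : ∀ᵐ p ∂(μ.prod μ), |p.1| ≤ B ∧ |p.2| ≤ B := 
    (Measure.quasiMeasurePreserving_fst.ae hz).and (Measure.quasiMeasurePreserving_snd.ae hz)
  have hGm := Good_meas μ T K β
  rw [← lintegral_indicator hGm, lintegral_prod _ (Measurable.aemeasurable (Measurable.indicator (by fun_prop) hGm))]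
  have hK0 : 0 ≤ K := by linarith
  calc _ ≤ ∫⁻ p, c0 * ((2+μ univ^2) * ENNReal.ofReal (24*B^2) * ENNReal.ofReal K * (ENNReal.ofReal ((1+|2*ξ*p.1+a|)^(-((1-β)/2))) * ENNReal.ofReal ((1+|2*ξ*p.2+b|)^(-((1-β)/2))))) ∂(μ.prod μ) := by
        apply lintegral_mono_ae
        filter_upwards [hz2] with p hp
        have hGs : MeasurableSet {p' | (p,p') ∈ Good μ T K β} := measurable_prodMk_left hGm
        have e : ∀ p', (Good μ T K β).indicator (fun w => gs (((a+2*ξ*w.1.1)*(w.2.2-w.1.2) - (b+2*ξ*w.1.2)*(w.2.1-w.1.1))/(3*B))) (p,p') = 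
          {p' | (p,p') ∈ Good μ T K β}.indicator (fun p' => gs (((a+2*ξ*p.1)*(p'.2-p.2) - (b+2*ξ*p.2)*(p'.1-p.1))/(3*B))) p' := fun p' => rfl
        simp_rw [e]
        rw [lintegral_indicator hGs]
        apply gauss_layer _ _ (by fun_prop)
        intro r hr
        rw [Measure.restrict_apply' hGs]
        have ht := tube hB hz hβ hβ1 (T := T) hK hp.1 hp.2 (2*ξ*p.1+a) (2*ξ*p.2+b) (3*B*r) (by nlinarith)
        refine le_trans (measure_mono ?_) (ht.trans (le_of_eq ?_))
        · rintro p' ⟨hp1, hp2⟩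
          refine ⟨hp2, ?_⟩
          have hp1' : |((a+2*ξ*p.1)*(p'.2-p.2) - (b+2*ξ*p.2)*(p'.1-p.1))/(3*B)| ≤ r := hp1
          rw [abs_div, abs_of_pos (by positivity : 0 < 3*B), div_le_iff₀ (by positivity)] at hp1'
          rw [add_comm _ a, add_comm _ b]; linarith
        · rw [show K*(8*B*(3*B*r))*((1+|2*ξ*p.1+a|)^(-((1-β)/2)) * (1+|2*ξ*p.2+b|)^(-((1-β)/2))) = (24*B^2) * (K * (((1+|2*ξ*p.1+a|)^(-((1-β)/2)) * (1+|2*ξ*p.2+b|)^(-((1-β)/2)))*r)) by ring]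
          have p1 : 0 ≤ (1+|2*ξ*p.1+a|)^(-((1-β)/2)) := by positivity
          have p2 : 0 ≤ (1+|2*ξ*p.2+b|)^(-((1-β)/2)) := by positivity
          have p3 : 0 ≤ 24*B^2 := by positivity
          generalize (1+|2*ξ*p.1+a|)^(-((1-β)/2)) = x1 at *
          generalize (1+|2*ξ*p.2+b|)^(-((1-β)/2)) = x2 at *
          generalize 24*B^2 = x3 at *
          rw [ENNReal.ofReal_mul p3, ENNReal.ofReal_mul hK0, ENNReal.ofReal_mul (mul_nonneg p1 p2), ENNReal.ofReal_mul p1]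
          ring
    _ = c0 * ((2+μ univ^2) * ENNReal.ofReal (24*B^2) * ENNReal.ofReal K) * ((∫⁻ z, ENNReal.ofReal ((1+|2*ξ*z+a|)^(-((1-β)/2))) ∂μ) * (∫⁻ z, ENNReal.ofReal ((1+|2*ξ*z+b|)^(-((1-β)/2))) ∂μ)) := by
        rw [← lintegral_prod_mul (by fun_prop) (by fun_prop), ← lintegral_const_mul _ (by fun_prop)]
        refine lintegral_congr fun p => ?_
        ring
    _ ≤ c0 * ((2+μ univ^2) * ENNReal.ofReal (24*B^2) * ENNReal.ofReal K) * ((K1 * ENNReal.ofReal ((1+|ξ|+|a|)^(-((1-β)/2)))) * (K1 * ENNReal.ofReal ((1+|ξ|+|b|)^(-((1-β)/2))))) := 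
        mul_le_mul_right (mul_le_mul' (h1 ξ a) (h1 ξ b)) _
    _ = _ := by ring

noncomputable def ax (ξ z : ℝ) : ℂ := Complex.exp (Complex.I * (ξ * z^2 : ℝ))
noncomputable def bx (ξ z : ℝ) : ℂ := Complex.exp (Complex.I * (ξ * z^2 : ℝ)) * (Real.exp (z^2/2) : ℂ)

lemma bx_meas (ξ : ℝ) : Measurable (bx ξ) := by unfold bx; fun_prop

lemma bx_bd {μ : Measure ℝ} {B : ℝ} (hz : ∀ᵐ z ∂μ, |z| ≤ B) (ξ : ℝ) : ∀ᵐ z ∂μ, ‖bx ξ z‖ ≤ Real.exp (B^2/2) := by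
  filter_upwards [hz] with z hz
  unfold bx
  rw [norm_mul, norm_exp_I, one_mul, Complex.norm_real, Real.norm_of_nonneg (by positivity), Real.exp_le_exp]
  have : z^2 ≤ B^2 := sq_le_sq' (by linarith [neg_abs_le z]) (by linarith [le_abs_self z])
  linarith

lemma ax_point {μ : Measure ℝ} [IsFiniteMeasure μ] {B : ℝ} (hz : ∀ᵐ z ∂μ, |z| ≤ B) (ξ η : ℝ) :
    ‖osc μ (ax ξ) η‖ₑ^2 ≤ ∫⁻ x, ‖osc μ (bx ξ) x‖ₑ^2 * gs (x - η) := by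
  apply osc_point (bx_meas ξ) (bx_bd hz ξ)
  refine ae_of_all _ fun z => ?_
  unfold ax bx
  rw [mul_assoc, ← Complex.ofReal_mul, ← Real.exp_add, show z^2/2 + -(z^2)/2 = 0 by ring]; simp

lemma star {μ : Measure ℝ} [IsFiniteMeasure μ] {C : ℝ≥0∞} (hC : C ≠ ⊤) {s : ℝ} (hs0 : 1/2 < s) (hs : s ≤ 1) (hF : Frost μ C s)
    {B : ℝ} (hB : 1 ≤ B) (hz : ∀ᵐ z ∂μ, |z| ≤ B) {β : ℝ} (hβ : 0 ≤ β) (hβ1 : β < 2*(s-1/2)) :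
    ∃ D : ℝ≥0∞, D ≠ ⊤ ∧ ∀ T K ξ : ℝ, 1 ≤ T → 1 ≤ K → 
      ∫⁻ w in Good μ T K β, (∫⁻ ζ, ‖osc μ (ax ξ) (2*ζ*(w.2.1-w.1.1) - 2*ξ*w.1.1)‖ₑ^2 * ‖osc μ (ax ξ) (2*ζ*(w.2.2-w.1.2) - 2*ξ*w.1.2)‖ₑ^2) ∂((μ.prod μ).prod (μ.prod μ)) 
        ≤ D * ENNReal.ofReal (T*K) * ENNReal.ofReal ((1+|ξ|)^(β-2*(s-1/2))) := by
  obtain ⟨D1, hD1, h1⟩ := good_int hC hs0 hF hB hz hβ (by linarith)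
  obtain ⟨K2, hK2, h2⟩ := dyadic_weight (1-s) ((1-β)/2) (by linarith) (by linarith)
  have gm := gs_meas
  set L := ENNReal.ofReal (√(2*Real.pi)) * (ENNReal.ofReal (Real.exp (B^2/2))^2 * (μ univ * (c0 * C))) with hL
  have hLt : L ≠ ⊤ := by clear h1 h2; have := c0_ne_top; rw [hL]; finiteness
  clear_value L
  refine ⟨ENNReal.ofReal (√(2*Real.pi)) * D1 * (K2*L)^2, by clear h1 h2; finiteness, ?_⟩
  intro T K ξ hT hK
  set f : ℝ → ℝ≥0∞ := fun x => ‖osc μ (bx ξ) x‖ₑ^2 with hf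
  have hfm : Measurable f := (osc_measurable μ (bx_meas ξ)).enorm.pow_const 2
  have h3 := h2 f L hfm (fun Q hQ => hL ▸ osc_frost hs hF (bx_meas ξ) (bx_bd hz ξ) (by linarith)) (1+|ξ|) (by linarith [abs_nonneg ξ])
  have hGm := Good_meas μ T K β
  have hz2 : ∀ᵐ p ∂(μ.prod μ), |p.1| ≤ B ∧ |p.2| ≤ B := 
    (Measure.quasiMeasurePreserving_fst.ae hz).and (Measure.quasiMeasurePreserving_snd.ae hz)
  have hz4 : ∀ᵐ w ∂((μ.prod μ).prod (μ.prod μ)), (|w.1.1| ≤ B ∧ |w.1.2| ≤ B) ∧ (|w.2.1| ≤ B ∧ |w.2.2| ≤ B) := 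
    (Measure.quasiMeasurePreserving_fst.ae hz2).and (Measure.quasiMeasurePreserving_snd.ae hz2)
  have s1 : ∀ w : (ℝ × ℝ) × (ℝ × ℝ), ∀ ζ : ℝ, ‖osc μ (ax ξ) (2*ζ*(w.2.1-w.1.1) - 2*ξ*w.1.1)‖ₑ^2 * ‖osc μ (ax ξ) (2*ζ*(w.2.2-w.1.2) - 2*ξ*w.1.2)‖ₑ^2 ≤
      ∫⁻ q : ℝ × ℝ, f q.1 * f q.2 * (gs (q.1+2*ξ*w.1.1 - 2*ζ*(w.2.1-w.1.1)) * gs (q.2+2*ξ*w.1.2 - 2*ζ*(w.2.2-w.1.2))) := by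
    intro w ζ
    refine (mul_le_mul' (ax_point hz ξ (2*ζ*(w.2.1-w.1.1) - 2*ξ*w.1.1)) (ax_point hz ξ (2*ζ*(w.2.2-w.1.2) - 2*ξ*w.1.2))).trans (le_of_eq ?_)
    have e0 := lintegral_prod_mul (μ := volume) (ν := volume) (f := fun x => f x * gs (x - (2*ζ*(w.2.1-w.1.1) - 2*ξ*w.1.1))) (g := fun x => f x * gs (x - (2*ζ*(w.2.2-w.1.2) - 2*ξ*w.1.2))) (by fun_prop) (by fun_prop)
    rw [← Measure.volume_eq_prod] at e0
    refine e0.symm.trans ?_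
    refine lintegral_congr fun q => ?_
    rw [show q.1 - (2*ζ*(w.2.1-w.1.1) - 2*ξ*w.1.1) = q.1+2*ξ*w.1.1 - 2*ζ*(w.2.1-w.1.1) by ring, show q.2 - (2*ζ*(w.2.2-w.1.2) - 2*ξ*w.1.2) = q.2+2*ξ*w.1.2 - 2*ζ*(w.2.2-w.1.2) by ring]
    simp only [hf]; ring
  have s2 : ∀ᵐ w ∂((μ.prod μ).prod (μ.prod μ)), w ∈ Good μ T K β → 
      ∫⁻ ζ, ‖osc μ (ax ξ) (2*ζ*(w.2.1-w.1.1) - 2*ξ*w.1.1)‖ₑ^2 * ‖osc μ (ax ξ) (2*ζ*(w.2.2-w.1.2) - 2*ξ*w.1.2)‖ₑ^2 ≤ 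
      ∫⁻ q : ℝ × ℝ, f q.1 * f q.2 * (ENNReal.ofReal (√(2*Real.pi) * T) * gs (((q.1+2*ξ*w.1.1)*(w.2.2-w.1.2) - (q.2+2*ξ*w.1.2)*(w.2.1-w.1.1))/(3*B))) := by
    filter_upwards [hz4] with w ⟨⟨b1, b2⟩, ⟨b3, b4⟩⟩ hw
    have c1 : |w.2.1-w.1.1| ≤ 2*B := by have := abs_sub w.2.1 w.1.1; linarith
    have c2 : |w.2.2-w.1.2| ≤ 2*B := by have := abs_sub w.2.2 w.1.2; linarith
    refine (lintegral_mono fun ζ => s1 w ζ).trans ?_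
    rw [lintegral_lintegral_swap (by fun_prop)]
    refine lintegral_mono fun q => ?_
    simp only
    rw [lintegral_const_mul _ (by fun_prop)]
    exact mul_le_mul_right (zint hB hT _ _ _ _ c1 c2 hw.1) _
  calc _ ≤ ∫⁻ w in Good μ T K β, (∫⁻ q : ℝ × ℝ, f q.1 * f q.2 * (ENNReal.ofReal (√(2*Real.pi) * T) * gs (((q.1+2*ξ*w.1.1)*(w.2.2-w.1.2) - (q.2+2*ξ*w.1.2)*(w.2.1-w.1.1))/(3*B)))) ∂((μ.prod μ).prod (μ.prod μ)) := by
        apply lintegral_mono_ae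
        rw [ae_restrict_iff' hGm]
        exact s2
    _ = ∫⁻ q : ℝ × ℝ, f q.1 * f q.2 * ENNReal.ofReal (√(2*Real.pi) * T) * ∫⁻ w in Good μ T K β, gs (((q.1+2*ξ*w.1.1)*(w.2.2-w.1.2) - (q.2+2*ξ*w.1.2)*(w.2.1-w.1.1))/(3*B)) ∂((μ.prod μ).prod (μ.prod μ)) := by
        rw [lintegral_lintegral_swap (by fun_prop)]
        refine lintegral_congr fun q => ?_
        rw [← lintegral_const_mul _ (by fun_prop)]
        refine lintegral_congr fun w => ?_
        ring
    _ ≤ ∫⁻ q : ℝ × ℝ, f q.1 * f q.2 * ENNReal.ofReal (√(2*Real.pi) * T) * (D1 * ENNReal.ofReal K * (ENNReal.ofReal ((1+|ξ|+|q.1|)^(-((1-β)/2))) * ENNReal.ofReal ((1+|ξ|+|q.2|)^(-((1-β)/2))))) := 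
        lintegral_mono fun q => mul_le_mul_right (h1 T K ξ q.1 q.2 hK) _
    _ = ENNReal.ofReal (√(2*Real.pi) * T) * (D1 * ENNReal.ofReal K) * ((∫⁻ x, f x * ENNReal.ofReal ((1+|ξ|+|x|)^(-((1-β)/2)))) * (∫⁻ x, f x * ENNReal.ofReal ((1+|ξ|+|x|)^(-((1-β)/2))))) := by
        rw [← lintegral_prod_mul (by fun_prop) (by fun_prop), ← lintegral_const_mul _ (by fun_prop), ← Measure.volume_eq_prod]
        refine lintegral_congr fun q => ?_
        ring
    _ ≤ ENNReal.ofReal (√(2*Real.pi) * T) * (D1 * ENNReal.ofReal K) * ((K2 * L * ENNReal.ofReal ((1+|ξ|)^(1-s-(1-β)/2))) * (K2 * L * ENNReal.ofReal ((1+|ξ|)^(1-s-(1-β)/2)))) := 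
        mul_le_mul_right (mul_le_mul' h3 h3) _
    _ = _ := by
        rw [show β-2*(s-1/2) = (1-s-(1-β)/2) + (1-s-(1-β)/2) by ring, Real.rpow_add (by positivity), ENNReal.ofReal_mul (by positivity : (0:ℝ) ≤ (1+|ξ|)^(1-s-(1-β)/2)),
          ENNReal.ofReal_mul (by positivity : (0:ℝ) ≤ √(2*Real.pi)), ENNReal.ofReal_mul (by linarith : (0:ℝ) ≤ T)]
        ring

lemma sum_sq_le {ι : Type*} (s : Finset ι) (f : ι → ℝ≥0∞) : (∑ i ∈ s, f i)^2 ≤ (s.card : ℝ≥0∞) * ∑ i ∈ s, f i^2 := by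
  have := ENNReal.rpow_sum_le_const_mul_sum_rpow s f (p := 2) (by norm_num)
  have e : (2:ℝ) - 1 = 1 := by norm_num
  simpa [e] using this

lemma count_cs {X : Type*} [MeasurableSpace X] (Ω : Measure X) [IsFiniteMeasure Ω] {f g : X → ℝ} (hf : Measurable f) (hg : Measurable g)
    {δ : ℝ} (hδ : 0 < δ) (I : Finset ℤ) :
    (Ω {ω | ⌊f ω/δ⌋ ∈ I ∧ ⌊g ω/δ⌋ ∈ I})^2 ≤ (I.card:ℝ≥0∞)^2 * (Ω.prod Ω) {w | |f w.1 - f w.2| ≤ δ ∧ |g w.1 - g w.2| ≤ δ} := by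
  classical
  set A : ℤ × ℤ → Set X := fun k => {ω | ⌊f ω/δ⌋ = k.1 ∧ ⌊g ω/δ⌋ = k.2} with hA
  have hAm : ∀ k, MeasurableSet (A k) := fun k => by
    have h1 : Measurable (fun ω => ⌊f ω/δ⌋) := (hf.div_const δ).floor
    have h2 : Measurable (fun ω => ⌊g ω/δ⌋) := (hg.div_const δ).floor
    exact (h1 (measurableSet_singleton k.1)).inter (h2 (measurableSet_singleton k.2))
  have h1 : Ω {ω | ⌊f ω/δ⌋ ∈ I ∧ ⌊g ω/δ⌋ ∈ I} ≤ ∑ k ∈ I ×ˢ I, Ω (A k) := by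
    refine le_trans (measure_mono ?_) (measure_biUnion_finset_le _ _)
    rintro ω ⟨h1, h2⟩
    simp only [mem_iUnion]
    exact ⟨(⌊f ω/δ⌋, ⌊g ω/δ⌋), Finset.mem_product.2 ⟨h1, h2⟩, rfl, rfl⟩
  have h2 : ∑ k ∈ I ×ˢ I, Ω (A k)^2 ≤ (Ω.prod Ω) {w | |f w.1 - f w.2| ≤ δ ∧ |g w.1 - g w.2| ≤ δ} := by
    have e : ∀ k, Ω (A k)^2 = (Ω.prod Ω) (A k ×ˢ A k) := fun k => by rw [Measure.prod_prod, sq]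
    simp_rw [e]
    rw [← measure_biUnion_finset]
    · apply measure_mono
      intro w hw
      simp only [mem_iUnion] at hw
      obtain ⟨k, hk, ⟨a1, a2⟩, ⟨a3, a4⟩⟩ := hw
      have gen : ∀ x y : ℝ, ⌊x/δ⌋ = ⌊y/δ⌋ → |x-y| ≤ δ := by
        intro x y h
        have := Int.abs_sub_lt_one_of_floor_eq_floor h
        rw [← sub_div, abs_div, abs_of_pos hδ, div_lt_one hδ] at this
        exact this.le
      exact ⟨gen _ _ (a1.trans a3.symm), gen _ _ (a2.trans a4.symm)⟩
    · intro k _ k' _ hkk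
      rw [Function.onFun, Set.disjoint_left]
      rintro w ⟨⟨a1, a2⟩, -⟩ ⟨⟨b1, b2⟩, -⟩
      exact hkk (Prod.ext (a1.symm.trans b1) (a2.symm.trans b2))
    · intro k _; exact (hAm k).prod (hAm k)
  calc _ ≤ (∑ k ∈ I ×ˢ I, Ω (A k))^2 := by gcongr
    _ ≤ _ := sum_sq_le _ _
    _ ≤ _ := by
      rw [Finset.card_product, sq (I.card:ℝ≥0∞)]; push_cast
      exact mul_le_mul_right h2 _

lemma double_cs {X Y : Type*} [MeasurableSpace X] [MeasurableSpace Y] (P : Measure X) [IsFiniteMeasure P] (Ω : Measure Y) [IsFiniteMeasure Ω]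
    {A : Set (X × Y)} (hA : MeasurableSet A) :
    ((P.prod Ω) A)^2 ≤ Ω univ * ∫⁻ w, Ω {ω | (w.1,ω) ∈ A ∧ (w.2,ω) ∈ A} ∂(P.prod P) := by
  have hs : MeasurableSet {q : (X × X) × Y | (q.1.1,q.2) ∈ A ∧ (q.1.2,q.2) ∈ A} := by
    have m1 : Measurable (fun q : (X × X) × Y => (q.1.1,q.2)) := by fun_prop
    have m2 : Measurable (fun q : (X × X) × Y => (q.1.2,q.2)) := by fun_prop
    exact (m1 hA).inter (m2 hA)
  rw [Measure.prod_apply_symm hA]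
  refine (cs_one Ω _ (measurable_measure_prodMk_right hA).aemeasurable).trans (mul_le_mul_right (le_of_eq ?_) _)
  have e1 := Measure.prod_apply (μ := P.prod P) (ν := Ω) hs
  have e2 := Measure.prod_apply_symm (μ := P.prod P) (ν := Ω) hs
  calc _ = ∫⁻ y, (P.prod P) ((fun x => (x,y)) ⁻¹' {q : (X × X) × Y | (q.1.1,q.2) ∈ A ∧ (q.1.2,q.2) ∈ A}) ∂Ω := by
        refine lintegral_congr fun y => ?_
        rw [sq, ← Measure.prod_prod]; rfl
    _ = _ := by rw [← e2, e1]; rfl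

def FF (p : ℝ × ℝ) (ω : (ℝ × ℝ) × ℝ) : ℝ := (ω.1.1-p.1)^2 + (ω.1.2-p.2)^2 + ω.2

lemma FF_meas : Measurable (Function.uncurry FF) := by unfold FF; simp only [Function.uncurry_def]; fun_prop
lemma FF_meas' (p : ℝ × ℝ) : Measurable (FF p) := by unfold FF; fun_prop

lemma osc_prod (μ κ : Measure ℝ) [IsFiniteMeasure μ] [IsFiniteMeasure κ] (p p' : ℝ × ℝ) (ξ ζ : ℝ) :
    ‖∫ ω, Complex.exp (Complex.I * (ξ * FF p ω : ℝ)) * Complex.exp (Complex.I * (ζ * (FF p ω - FF p' ω) : ℝ)) ∂((μ.prod μ).prod κ)‖ₑ^2 = 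
    ‖osc κ (fun _ => 1) ξ‖ₑ^2 * (‖osc μ (ax ξ) (2*ζ*(p'.1-p.1) - 2*ξ*p.1)‖ₑ^2 * ‖osc μ (ax ξ) (2*ζ*(p'.2-p.2) - 2*ξ*p.2)‖ₑ^2) := by
  set c : ℝ := ξ*(p.1^2+p.2^2) + ζ*(p.1^2+p.2^2-p'.1^2-p'.2^2) with hc
  have e : ∀ ω : (ℝ × ℝ) × ℝ, Complex.exp (Complex.I * (ξ * FF p ω : ℝ)) * Complex.exp (Complex.I * (ζ * (FF p ω - FF p' ω) : ℝ)) = 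
    ((ax ξ ω.1.1 * Complex.exp (Complex.I * ((2*ζ*(p'.1-p.1) - 2*ξ*p.1) * ω.1.1 : ℝ))) * (ax ξ ω.1.2 * Complex.exp (Complex.I * ((2*ζ*(p'.2-p.2) - 2*ξ*p.2) * ω.1.2 : ℝ)))) * (Complex.exp (Complex.I * (c:ℝ)) * ((1:ℂ) * Complex.exp (Complex.I * (ξ * ω.2 : ℝ)))) := by
    intro ω
    unfold ax
    rw [one_mul]
    simp only [← Complex.exp_add]
    congr 1
    simp only [hc, FF]; push_cast; ring
  simp_rw [e]
  rw [integral_prod_mul (μ := μ.prod μ) (ν := κ) (f := fun z : ℝ × ℝ => (ax ξ z.1 * Complex.exp (Complex.I * ((2*ζ*(p'.1-p.1) - 2*ξ*p.1) * z.1 : ℝ))) * (ax ξ z.2 * Complex.exp (Complex.I * ((2*ζ*(p'.2-p.2) - 2*ξ*p.2) * z.2 : ℝ))))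
    (g := fun q : ℝ => Complex.exp (Complex.I * (c:ℝ)) * ((1:ℂ) * Complex.exp (Complex.I * (ξ * q : ℝ))))]
  rw [integral_prod_mul (μ := μ) (ν := μ) (f := fun z : ℝ => (ax ξ z * Complex.exp (Complex.I * ((2*ζ*(p'.1-p.1) - 2*ξ*p.1) * z : ℝ)))) (g := fun z => (ax ξ z * Complex.exp (Complex.I * ((2*ζ*(p'.2-p.2) - 2*ξ*p.2) * z : ℝ))))]
  rw [integral_const_mul, enorm_mul, enorm_mul, enorm_mul, enorm_exp_I, one_mul]
  unfold osc
  ring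

lemma J_bound (μ κ : Measure ℝ) [IsFiniteMeasure μ] [IsFiniteMeasure κ] (p p' : ℝ × ℝ) {δ : ℝ} (hδ : 0 < δ) :
    (((μ.prod μ).prod κ).prod ((μ.prod μ).prod κ)) {w | |FF p w.1 - FF p w.2| ≤ δ ∧ |FF p' w.1 - FF p' w.2| ≤ δ} ≤
     ENNReal.ofReal (Real.exp (5/2)*δ^2) * ∫⁻ ξ, gs (δ*ξ) * (‖osc κ (fun _ => 1) ξ‖ₑ^2 * ∫⁻ ζ, (‖osc μ (ax ξ) (2*ζ*(p'.1-p.1) - 2*ξ*p.1)‖ₑ^2 * ‖osc μ (ax ξ) (2*ζ*(p'.2-p.2) - 2*ξ*p.2)‖ₑ^2)) := by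
  have gm := gs_meas
  have hp := sqrt2pi_pos
  have hFm := FF_meas
  have hF1 := FF_meas' p
  have hF2 := FF_meas' p'
  set Ω := (μ.prod μ).prod κ with hΩ
  set Φ : ℝ × ℝ → (ℝ × ℝ) × ℝ → ℂ := fun θ ω => Complex.exp (Complex.I * (θ.1 * FF p ω : ℝ)) * Complex.exp (Complex.I * (θ.2 * (FF p ω - FF p' ω) : ℝ)) with hΦ
  have hΦm : Measurable (Function.uncurry Φ) := by
    simp only [hΦ, Function.uncurry_def]; fun_prop
  set k : ((ℝ × ℝ) × ℝ) × ((ℝ × ℝ) × ℝ) → ℝ := fun w => Real.exp (-(((1/δ)*(FF p w.1 - FF p w.2))^2)/2) * Real.exp (-(((1/δ)*((FF p w.1 - FF p' w.1) - (FF p w.2 - FF p' w.2)))^2)/2) with hk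
  have h1 := osc_low ((ga (1/δ)).prod (ga (1/δ))) Ω Φ hΦm (fun θ ω => by simp only [hΦ]; rw [norm_mul, norm_exp_I, norm_exp_I, mul_one]) k (fun w => by simp only [hk]; positivity)
    (by
      intro w
      have e : ∀ θ : ℝ × ℝ, Φ θ w.1 * (starRingEnd ℂ) (Φ θ w.2) = Complex.exp (Complex.I * (θ.1 * ((FF p w.1 - FF p w.2 : ℝ):ℂ))) * Complex.exp (Complex.I * (θ.2 * (((FF p w.1 - FF p' w.1) - (FF p w.2 - FF p' w.2) : ℝ):ℂ))) := by
        intro θ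
        simp only [hΦ]
        rw [map_mul, conj_exp_I, conj_exp_I]
        simp only [← Complex.exp_add]
        congr 1
        push_cast; ring
      simp_rw [e]
      rw [integral_prod_mul (μ := ga (1/δ)) (ν := ga (1/δ)) (f := fun η : ℝ => Complex.exp (Complex.I * (η * ((FF p w.1 - FF p w.2 : ℝ):ℂ)))) (g := fun η : ℝ => Complex.exp (Complex.I * (η * (((FF p w.1 - FF p' w.1) - (FF p w.2 - FF p' w.2) : ℝ):ℂ))))]
      rw [ga_char, ga_char, ← Complex.ofReal_mul])
    (by simp only [hk]; fun_prop)
    (by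
      intro w
      simp only [hk]
      have l : ∀ x : ℝ, Real.exp (-(x^2)/2) ≤ 1 := fun x => by rw [Real.exp_le_one_iff]; nlinarith [sq_nonneg x]
      exact mul_le_one₀ (l _) (by positivity) (l _))
  have hm2 : Measurable (fun θ => ‖∫ ω, Φ θ ω ∂Ω‖ₑ^2) := (osc_meas Ω Φ hΦm).enorm.pow_const 2
  have hset : MeasurableSet {w : ((ℝ × ℝ) × ℝ) × ((ℝ × ℝ) × ℝ) | |FF p w.1 - FF p w.2| ≤ δ ∧ |FF p' w.1 - FF p' w.2| ≤ δ} := by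
    have m1 : Measurable (fun w : ((ℝ × ℝ) × ℝ) × ((ℝ × ℝ) × ℝ) => |FF p w.1 - FF p w.2|) := by fun_prop
    have m2 : Measurable (fun w : ((ℝ × ℝ) × ℝ) × ((ℝ × ℝ) × ℝ) => |FF p' w.1 - FF p' w.2|) := by fun_prop
    exact (measurableSet_le m1 measurable_const).inter (measurableSet_le m2 measurable_const)
  calc _ ≤ ∫⁻ w, ENNReal.ofReal (Real.exp (5/2)) * ENNReal.ofReal (k w) ∂(Ω.prod Ω) := by
        rw [← lintegral_indicator_one hset]
        refine lintegral_mono fun w => ?_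
        by_cases hw : w ∈ {w : ((ℝ × ℝ) × ℝ) × ((ℝ × ℝ) × ℝ) | |FF p w.1 - FF p w.2| ≤ δ ∧ |FF p' w.1 - FF p' w.2| ≤ δ}
        · rw [indicator_of_mem hw, ← ENNReal.ofReal_mul (by positivity)]
          simp only [Pi.one_apply, ENNReal.one_le_ofReal, hk]
          rw [← Real.exp_add, ← Real.exp_add, Real.one_le_exp_iff]
          obtain ⟨a1, a2⟩ := hw
          have b1 : ((1/δ)*(FF p w.1 - FF p w.2))^2 ≤ 1 := by
            rw [sq_le_one_iff_abs_le_one, abs_mul, abs_of_pos (by positivity), one_div_mul_eq_div, div_le_one hδ]; exact a1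
          have b2 : ((1/δ)*((FF p w.1 - FF p' w.1) - (FF p w.2 - FF p' w.2)))^2 ≤ 2^2 := by
            rw [sq_le_sq, abs_mul, abs_of_pos (by positivity : 0 < 1/δ), one_div_mul_eq_div, div_le_iff₀ hδ, abs_of_pos (by norm_num : (0:ℝ) < 2)]
            rw [show (FF p w.1 - FF p' w.1) - (FF p w.2 - FF p' w.2) = (FF p w.1 - FF p w.2) - (FF p' w.1 - FF p' w.2) by ring]
            refine (abs_sub _ _).trans (by linarith)
          linarith
        · rw [indicator_of_notMem hw]; exact zero_le
    _ = ENNReal.ofReal (Real.exp (5/2)) * ∫⁻ ξ, (∫⁻ ζ, ‖∫ ω, Φ (ξ,ζ) ω ∂Ω‖ₑ^2 ∂(ga (1/δ))) ∂(ga (1/δ)) := by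
        rw [lintegral_const_mul' _ _ (by finiteness), h1, lintegral_prod _ hm2.aemeasurable]
    _ ≤ ENNReal.ofReal (Real.exp (5/2)) * (ENNReal.ofReal δ * ∫⁻ ξ, (ENNReal.ofReal δ * ∫⁻ ζ, ‖∫ ω, Φ (ξ,ζ) ω ∂Ω‖ₑ^2) * gs (δ*ξ)) := by
        refine mul_le_mul_right ?_ _
        have hq : (0:ℝ) < 1/δ := by positivity
        have hc : ENNReal.ofReal (1/((1/δ)*√(2*Real.pi))) ≤ ENNReal.ofReal δ := by
          apply ENNReal.ofReal_le_ofReal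
          have : 1 ≤ √(2*Real.pi) := by
            apply Real.le_sqrt_of_sq_le; linarith [Real.pi_gt_three]
          rw [show 1/((1/δ)*√(2*Real.pi)) = δ/√(2*Real.pi) by field_simp, div_le_iff₀ hp]
          nlinarith
        have mm : Measurable (fun ξ => ∫⁻ ζ, ‖∫ ω, Φ (ξ,ζ) ω ∂Ω‖ₑ^2 ∂(ga (1/δ))) := hm2.lintegral_prod_right'
        rw [ga_lint hq _ mm]
        refine mul_le_mul' hc (lintegral_mono fun ξ => ?_)
        rw [ga_lint hq (fun ζ => ‖∫ ω, Φ (ξ,ζ) ω ∂Ω‖ₑ^2) (hm2.comp measurable_prodMk_left)]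
        rw [show ξ/(1/δ) = δ*ξ by field_simp]
        refine mul_le_mul_left (mul_le_mul' hc (lintegral_mono fun ζ => ?_)) _
        exact mul_le_of_le_one_right' (gs_le_one _)
    _ = _ := by
        rw [ENNReal.ofReal_mul (by positivity), sq, ENNReal.ofReal_mul hδ.le, mul_assoc, mul_assoc]
        congr 2
        rw [← lintegral_const_mul' _ _ (by finiteness)]
        refine lintegral_congr fun ξ => ?_
        have : ∫⁻ ζ, ‖∫ ω, Φ (ξ,ζ) ω ∂Ω‖ₑ^2 = ‖osc κ (fun _ => 1) ξ‖ₑ^2 * ∫⁻ ζ, (‖osc μ (ax ξ) (2*ζ*(p'.1-p.1) - 2*ξ*p.1)‖ₑ^2 * ‖osc μ (ax ξ) (2*ζ*(p'.2-p.2) - 2*ξ*p.2)‖ₑ^2) := by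
          rw [← lintegral_const_mul' _ _ (by finiteness)]
          refine lintegral_congr fun ζ => ?_
          exact osc_prod μ κ p p' ξ ζ
        rw [this]; ring

lemma oscax_meas (μ : Measure ℝ) [SFinite μ] : Measurable (fun q : ℝ × ℝ => osc μ (ax q.1) q.2) := by
  unfold osc ax
  apply osc_meas μ (fun (q : ℝ × ℝ) (z : ℝ) => Complex.exp (Complex.I * (q.1 * z^2 : ℝ)) * Complex.exp (Complex.I * (q.2 * z : ℝ)))
  simp only [Function.uncurry_def]; fun_prop

lemma xi_int {κ : Measure ℝ} [IsFiniteMeasure κ] {C : ℝ≥0∞} (hC : C ≠ ⊤) {s : ℝ} (hs : s ≤ 1) (hF : Frost κ C s) {θ : ℝ} (hθ0 : 0 ≤ θ) (hθ : θ ≤ (1-s)/4) :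
    ∃ D : ℝ≥0∞, D ≠ ⊤ ∧ ∀ δ : ℝ, 0 < δ → δ ≤ 1 → 
     ∫⁻ ξ, gs (δ*ξ) * (‖osc κ (fun _ => 1) ξ‖ₑ^2 * ENNReal.ofReal ((1+|ξ|)^(-θ))) ≤ D * ENNReal.ofReal (δ^(s-1+4/5*θ)) := by
  have gm := gs_meas
  have hmo := osc_measurable κ (measurable_const (a := (1:ℂ)))
  set L := ENNReal.ofReal (√(2*Real.pi)) * (ENNReal.ofReal 1^2 * (κ univ * (c0 * C))) with hL
  have hLt : L ≠ ⊤ := by have := c0_ne_top; rw [hL]; finiteness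
  have hfr : ∀ Q : ℝ, 0 < Q → ∫⁻ η, ‖osc κ (fun _ => 1) η‖ₑ^2 * gs (η/Q) ≤ L * ENNReal.ofReal (Q^(1-s)) := fun Q hQ => 
    osc_frost hs hF (a := fun _ => 1) measurable_const (c := 1) (ae_of_all _ fun z => by simp) hQ
  clear_value L
  refine ⟨ENNReal.ofReal (Real.exp (1^2/2)) * L + L, by finiteness, ?_⟩
  intro δ hδ hδ1
  set Q := δ^(-(4/5):ℝ) with hQ
  have hQ0 : 0 < Q := by positivity
  calc _ ≤ ∫⁻ ξ, (ENNReal.ofReal (Real.exp (1^2/2)) * (‖osc κ (fun _ => 1) ξ‖ₑ^2 * gs (ξ/Q)) + ENNReal.ofReal (Q^(-θ)) * (‖osc κ (fun _ => 1) ξ‖ₑ^2 * gs (ξ/(1/δ)))) := by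
        refine lintegral_mono fun ξ => ?_
        rw [show ξ/(1/δ) = δ*ξ by field_simp]
        by_cases h : |ξ| ≤ Q
        · refine le_trans ?_ le_self_add
          have h1 : 1 ≤ ENNReal.ofReal (Real.exp (1^2/2)) * gs (ξ/Q) := by
            apply gs_lower; rw [abs_div, abs_of_pos hQ0, div_le_one hQ0]; exact h
          have h2 : ENNReal.ofReal ((1+|ξ|)^(-θ)) ≤ 1 := by
            rw [ENNReal.ofReal_le_one]
            exact Real.rpow_le_one_of_one_le_of_nonpos (by linarith [abs_nonneg ξ]) (by linarith)
          calc _ ≤ 1 * (‖osc κ (fun _ => 1) ξ‖ₑ^2 * 1) := mul_le_mul' (gs_le_one _) (mul_le_mul_right h2 _)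
            _ ≤ (ENNReal.ofReal (Real.exp (1^2/2)) * gs (ξ/Q)) * (‖osc κ (fun _ => 1) ξ‖ₑ^2 * 1) := mul_le_mul_left h1 _
            _ = _ := by ring
        · push Not at h
          refine le_trans ?_ le_add_self
          have h2 : ENNReal.ofReal ((1+|ξ|)^(-θ)) ≤ ENNReal.ofReal (Q^(-θ)) := by
            apply ENNReal.ofReal_le_ofReal
            exact Real.rpow_le_rpow_of_nonpos hQ0 (by linarith) (by linarith)
          calc _ ≤ gs (δ*ξ) * (‖osc κ (fun _ => 1) ξ‖ₑ^2 * ENNReal.ofReal (Q^(-θ))) := mul_le_mul_right (mul_le_mul_right h2 _) _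
            _ = _ := by ring
    _ ≤ ENNReal.ofReal (Real.exp (1^2/2)) * (L * ENNReal.ofReal (Q^(1-s))) + ENNReal.ofReal (Q^(-θ)) * (L * ENNReal.ofReal ((1/δ)^(1-s))) := by
        rw [lintegral_add_left (by fun_prop), lintegral_const_mul _ (by fun_prop), lintegral_const_mul _ (by fun_prop)]
        exact add_le_add (mul_le_mul_right (hfr Q hQ0) _) (mul_le_mul_right (hfr (1/δ) (by positivity)) _)
    _ ≤ ENNReal.ofReal (Real.exp (1^2/2)) * (L * ENNReal.ofReal (δ^(s-1+4/5*θ))) + (L * ENNReal.ofReal (δ^(s-1+4/5*θ))) := by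
        apply add_le_add
        · refine mul_le_mul_right (mul_le_mul_right (ENNReal.ofReal_le_ofReal ?_) _) _
          rw [hQ, ← Real.rpow_mul hδ.le]
          exact Real.rpow_le_rpow_of_exponent_ge hδ hδ1 (by linarith)
        · rw [mul_left_comm, ← ENNReal.ofReal_mul (by positivity)]
          refine le_of_eq ?_
          congr 2
          rw [hQ, ← Real.rpow_mul hδ.le, one_div, Real.inv_rpow hδ.le, ← Real.rpow_neg hδ.le, ← Real.rpow_add hδ]
          congr 1; ring
    _ = _ := by ring

set_option maxHeartbeats 1000000 in
lemma key_good {μ κ : Measure ℝ} [IsFiniteMeasure μ] [IsFiniteMeasure κ] {C C' : ℝ≥0∞} (hC : C ≠ ⊤) (hC' : C' ≠ ⊤) {s : ℝ} (hs0 : 1/2 < s) (hs : s ≤ 1) (hF : Frost μ C s) (hF' : Frost κ C' s)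
    {B : ℝ} (hB : 1 ≤ B) (hz : ∀ᵐ z ∂μ, |z| ≤ B) {β θ : ℝ} (hβ : 0 ≤ β) (hβ1 : β < 2*(s-1/2)) (hθe : θ = 2*(s-1/2) - β) (hθ : θ ≤ (1-s)/4) :
    ∃ D : ℝ≥0∞, D ≠ ⊤ ∧ ∀ T K δ : ℝ, 1 ≤ T → 1 ≤ K → 0 < δ → δ ≤ 1 →
      ∫⁻ w in Good μ T K β, (((μ.prod μ).prod κ).prod ((μ.prod μ).prod κ)) {x | |FF w.1 x.1 - FF w.1 x.2| ≤ δ ∧ |FF w.2 x.1 - FF w.2 x.2| ≤ δ} ∂((μ.prod μ).prod (μ.prod μ)) 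
        ≤ D * ENNReal.ofReal (T*K*δ^(1+s+4/5*θ)) := by
  obtain ⟨D1, hD1, h1⟩ := star hC hs0 hs hF hB hz hβ hβ1
  obtain ⟨D2, hD2, h2⟩ := xi_int hC' hs hF' (by linarith) hθ
  refine ⟨ENNReal.ofReal (Real.exp (5/2)) * D1 * D2, by clear h1 h2; finiteness, ?_⟩
  intro T K δ hT hK hδ hδ1
  have gm := gs_meas
  have hmo := osc_measurable κ (measurable_const (a := (1:ℂ)))
  have hax := oscax_meas μ
  have hm0 : Measurable (fun q : (ℝ × ((ℝ × ℝ) × (ℝ × ℝ))) × ℝ => ‖osc μ (ax q.1.1) (2*q.2*(q.1.2.2.1-q.1.2.1.1) - 2*q.1.1*q.1.2.1.1)‖ₑ^2 * ‖osc μ (ax q.1.1) (2*q.2*(q.1.2.2.2-q.1.2.1.2) - 2*q.1.1*q.1.2.1.2)‖ₑ^2) := by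
    have a1 : Measurable (fun q : (ℝ × ((ℝ × ℝ) × (ℝ × ℝ))) × ℝ => (q.1.1, 2*q.2*(q.1.2.2.1-q.1.2.1.1) - 2*q.1.1*q.1.2.1.1)) := by fun_prop
    have a2 : Measurable (fun q : (ℝ × ((ℝ × ℝ) × (ℝ × ℝ))) × ℝ => (q.1.1, 2*q.2*(q.1.2.2.2-q.1.2.1.2) - 2*q.1.1*q.1.2.1.2)) := by fun_prop
    exact ((hax.comp a1).enorm.pow_const 2).mul ((hax.comp a2).enorm.pow_const 2)
  have hm1 := hm0.lintegral_prod_right' (ν := (volume : Measure ℝ))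
  simp only at hm1
  obtain ⟨U, hU⟩ : ∃ U : ℝ → (ℝ × ℝ) × (ℝ × ℝ) → ℝ≥0∞, ∀ ξ w, U ξ w = ∫⁻ ζ, ‖osc μ (ax ξ) (2*ζ*(w.2.1-w.1.1) - 2*ξ*w.1.1)‖ₑ^2 * ‖osc μ (ax ξ) (2*ζ*(w.2.2-w.1.2) - 2*ξ*w.1.2)‖ₑ^2 := ⟨_, fun _ _ => rfl⟩
  have hUm : Measurable (Function.uncurry U) := by
    have e : Function.uncurry U = fun q => U q.1 q.2 := rfl
    rw [e]; simp_rw [hU]; exact hm1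
  have hJ : ∀ w : (ℝ × ℝ) × (ℝ × ℝ), (((μ.prod μ).prod κ).prod ((μ.prod μ).prod κ)) {x | |FF w.1 x.1 - FF w.1 x.2| ≤ δ ∧ |FF w.2 x.1 - FF w.2 x.2| ≤ δ} ≤ ENNReal.ofReal (Real.exp (5/2)*δ^2) * (∫⁻ ξ, gs (δ*ξ) * (‖osc κ (fun _ => 1) ξ‖ₑ^2 * U ξ w)) := by
    intro w; simp_rw [hU]; exact J_bound μ κ w.1 w.2 hδ
  have h1' : ∀ ξ, ∫⁻ w in Good μ T K β, U ξ w ∂((μ.prod μ).prod (μ.prod μ)) ≤ D1 * ENNReal.ofReal (T*K) * ENNReal.ofReal ((1+|ξ|)^(β-2*(s-1/2))) := by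
    intro ξ; simp_rw [hU]; exact h1 T K ξ hT hK
  clear hU hm1 hm0
  have hUm1 : ∀ ξ, Measurable (U ξ) := fun ξ => hUm.comp measurable_prodMk_left
  calc _ ≤ ∫⁻ w in Good μ T K β, ENNReal.ofReal (Real.exp (5/2)*δ^2) * (∫⁻ ξ, gs (δ*ξ) * (‖osc κ (fun _ => 1) ξ‖ₑ^2 * U ξ w)) ∂((μ.prod μ).prod (μ.prod μ)) := 
        lintegral_mono fun w => hJ w
    _ = ENNReal.ofReal (Real.exp (5/2)*δ^2) * ∫⁻ ξ, gs (δ*ξ) * (‖osc κ (fun _ => 1) ξ‖ₑ^2 * ∫⁻ w in Good μ T K β, U ξ w ∂((μ.prod μ).prod (μ.prod μ))) := by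
        rw [lintegral_const_mul' _ _ (by finiteness)]
        congr 1
        rw [lintegral_lintegral_swap]
        · refine lintegral_congr fun ξ => ?_
          rw [lintegral_const_mul _ (by have := hUm1 ξ; fun_prop), lintegral_const_mul _ (hUm1 ξ)]
        · have hU' : Measurable (fun q : ((ℝ × ℝ) × (ℝ × ℝ)) × ℝ => U q.2 q.1) := hUm.comp measurable_swap
          apply Measurable.aemeasurable
          simp only [Function.uncurry_def]
          fun_prop
    _ ≤ ENNReal.ofReal (Real.exp (5/2)*δ^2) * ∫⁻ ξ, gs (δ*ξ) * (‖osc κ (fun _ => 1) ξ‖ₑ^2 * (D1 * ENNReal.ofReal (T*K) * ENNReal.ofReal ((1+|ξ|)^(β-2*(s-1/2))))) := 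
        mul_le_mul_right (lintegral_mono fun ξ => mul_le_mul_right (mul_le_mul_right (h1' ξ) _) _) _
    _ = ENNReal.ofReal (Real.exp (5/2)*δ^2) * (D1 * ENNReal.ofReal (T*K) * ∫⁻ ξ, gs (δ*ξ) * (‖osc κ (fun _ => 1) ξ‖ₑ^2 * ENNReal.ofReal ((1+|ξ|)^(-θ)))) := by
        congr 1
        rw [← lintegral_const_mul' _ _ (by clear h1 h2; finiteness)]
        refine lintegral_congr fun ξ => ?_
        rw [show β-2*(s-1/2) = -θ by rw [hθe]; ring]; ring
    _ ≤ ENNReal.ofReal (Real.exp (5/2)*δ^2) * (D1 * ENNReal.ofReal (T*K) * (D2 * ENNReal.ofReal (δ^(s-1+4/5*θ)))) := 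
        mul_le_mul_right (mul_le_mul_right (h2 δ hδ hδ1) _) _
    _ = _ := by
        have hTK : 0 ≤ T*K := by nlinarith
        rw [show 1+s+4/5*θ = 2 + (s-1+4/5*θ) by ring, Real.rpow_add hδ 2 (s-1+4/5*θ), ENNReal.ofReal_mul hTK, ENNReal.ofReal_mul (by positivity : 0 ≤ δ^(2:ℝ)), ENNReal.ofReal_mul (by positivity), Real.rpow_two]
        ring

lemma key {μ κ : Measure ℝ} [IsFiniteMeasure μ] [IsFiniteMeasure κ] {C C' : ℝ≥0∞} (hC : C ≠ ⊤) (hC' : C' ≠ ⊤) {s : ℝ} (hs0 : 1/2 < s) (hs : s ≤ 1) (hF : Frost μ C s) (hF' : Frost κ C' s)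
    {B : ℝ} (hB : 1 ≤ B) (hz : ∀ᵐ z ∂μ, |z| ≤ B) {β θ : ℝ} (hβ : 0 < β) (hβ1 : β < 2*(s-1/2)) (hθe : θ = 2*(s-1/2) - β) (hθ : θ ≤ (1-s)/4) :
    ∃ D : ℝ≥0∞, D ≠ ⊤ ∧ ∀ T K δ : ℝ, 1 ≤ T → 1 ≤ K → 0 < δ → δ ≤ 1 → ∀ I : Finset ℤ,
      (((μ.prod μ).prod ((μ.prod μ).prod κ)) {x | ⌊FF x.1 x.2/δ⌋ ∈ I})^2 
        ≤ D * (ENNReal.ofReal (T^(-s)) + ENNReal.ofReal (T * (T/K)^(s-1/2)) + (I.card : ℝ≥0∞) * ENNReal.ofReal (√(T*K*δ^(1+s+4/5*θ)))) := by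
  obtain ⟨D1, hD1, h1⟩ := key_good hC hC' hs0 hs hF hF' hB hz hβ.le hβ1 hθe hθ
  obtain ⟨D2, hD2, h2⟩ := bad_total hC hs0 hs hF hB hz hβ
  set P := μ.prod μ with hP
  set Ω := P.prod κ with hΩ
  set E := (P.prod P) univ * D1 + 1 with hE
  have hEt : E ≠ ⊤ := by rw [hE]; clear h1 h2; finiteness
  clear_value E
  refine ⟨Ω univ * (Ω univ * D2 + E), by clear h1 h2; finiteness, ?_⟩
  intro T K δ hT hK hδ hδ1 I
  set A : Set ((ℝ × ℝ) × ((ℝ × ℝ) × ℝ)) := {x | ⌊FF x.1 x.2/δ⌋ ∈ I} with hA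
  have hAm : MeasurableSet A := by
    have := FF_meas
    have h : Measurable (fun x : (ℝ × ℝ) × ((ℝ × ℝ) × ℝ) => ⌊FF x.1 x.2/δ⌋) := (this.div_const δ).floor
    exact h (I.measurableSet)
  refine (double_cs P Ω hAm).trans ?_
  rw [mul_assoc]
  refine mul_le_mul_right ?_ _
  set h : (ℝ × ℝ) × (ℝ × ℝ) → ℝ≥0∞ := fun w => Ω {ω | (w.1,ω) ∈ A ∧ (w.2,ω) ∈ A} with hh
  have hhm : Measurable h := by
    have m1 : Measurable (fun q : ((ℝ × ℝ) × (ℝ × ℝ)) × ((ℝ × ℝ) × ℝ) => (q.1.1,q.2)) := by fun_prop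
    have m2 : Measurable (fun q : ((ℝ × ℝ) × (ℝ × ℝ)) × ((ℝ × ℝ) × ℝ) => (q.1.2,q.2)) := by fun_prop
    exact measurable_measure_prodMk_left ((m1 hAm).inter (m2 hAm))
  have hGm := Good_meas μ T K β
  rw [← lintegral_add_compl _ hGm]
  have b1 : ∫⁻ w in (Good μ T K β)ᶜ, h w ∂(P.prod P) ≤ Ω univ * D2 * (ENNReal.ofReal (T^(-s)) + ENNReal.ofReal (T * (T/K)^(s-1/2))) := by
    calc _ ≤ ∫⁻ w in (Good μ T K β)ᶜ, Ω univ ∂(P.prod P) := lintegral_mono fun w => measure_mono (subset_univ _)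
      _ = Ω univ * (P.prod P) (Good μ T K β)ᶜ := by rw [setLIntegral_const]
      _ ≤ Ω univ * (D2 * (ENNReal.ofReal (T^(-s)) + ENNReal.ofReal (T * (T/K)^(s-1/2)))) := mul_le_mul_right (h2 T K hT (by linarith)) _
      _ = _ := by ring
  have b2 : ∫⁻ w in Good μ T K β, h w ∂(P.prod P) ≤ E * ((I.card : ℝ≥0∞) * ENNReal.ofReal (√(T*K*δ^(1+s+4/5*θ)))) := by
    rw [← ENNReal.pow_le_pow_left_iff (n := 2) (by norm_num)]
    calc _ ≤ ((P.prod P).restrict (Good μ T K β)) univ * ∫⁻ w in Good μ T K β, h w^2 ∂(P.prod P) := cs_one _ h hhm.aemeasurable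
      _ ≤ (P.prod P) univ * ∫⁻ w in Good μ T K β, (I.card:ℝ≥0∞)^2 * (Ω.prod Ω) {x | |FF w.1 x.1 - FF w.1 x.2| ≤ δ ∧ |FF w.2 x.1 - FF w.2 x.2| ≤ δ} ∂(P.prod P) := by
          apply mul_le_mul'
          · exact Measure.restrict_apply_le _ _
          · exact lintegral_mono fun w => count_cs Ω (FF_meas' w.1) (FF_meas' w.2) hδ I
      _ = (P.prod P) univ * ((I.card:ℝ≥0∞)^2 * ∫⁻ w in Good μ T K β, (Ω.prod Ω) {x | |FF w.1 x.1 - FF w.1 x.2| ≤ δ ∧ |FF w.2 x.1 - FF w.2 x.2| ≤ δ} ∂(P.prod P)) := by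
          rw [lintegral_const_mul' _ _ (by finiteness)]
      _ ≤ (P.prod P) univ * ((I.card:ℝ≥0∞)^2 * (D1 * ENNReal.ofReal (T*K*δ^(1+s+4/5*θ)))) := 
          mul_le_mul_right (mul_le_mul_right (h1 T K δ hT hK hδ hδ1) _) _
      _ = ((P.prod P) univ * D1) * ((I.card:ℝ≥0∞)^2 * (ENNReal.ofReal (√(T*K*δ^(1+s+4/5*θ))))^2) := by
          rw [← ENNReal.ofReal_pow (by positivity), Real.sq_sqrt (by have : 0 ≤ T*K := by nlinarith
                                                                     positivity)]; ring
      _ ≤ E^2 * ((I.card:ℝ≥0∞)^2 * (ENNReal.ofReal (√(T*K*δ^(1+s+4/5*θ))))^2) := by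
          refine mul_le_mul_left ?_ _
          have g1 : (P.prod P) univ * D1 ≤ E := by rw [hE]; exact le_self_add
          have g2 : 1 ≤ E := by rw [hE]; exact le_add_self
          calc _ ≤ E := g1
            _ = E*1 := by rw [mul_one]
            _ ≤ E*E := mul_le_mul_right g2 _
            _ = E^2 := by rw [sq]
      _ = _ := by ring
  refine (add_le_add b2 b1).trans ?_
  generalize ENNReal.ofReal (T^(-s)) + ENNReal.ofReal (T * (T/K)^(s-1/2)) = X
  generalize (I.card : ℝ≥0∞) * ENNReal.ofReal (√(T*K*δ^(1+s+4/5*θ))) = Y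
  rw [add_mul, mul_add, mul_add, add_comm]
  exact add_le_add le_self_add le_add_self

lemma key_spec {μ κ : Measure ℝ} [IsFiniteMeasure μ] [IsFiniteMeasure κ] {C C' : ℝ≥0∞} (hC : C ≠ ⊤) (hC' : C' ≠ ⊤) {ε : ℝ} (hε : 0 < ε) (hε1 : ε ≤ 55/1000) (hF : Frost μ C (1/2+ε)) (hF' : Frost κ C' (1/2+ε))
    {B : ℝ} (hB : 1 ≤ B) (hz : ∀ᵐ z ∂μ, |z| ≤ B) :
    ∃ D : ℝ≥0∞, D ≠ ⊤ ∧ ∃ γ : ℝ, 0 < γ ∧ ∀ δ : ℝ, 0 < δ → δ ≤ 1 → ∀ (I : Finset ℤ) (M : ℝ≥0∞), (I.card : ℝ≥0∞) ≤ M * ENNReal.ofReal (δ^(-(3/4+105/100*ε))) →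
      (((μ.prod μ).prod ((μ.prod μ).prod κ)) {x | ⌊FF x.1 x.2/δ⌋ ∈ I})^2 
        ≤ D * (2 + M) * ENNReal.ofReal (δ^γ) := by
  obtain ⟨D, hD, h⟩ := key hC hC' (s := 1/2+ε) (by linarith) (by linarith) hF hF' hB hz (β := ε/10) (θ := 19/10*ε) (by linarith) (by linarith) (by ring) (by linarith)
  set k := ε/(20*(2+2/ε)) with hk
  have hk0 : 0 < k := by positivity
  have hk1 : k ≤ ε/40 := by
    rw [hk]; apply div_le_div_of_nonneg_left hε.le (by norm_num)
    have : 0 < 2/ε := by positivity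
    linarith
  have hk2 : k*(2+2/ε) = ε/20 := by rw [hk]; field_simp
  clear_value k
  refine ⟨D, hD, k/2, by positivity, ?_⟩
  intro δ hδ hδ1 I M hI
  have hT : 1 ≤ δ^(-k) := Real.one_le_rpow_of_pos_of_le_one_of_nonpos hδ hδ1 (by linarith)
  have hK : 1 ≤ δ^(-(k*(1+2/ε))) := Real.one_le_rpow_of_pos_of_le_one_of_nonpos hδ hδ1 (by
    have : 0 ≤ k*(1+2/ε) := by positivity
    linarith)
  refine (h _ _ δ hT hK hδ hδ1 I).trans ?_
  rw [mul_assoc D (2+M)]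
  refine mul_le_mul_right ?_ _
  have mono : ∀ a, k/2 ≤ a → δ^a ≤ δ^(k/2) := fun a ha => Real.rpow_le_rpow_of_exponent_ge hδ hδ1 ha
  have e1 : ENNReal.ofReal ((δ^(-k))^(-(1/2+ε))) ≤ ENNReal.ofReal (δ^(k/2)) := by
    apply ENNReal.ofReal_le_ofReal
    rw [← Real.rpow_mul hδ.le]
    apply mono; nlinarith
  have e2 : ENNReal.ofReal (δ^(-k) * (δ^(-k)/δ^(-(k*(1+2/ε))))^(1/2+ε-1/2)) ≤ ENNReal.ofReal (δ^(k/2)) := by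
    apply ENNReal.ofReal_le_ofReal
    rw [← Real.rpow_sub hδ, ← Real.rpow_mul hδ.le, ← Real.rpow_add hδ]
    apply mono
    have : -k + (-k - -(k*(1+2/ε)))*(1/2+ε-1/2) = k := by field_simp; ring
    rw [this]; linarith
  have e3 : (I.card : ℝ≥0∞) * ENNReal.ofReal (√(δ^(-k) * δ^(-(k*(1+2/ε))) * δ^(1+(1/2+ε)+4/5*(19/10*ε)))) ≤ M * ENNReal.ofReal (δ^(k/2)) := by
    refine (mul_le_mul_left hI _).trans ?_
    rw [mul_assoc, ← ENNReal.ofReal_mul (by positivity)]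
    refine mul_le_mul_right (ENNReal.ofReal_le_ofReal ?_) _
    rw [← Real.rpow_add hδ, ← Real.rpow_add hδ, Real.sqrt_eq_rpow, ← Real.rpow_mul hδ.le, ← Real.rpow_add hδ]
    apply mono
    have : -k + -(k*(1+2/ε)) = -(ε/20) := by rw [← hk2]; ring
    rw [this]; linarith
  calc _ ≤ ENNReal.ofReal (δ^(k/2)) + ENNReal.ofReal (δ^(k/2)) + M * ENNReal.ofReal (δ^(k/2)) := add_le_add (add_le_add e1 e2) e3
    _ = _ := by ring

def cell (δ : ℝ) (n : ℤ) : Set ℝ := {x | ⌊x/δ⌋ = n}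

lemma cell_meas (δ : ℝ) (n : ℤ) : MeasurableSet (cell δ n) := by
  have : Measurable (fun x : ℝ => ⌊x/δ⌋) := (measurable_id.div_const δ).floor
  exact this (measurableSet_singleton n)

lemma pigeon {Λ : Measure ℝ} [IsFiniteMeasure Λ] (h0 : Λ univ ≠ 0) {τ γ : ℝ} (hτ : 0 ≤ τ) (hγ : 0 < γ) {D : ℝ≥0∞} (hD : D ≠ ⊤)
    (h : ∀ δ : ℝ, 0 < δ → δ ≤ 1 → ∀ I : Finset ℤ, (I.card : ℝ≥0∞) ≤ Λ univ * ENNReal.ofReal (δ^(-τ)) → (Λ {x | ⌊x/δ⌋ ∈ I})^2 ≤ D * ENNReal.ofReal (δ^γ)) :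
    ∃ η : Measure ℝ, η ≤ Λ ∧ η univ ≠ 0 ∧ ∃ C : ℝ≥0∞, C ≠ ⊤ ∧ Frost η C τ := by
  have hcd : ∀ δ, Pairwise (Function.onFun Disjoint (cell δ)) := by
    intro δ n m hnm
    rw [Function.onFun, Set.disjoint_left]
    intro x hx hy; exact hnm (hx.symm.trans hy)
  set S : ℕ → Set ℝ := fun j => {x | ENNReal.ofReal (((1/2:ℝ)^j)^τ) ≤ Λ (cell ((1/2:ℝ)^j) ⌊x/(1/2:ℝ)^j⌋)} with hS
  set q : ℝ := (1/2)^(γ/2) with hq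
  have hq0 : 0 < q := by positivity
  have hq1 : q < 1 := Real.rpow_lt_one (by norm_num) (by norm_num) (by positivity)
  have hqp : ∀ j : ℕ, ((1/2:ℝ)^j)^γ = (q^j)^2 := by
    intro j
    rw [hq, ← Real.rpow_natCast, ← Real.rpow_natCast (_ ^ (γ/2)), ← Real.rpow_natCast ((_ ^ (γ/2))^_), ← Real.rpow_mul (by positivity), ← Real.rpow_mul (by positivity), ← Real.rpow_mul (by positivity)]
    congr 1; push_cast; ring
  have hSj : ∀ j, Λ (S j) ≤ (D+1) * (ENNReal.ofReal q)^j := by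
    intro j
    set δ : ℝ := (1/2)^j with hδ
    have hδ0 : 0 < δ := by positivity
    have hδ1 : δ ≤ 1 := pow_le_one₀ (by norm_num) (by norm_num)
    have hpos : ENNReal.ofReal (δ^τ) ≠ 0 := by
      rw [ne_eq, ENNReal.ofReal_eq_zero, not_le]; positivity
    have hfin : Set.Finite {n : ℤ | ENNReal.ofReal (δ^τ) ≤ Λ (cell δ n)} := by
      refine Measure.finite_const_le_meas_of_disjoint_iUnion Λ (pos_iff_ne_zero.2 hpos) (cell_meas δ) (hcd δ) (by finiteness)
    set I := hfin.toFinset with hI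
    have hSI : S j = {x | ⌊x/δ⌋ ∈ I} := by ext x; simp [hS, hI, hδ]
    have hcard : (I.card : ℝ≥0∞) ≤ Λ univ * ENNReal.ofReal (δ^(-τ)) := by
      have a : (I.card : ℝ≥0∞) * ENNReal.ofReal (δ^τ) ≤ Λ univ := by
        calc _ = ∑ n ∈ I, ENNReal.ofReal (δ^τ) := by rw [Finset.sum_const, nsmul_eq_mul]
          _ ≤ ∑ n ∈ I, Λ (cell δ n) := Finset.sum_le_sum fun n hn => by simpa [hI] using hn
          _ = Λ (⋃ n ∈ I, cell δ n) := (measure_biUnion_finset (fun a _ b _ hab => hcd δ hab) (fun n _ => cell_meas δ n)).symm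
          _ ≤ _ := measure_mono (subset_univ _)
      calc (I.card : ℝ≥0∞) = (I.card : ℝ≥0∞) * (ENNReal.ofReal (δ^τ) * ENNReal.ofReal (δ^(-τ))) := by
            rw [← ENNReal.ofReal_mul (by positivity), ← Real.rpow_add hδ0]; simp
        _ = ((I.card : ℝ≥0∞) * ENNReal.ofReal (δ^τ)) * ENNReal.ofReal (δ^(-τ)) := by ring
        _ ≤ _ := mul_le_mul_left a _
    have := h δ hδ0 hδ1 I hcard
    rw [← hSI, hqp] at this
    rw [← ENNReal.pow_le_pow_left_iff (n := 2) (by norm_num)]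
    refine this.trans ?_
    rw [ENNReal.ofReal_pow (by positivity), ENNReal.ofReal_pow (by positivity), mul_pow]
    refine mul_le_mul_left ?_ _
    calc D ≤ D+1 := le_self_add
      _ = (D+1)*1 := by rw [mul_one]
      _ ≤ (D+1)*(D+1) := mul_le_mul_right le_add_self _
      _ = _ := by rw [sq]
  have hsum : ∑' j, Λ (S j) ≠ ⊤ := by
    refine ne_top_of_le_ne_top ?_ (ENNReal.tsum_le_tsum hSj)
    rw [ENNReal.tsum_mul_left, ENNReal.tsum_geometric]
    refine ENNReal.mul_ne_top (by finiteness) (ENNReal.inv_ne_top.2 ?_)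
    rw [ne_eq, tsub_eq_zero_iff_le, not_le, ← ENNReal.ofReal_one]
    exact (ENNReal.ofReal_lt_ofReal_iff (by norm_num)).2 hq1
  have htend := ENNReal.tendsto_sum_nat_add _ hsum
  obtain ⟨j0, hj0⟩ := (htend.eventually_lt_const (pos_iff_ne_zero.2 h0)).exists
  set U := ⋃ k, S (k+j0) with hU
  have hUlt : Λ U < Λ univ := lt_of_le_of_lt (measure_iUnion_le _) hj0
  have hSm : ∀ j, MeasurableSet (S j) := by
    intro j
    have h1 : Measurable (fun x : ℝ => ⌊x/(1/2:ℝ)^j⌋) := (measurable_id.div_const _).floor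
    have h2 : Measurable (fun n : ℤ => Λ (cell ((1/2:ℝ)^j) n)) := measurable_from_top
    exact measurableSet_le measurable_const (h2.comp h1)
  have hUm : MeasurableSet U := MeasurableSet.iUnion fun k => hSm _
  refine ⟨Λ.restrict Uᶜ, Measure.restrict_le_self, ?_, Λ univ * ENNReal.ofReal (((1/2:ℝ)^j0)^(-τ)) + 3 * ENNReal.ofReal (2^τ), by finiteness, ?_⟩
  · rw [Measure.restrict_apply_univ]
    intro h
    have := measure_univ_le_add_compl (μ := Λ) U
    rw [h, add_zero] at this
    exact absurd hUlt (not_lt.2 this)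
  intro x r hr
  by_cases hr0 : r < (1/2)^j0
  · refine le_trans ?_ (mul_le_mul_left le_add_self _)
    obtain ⟨j, hj1, hj2⟩ := exists_nat_pow_near_of_lt_one hr (hr0.le.trans (pow_le_one₀ (by norm_num) (by norm_num))) (y := (1/2:ℝ)) (by norm_num) (by norm_num)
    have hjj : j0 ≤ j := by
      have := (pow_lt_pow_iff_right_of_lt_one₀ (by norm_num : (0:ℝ) < 1/2) (by norm_num)).1 (hj1.trans hr0)
      omega
    have hSjU : S j ⊆ U := by
      have : S j = S ((j-j0)+j0) := by congr 1; omega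
      rw [this]; exact subset_iUnion (fun k => S (k+j0)) (j-j0)
    set δ : ℝ := (1/2)^j with hδ
    have hδ0 : 0 < δ := by positivity
    have hcell : ∀ n, (Λ.restrict Uᶜ) (cell δ n) ≤ ENNReal.ofReal (δ^τ) := by
      intro n
      by_cases hh : ENNReal.ofReal (δ^τ) ≤ Λ (cell δ n)
      · rw [Measure.restrict_apply (cell_meas _ _)]
        have : cell δ n ∩ Uᶜ = ∅ := by
          rw [← Set.sdiff_eq, Set.sdiff_eq_empty]
          refine Subset.trans ?_ hSjU
          intro y hy
          have hy' : ⌊y/δ⌋ = n := hy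
          show ENNReal.ofReal (δ^τ) ≤ Λ (cell δ ⌊y/δ⌋)
          rw [hy']; exact hh
        rw [this]; simp
      · push Not at hh
        exact (Measure.restrict_apply_le _ _).trans hh.le
    set n := ⌊(x-r)/δ⌋ with hn
    have hsub : Icc (x-r) (x+r) ⊆ cell δ n ∪ cell δ (n+1) ∪ cell δ (n+2) := by
      intro y hy
      have a1 : n ≤ ⌊y/δ⌋ := Int.floor_le_floor (div_le_div_of_nonneg_right hy.1 hδ0.le)
      have a2 : ⌊y/δ⌋ < n+3 := by
        rw [Int.floor_lt]
        have b1 : (x-r)/δ < n+1 := Int.lt_floor_add_one _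
        have b2 : y/δ ≤ (x-r)/δ + 2 := by
          rw [div_add' _ _ _ hδ0.ne']; apply div_le_div_of_nonneg_right _ hδ0.le
          linarith [hy.2]
        push_cast; linarith
      simp only [cell, mem_union, Set.mem_ofPred_eq]
      omega
    calc (Λ.restrict Uᶜ) (Icc (x-r) (x+r)) ≤ ENNReal.ofReal (δ^τ) + ENNReal.ofReal (δ^τ) + ENNReal.ofReal (δ^τ) := by
          refine (measure_mono hsub).trans ((measure_union_le _ _).trans (add_le_add ((measure_union_le _ _).trans (add_le_add ?_ ?_)) ?_)) <;> apply hcell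
      _ = 3 * ENNReal.ofReal (δ^τ) := by ring
      _ ≤ 3 * ENNReal.ofReal (2^τ * r^τ) := by
          refine mul_le_mul_right (ENNReal.ofReal_le_ofReal ?_) _
          rw [← Real.mul_rpow (by norm_num) hr.le]
          apply Real.rpow_le_rpow hδ0.le _ hτ
          rw [pow_succ] at hj1; linarith
      _ = _ := by rw [ENNReal.ofReal_mul (by positivity), mul_assoc]
  · push Not at hr0
    refine le_trans ?_ (mul_le_mul_left le_self_add _)
    calc _ ≤ Λ univ * 1 := by rw [mul_one]; exact (Measure.restrict_apply_le _ _).trans (measure_mono (subset_univ _))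
      _ ≤ Λ univ * (ENNReal.ofReal (((1/2:ℝ)^j0)^(-τ)) * ENNReal.ofReal (r^τ)) := by
        refine mul_le_mul_right ?_ _
        rw [← ENNReal.ofReal_mul (by positivity), ENNReal.one_le_ofReal, Real.rpow_neg (by positivity), inv_mul_eq_div, one_le_div (by positivity)]
        exact Real.rpow_le_rpow (by positivity) hr0 hτ
      _ = _ := by ring

lemma ediam_pow_empty {s : ℝ} (hs : 0 < s) : Metric.ediam (∅ : Set ℝ) ^ s = 0 := by
  simp [hs]

noncomputable def hcont (s : ℝ) (hs : 0 < s) : OuterMeasure ℝ :=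
  OuterMeasure.ofFunction (fun S : Set ℝ => Metric.ediam S ^ s) (ediam_pow_empty hs)

lemma hcont_ne_zero {s : ℝ} (hs : 0 < s) {A : Set ℝ} (h : ENNReal.ofReal s < dimH A) : hcont s hs A ≠ 0 := by
  intro h0
  have h1 : μH[s] A = ⊤ := by
    have := hausdorffMeasure_of_lt_dimH (d := s.toNNReal) h
    rwa [Real.coe_toNNReal _ hs.le] at this
  have h2 : μH[s] A ≤ 1 := by
    rw [Measure.hausdorffMeasure_apply]
    refine iSup₂_le fun r hr => ?_
    rw [hcont, OuterMeasure.ofFunction_apply] at h0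
    have hlt : (⨅ (t : ℕ → Set ℝ) (_ : A ⊆ iUnion t), ∑' n, Metric.ediam (t n) ^ s) < min 1 (r^s) := by
      rw [h0]; exact lt_min (by norm_num) (ENNReal.rpow_pos_of_nonneg hr hs.le)
    simp only [iInf_lt_iff] at hlt
    obtain ⟨t, ht, hsum⟩ := hlt
    refine iInf_le_of_le t (iInf_le_of_le ht (iInf_le_of_le ?_ ?_))
    · intro n
      have : Metric.ediam (t n) ^ s ≤ r ^ s := (ENNReal.le_tsum n).trans (hsum.le.trans (min_le_right _ _))
      exact (ENNReal.rpow_le_rpow_iff hs).1 this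
    · refine le_trans (ENNReal.tsum_le_tsum fun n => ?_) (hsum.le.trans (min_le_left _ _))
      exact iSup_le fun _ => le_rfl
  rw [h1] at h2; simp at h2

lemma frostman_exists {s : ℝ} (hs : 0 < s) {A : Set ℝ} (hA : IsCompact A) (h : ENNReal.ofReal s < dimH A) :
    ∃ μ : Measure ℝ, IsFiniteMeasure μ ∧ μ univ ≠ 0 ∧ (∀ᵐ x ∂μ, x ∈ A) ∧ Frost μ (ENNReal.ofReal (3^s)) s := by
  set c := hcont s hs with hc
  have hc0 : c A ≠ 0 := hcont_ne_zero hs h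
  have hcA : c A ≠ ⊤ := by
    refine ne_top_of_le_ne_top ?_ (OuterMeasure.ofFunction_le A)
    exact ENNReal.rpow_ne_top_of_nonneg hs.le hA.isBounded.ediam_ne_top
  have hcS : ∀ S, c (A ∩ S) ≠ ⊤ := fun S => ne_top_of_le_ne_top hcA (c.mono inter_subset_left)
  set F : ℝ → ℝ := fun x => (c (A ∩ Iic x)).toReal with hFd
  have hmono : Monotone F := fun x y hxy => ENNReal.toReal_mono (hcS _) (c.mono (inter_subset_inter_right _ (Iic_subset_Iic.2 hxy)))
  have hinc : ∀ x y, x ≤ y → F y ≤ F x + (c (A ∩ Ioc x y)).toReal := by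
    intro x y hxy
    rw [hFd]
    simp only
    rw [← ENNReal.toReal_add (hcS _) (hcS _)]
    refine ENNReal.toReal_mono (ENNReal.add_ne_top.2 ⟨hcS _, hcS _⟩) ?_
    refine le_trans (c.mono ?_) (measure_union_le (μ := c) _ _)
    rw [← inter_union_distrib_left, Iic_union_Ioc_eq_Iic hxy]
  have hholder : ∀ x y, x ≤ y → F y ≤ F x + (y-x)^s := by
    intro x y hxy
    refine (hinc x y hxy).trans ?_
    have : c (A ∩ Ioc x y) ≤ ENNReal.ofReal ((y-x)^s) := by
      refine (c.mono inter_subset_right).trans ((OuterMeasure.ofFunction_le _).trans ?_)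
      rw [Real.ediam_Ioc, ENNReal.ofReal_rpow_of_nonneg (by linarith) hs.le]
    have h2 := ENNReal.toReal_mono (by finiteness) this
    rw [ENNReal.toReal_ofReal (Real.rpow_nonneg (by linarith) _)] at h2
    linarith
  have hrc : ∀ x, ContinuousWithinAt F (Ici x) x := by
    intro x
    have t1 : Tendsto (fun y => F x + (y-x)^s) (𝓝[Ici x] x) (𝓝 (F x)) := by
      have : ContinuousAt (fun y => F x + (y-x)^s) x := by
        refine continuousAt_const.add (ContinuousAt.rpow_const (by fun_prop) (Or.inr hs.le))
      have := this.tendsto.mono_left (nhdsWithin_le_nhds (s := Ici x))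
      simpa [Real.zero_rpow hs.ne'] using this
    refine tendsto_of_tendsto_of_tendsto_of_le_of_le' tendsto_const_nhds t1 ?_ ?_
    · filter_upwards [self_mem_nhdsWithin] with y hy; exact hmono hy
    · filter_upwards [self_mem_nhdsWithin] with y hy; exact hholder x y hy
  set f : StieltjesFunction ℝ := ⟨F, hmono, hrc⟩ with hf
  have hfI : ∀ x y, f.measure (Ioc x y) = ENNReal.ofReal (F y - F x) := fun x y => f.measure_Ioc x y
  have hnull : f.measure Aᶜ = 0 := by
    refine measure_null_of_locally_null _ fun x hx => ?_
    obtain ⟨ρ, hρ, hb⟩ := Metric.isOpen_iff.1 hA.isClosed.isOpen_compl x hx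
    refine ⟨Ioc (x-ρ/2) (x+ρ/2), mem_nhdsWithin_of_mem_nhds (Ioc_mem_nhds (by linarith) (by linarith)), ?_⟩
    rw [hfI, ENNReal.ofReal_eq_zero]
    have h1 := hinc (x-ρ/2) (x+ρ/2) (by linarith)
    have h2 : A ∩ Ioc (x-ρ/2) (x+ρ/2) = ∅ := by
      ext y; simp only [mem_inter_iff, mem_empty_iff_false, iff_false, not_and]
      intro hyA hy
      refine hb (?_ : y ∈ Metric.ball x ρ) hyA
      rw [Metric.mem_ball, Real.dist_eq, abs_lt]; constructor <;> linarith [hy.1, hy.2]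
    rw [h2] at h1
    simp at h1; linarith
  obtain ⟨R, hR⟩ := hA.isBounded.subset_closedBall 0
  have hAR : ∀ y ∈ A, |y| ≤ R := fun y hy => by simpa using hR hy
  have hfin : f.measure A ≠ ⊤ := hA.measure_ne_top
  refine ⟨f.measure.restrict A, ⟨by rw [Measure.restrict_apply_univ]; exact hfin.lt_top⟩, ?_, ae_restrict_mem hA.measurableSet, ?_⟩
  · rw [Measure.restrict_apply_univ]
    intro hz
    have h1 : f.measure (Ioc (-R-1) (|R|)) = 0 := by
      refine measure_mono_null (subset_univ _) ?_
      rw [← Set.union_compl_self A]; exact measure_union_null hz hnull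
    rw [hfI, ENNReal.ofReal_eq_zero] at h1
    have h2 : A ∩ Iic (|R|) = A := inter_eq_left.2 fun y hy => (le_abs_self y).trans ((hAR y hy).trans (le_abs_self R))
    have h3 : A ∩ Iic (-R-1) = ∅ := by
      ext y; simp only [mem_inter_iff, mem_empty_iff_false, iff_false, not_and]
      intro hyA hy
      have := (abs_le.1 (hAR y hyA)).1
      simp at hy; linarith
    rw [hFd] at h1; simp only [h2, h3] at h1
    have h4 : 0 < (c A).toReal := ENNReal.toReal_pos hc0 hcA
    simp at h1; linarith
  · intro x r hr
    refine (Measure.restrict_apply_le _ _).trans ?_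
    calc _ ≤ f.measure (Ioc (x-r-r) (x+r)) := measure_mono fun y hy => ⟨by linarith [hy.1], hy.2⟩
      _ = ENNReal.ofReal (F (x+r) - F (x-r-r)) := hfI _ _
      _ ≤ ENNReal.ofReal (3^s*r^s) := by
        apply ENNReal.ofReal_le_ofReal
        have := hholder (x-r-r) (x+r) (by linarith)
        rw [← Real.mul_rpow (by norm_num) hr.le, show 3*r = x+r-(x-r-r) by ring]; linarith
      _ = _ := ENNReal.ofReal_mul (by positivity)

def D1 (A : Set ℝ) : Set ℝ := (fun p : ℝ × ℝ => (p.1-p.2)^2) '' (A ×ˢ A)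

def DD (A : Set ℝ) : ℕ → Set ℝ
  | 0 => {0}
  | k+1 => (fun p : ℝ × ℝ => p.1+p.2) '' (D1 A ×ˢ DD A k)

lemma D1_compact {A : Set ℝ} (hA : IsCompact A) : IsCompact (D1 A) := (hA.prod hA).image (by fun_prop)

lemma DD_compact {A : Set ℝ} (hA : IsCompact A) (k : ℕ) : IsCompact (DD A k) := by
  induction k with
  | zero => exact isCompact_singleton
  | succ k ih => exact ((D1_compact hA).prod ih).image (by fun_prop)

lemma DD_succ {A : Set ℝ} {k : ℕ} {a b : ℝ} (ha : a ∈ D1 A) (hb : b ∈ DD A k) : a + b ∈ DD A (k+1) := ⟨(a,b), ⟨ha, hb⟩, rfl⟩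

lemma D1_mem {A : Set ℝ} {x y : ℝ} (hx : x ∈ A) (hy : y ∈ A) : (x-y)^2 ∈ D1 A := ⟨(x,y), ⟨hx, hy⟩, rfl⟩

lemma DD_add {A : Set ℝ} {k l : ℕ} {a b : ℝ} (ha : a ∈ DD A k) (hb : b ∈ DD A l) : a + b ∈ DD A (k+l) := by
  induction k generalizing a with
  | zero => 
    have : a = 0 := ha
    rw [this, zero_add, zero_add]; exact hb
  | succ k ih => 
    obtain ⟨⟨p,q⟩, ⟨hp, hq⟩, rfl⟩ := ha
    have := DD_succ hp (ih hq)
    simp only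
    rw [show k+1+l = k+l+1 by ring, add_assoc p q b]; exact this

lemma DD_dist {A : Set ℝ} (k : ℕ) : ∀ t ∈ DD A k, ∃ x y : Fin k → ℝ, (∀ i, x i ∈ A) ∧ (∀ i, y i ∈ A) ∧ t = ∑ i, (x i - y i)^2 := by
  induction k with
  | zero => intro t ht; exact ⟨Fin.elim0, Fin.elim0, fun i => i.elim0, fun i => i.elim0, by simpa using (show t = 0 from ht)⟩
  | succ k ih =>
    rintro _ ⟨⟨_,q⟩, ⟨⟨⟨x0,y0⟩, ⟨hx0, hy0⟩, rfl⟩, hq⟩, rfl⟩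
    obtain ⟨x, y, hx, hy, rfl⟩ := ih q hq
    refine ⟨Fin.cons x0 x, Fin.cons y0 y, ?_, ?_, ?_⟩
    · intro i; refine Fin.cases hx0 (fun j => ?_) i; simpa using hx j
    · intro i; refine Fin.cases hy0 (fun j => ?_) i; simpa using hy j
    · rw [Fin.sum_univ_succ]; simp

lemma kappa_exists {μ : Measure ℝ} [IsFiniteMeasure μ] (h0 : μ univ ≠ 0) {A : Set ℝ} (hA : IsCompact A) (hμ : ∀ᵐ x ∂μ, x ∈ A)
    {C : ℝ≥0∞} (hC : C ≠ ⊤) {s : ℝ} (hs : 0 < s) (hF : Frost μ C s) :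
    ∃ κ : Measure ℝ, IsFiniteMeasure κ ∧ κ univ ≠ 0 ∧ (∀ᵐ x ∂κ, x ∈ D1 A) ∧ ∃ C' : ℝ≥0∞, C' ≠ ⊤ ∧ Frost κ C' s := by
  have hne : A.Nonempty := by
    by_contra h
    rw [not_nonempty_iff_eq_empty] at h
    rw [h] at hμ
    apply h0
    have : ∀ᵐ x ∂μ, False := hμ
    simpa [ae_iff] using this
  set y0 := sInf A with hy0
  have hy0A : y0 ∈ A := hA.sInf_mem hne
  have hy0l : ∀ x ∈ A, y0 ≤ x := fun x hx => csInf_le hA.bddBelow hx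
  have ht : Tendsto (fun c : ℝ => C * ENNReal.ofReal (c^s)) (𝓝[>] 0) (𝓝 0) := by
    have h1 : ContinuousAt (fun c : ℝ => c^s) 0 := ContinuousAt.rpow_const continuousAt_id (Or.inr hs.le)
    have h2 := ENNReal.Tendsto.const_mul (a := C) (ENNReal.tendsto_ofReal (h1.tendsto.mono_left (nhdsWithin_le_nhds (s := Ioi 0)))) (Or.inr hC)
    simpa [Real.zero_rpow hs.ne'] using h2
  obtain ⟨c, hc1, hc⟩ := ((ht.eventually_lt_const (pos_iff_ne_zero.2 h0)).and self_mem_nhdsWithin).exists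
  have hc0 : 0 < c := hc
  have hpos : μ (Ioi (y0+c)) ≠ 0 := by
    intro hz
    have h1 : μ univ ≤ μ (Icc (y0-c) (y0+c)) + μ (Ioi (y0+c)) := by
      refine le_trans ?_ (measure_union_le _ _)
      refine measure_mono_ae ?_
      filter_upwards [hμ] with x hx _
      have := hy0l x hx
      by_cases h : x ≤ y0+c
      · left; exact ⟨by linarith, h⟩
      · right; exact not_le.1 h
    rw [hz, add_zero] at h1
    exact absurd (h1.trans (hF y0 c hc0)) (not_le.2 hc1)
  have hfm : Measurable (fun x : ℝ => (x-y0)^2) := by fun_prop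
  refine ⟨(μ.restrict (Ioi (y0+c))).map (fun x => (x-y0)^2), inferInstance, ?_, ?_, C * ENNReal.ofReal ((1/c)^s), by finiteness, ?_⟩
  · rw [Measure.map_apply hfm MeasurableSet.univ]; simpa using hpos
  · refine (ae_map_iff hfm.aemeasurable (p := fun x => x ∈ D1 A) (D1_compact hA).measurableSet).2 ?_
    filter_upwards [ae_restrict_of_ae hμ] with x hx
    exact D1_mem hx hy0A
  · intro t r hr
    rw [Measure.map_apply hfm measurableSet_Icc, Measure.restrict_apply (hfm measurableSet_Icc)]
    set W := (fun x : ℝ => (x-y0)^2) ⁻¹' Icc (t-r) (t+r) ∩ Ioi (y0+c) with hW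
    rcases W.eq_empty_or_nonempty with h | ⟨x, hx⟩
    · rw [h]; simp
    have hsub : W ⊆ Icc (x - 1/c*r) (x+1/c*r) := by
      have key : ∀ x ∈ W, ∀ y ∈ W, y - x ≤ 1/c*r := by
        intro x hx y hy
        rw [one_div, inv_mul_eq_div, le_div_iff₀ hc0]
        by_cases h : y ≤ x
        · nlinarith
        have h1 : (x-y0)^2 ≥ t-r := hx.1.1
        have h2 : (y-y0)^2 ≤ t+r := hy.1.2
        have h3 : x > y0+c := hx.2
        have h4 : y > y0+c := hy.2
        nlinarith
      intro y hy
      constructor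
      · linarith [key y hy x hx]
      · linarith [key x hx y hy]
    refine (measure_mono hsub).trans ((hF x _ (by positivity)).trans (le_of_eq ?_))
    rw [Real.mul_rpow (by positivity) hr.le, ENNReal.ofReal_mul (by positivity), mul_assoc]

lemma eta_exists {μ : Measure ℝ} [IsFiniteMeasure μ] (h0 : μ univ ≠ 0) {A : Set ℝ} (hA : IsCompact A) (hμ : ∀ᵐ x ∂μ, x ∈ A)
    {C : ℝ≥0∞} (hC : C ≠ ⊤) {ε : ℝ} (hε : 0 < ε) (hε1 : ε ≤ 55/1000) (hF : Frost μ C (1/2+ε)) :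
    ∃ η : Measure ℝ, IsFiniteMeasure η ∧ η univ ≠ 0 ∧ (∀ᵐ x ∂η, x ∈ DD A 3) ∧ ∃ C' : ℝ≥0∞, C' ≠ ⊤ ∧ Frost η C' (3/4+105/100*ε) := by
  obtain ⟨κ, hκf, hκ0, hκA, C', hC', hF'⟩ := kappa_exists h0 hA hμ hC (by linarith) hF
  obtain ⟨R, hR⟩ := hA.isBounded.subset_closedBall 0
  have hz : ∀ᵐ z ∂μ, |z| ≤ max R 1 := by
    filter_upwards [hμ] with z hz
    have : |z| ≤ R := by simpa using hR hz
    exact this.trans (le_max_left _ _)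
  obtain ⟨D, hD, γ, hγ, h⟩ := key_spec hC hC' hε hε1 hF hF' (le_max_right R 1) hz
  set P := (μ.prod μ).prod ((μ.prod μ).prod κ) with hP
  have hm : Measurable (fun x : (ℝ × ℝ) × ((ℝ × ℝ) × ℝ) => FF x.1 x.2) := FF_meas
  set Λ := P.map (fun x => FF x.1 x.2) with hΛ
  have hΛu : Λ univ ≠ 0 := by
    rw [hΛ, Measure.map_apply hm MeasurableSet.univ, preimage_univ, hP]
    simp only [← univ_prod_univ, Measure.prod_prod]
    exact mul_ne_zero (mul_ne_zero h0 h0) (mul_ne_zero (mul_ne_zero h0 h0) hκ0)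
  obtain ⟨η, hηΛ, hη0, hη⟩ := pigeon hΛu (τ := 3/4+105/100*ε) (γ := γ) (by linarith) hγ (D := D*(2+Λ univ)) (by clear h; finiteness) (by
    intro δ hδ hδ1 I hI
    have hms : MeasurableSet {x : ℝ | ⌊x/δ⌋ ∈ I} := by
      have : Measurable (fun x : ℝ => ⌊x/δ⌋) := (measurable_id.div_const δ).floor
      exact this I.measurableSet
    rw [hΛ, Measure.map_apply hm hms, ← hΛ]
    exact h δ hδ hδ1 I _ hI)
  refine ⟨η, isFiniteMeasure_of_le Λ hηΛ, hη0, ?_, hη⟩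
  have : ∀ᵐ x ∂Λ, x ∈ DD A 3 := by
    refine (ae_map_iff hm.aemeasurable (p := fun x => x ∈ DD A 3) (DD_compact hA 3).measurableSet).2 ?_
    have hz2 : ∀ᵐ p ∂(μ.prod μ), p.1 ∈ A ∧ p.2 ∈ A := 
      (Measure.quasiMeasurePreserving_fst.ae hμ).and (Measure.quasiMeasurePreserving_snd.ae hμ)
    have hz3 : ∀ᵐ p ∂((μ.prod μ).prod κ), (p.1.1 ∈ A ∧ p.1.2 ∈ A) ∧ p.2 ∈ D1 A := 
      (Measure.quasiMeasurePreserving_fst.ae hz2).and (Measure.quasiMeasurePreserving_snd.ae hκA)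
    have hz5 : ∀ᵐ x ∂P, (x.1.1 ∈ A ∧ x.1.2 ∈ A) ∧ ((x.2.1.1 ∈ A ∧ x.2.1.2 ∈ A) ∧ x.2.2 ∈ D1 A) := 
      (Measure.quasiMeasurePreserving_fst.ae hz2).and (Measure.quasiMeasurePreserving_snd.ae hz3)
    filter_upwards [hz5] with x hx
    obtain ⟨⟨a1, a2⟩, ⟨a3, a4⟩, a5⟩ := hx
    have e := DD_succ (D1_mem a3 a1) (DD_succ (D1_mem a4 a2) (DD_succ a5 (show (0:ℝ) ∈ DD A 0 from rfl)))
    have e2 : FF x.1 x.2 = (x.2.1.1 - x.1.1)^2 + ((x.2.1.2-x.1.2)^2 + (x.2.2 + 0)) := by unfold FF; ring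
    rw [e2]; exact e
  exact hηΛ.absolutelyContinuous.ae_le this

lemma gs_split {B t x y : ℝ} (hB : 1 ≤ B) (ht : 1 ≤ |t|) (hy : |y| ≤ B) :
    gs (x + 2*t*y) ≤ ENNReal.ofReal (Real.exp 1) * (gs (x/(4*B*|t|)) * gs ((x+2*t*y)/2)) := by
  unfold gs
  rw [← ENNReal.ofReal_mul (by positivity), ← ENNReal.ofReal_mul (by positivity), ← Real.exp_add, ← Real.exp_add]
  apply ENNReal.ofReal_le_ofReal
  rw [Real.exp_le_exp]
  set u := x+2*t*y with hu
  have hx : x = u - 2*t*y := by rw [hu]; ring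
  have h1 : y^2 ≤ B^2 := sq_le_sq' (by linarith [neg_abs_le y]) (by linarith [le_abs_self y])
  have h2 : x^2 ≤ 2*u^2 + 8*(B^2*t^2) := by
    have : y^2*t^2 ≤ B^2*t^2 := mul_le_mul_of_nonneg_right h1 (sq_nonneg _)
    rw [hx]; nlinarith [sq_nonneg (u+2*t*y)]
  have h3 : 1 ≤ B^2*t^2 := by
    have : 1 ≤ B*|t| := by nlinarith
    calc (1:ℝ) ≤ (B*|t|)^2 := by nlinarith
      _ = _ := by rw [mul_pow, sq_abs]
  have h4 : (x/(4*B*|t|))^2 ≤ u^2/8+1/2 := by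
    rw [div_pow, mul_pow, mul_pow, sq_abs, div_le_iff₀ (by nlinarith)]
    nlinarith [sq_nonneg u]
  have h5 : (u/2)^2 = u^2/4 := by ring
  rw [h5]
  nlinarith [sq_nonneg u]

lemma nu_decay {μ : Measure ℝ} [IsFiniteMeasure μ] {C : ℝ≥0∞} (hC : C ≠ ⊤) {s : ℝ} (hs : s ≤ 1) (hF : Frost μ C s)
    {B : ℝ} (hB : 1 ≤ B) (hz : ∀ᵐ z ∂μ, |z| ≤ B) :
    ∃ D : ℝ≥0∞, D ≠ ⊤ ∧ ∀ t : ℝ, 1 ≤ |t| → ‖∫ p, Complex.exp (Complex.I * (t * (p.1-p.2)^2 : ℝ)) ∂(μ.prod μ)‖ₑ^2 ≤ D * ENNReal.ofReal (|t|^(1-2*s)) := by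
  set L := ENNReal.ofReal (√(2*Real.pi)) * (ENNReal.ofReal (Real.exp (B^2/2))^2 * (μ univ * (c0 * C))) with hL
  have hLt : L ≠ ⊤ := by have := c0_ne_top; rw [hL]; finiteness
  refine ⟨μ univ * (ENNReal.ofReal (Real.exp 1) * (c0 * C * (L * ENNReal.ofReal ((4*B)^(1-s))))), by have := c0_ne_top; clear_value L; finiteness, ?_⟩
  intro t ht
  have ht0 : 0 < |t| := by linarith
  have ht1 : t ≠ 0 := abs_pos.1 ht0
  have hfr := fun Q (hQ : 0 < Q) => osc_frost hs hF (bx_meas t) (bx_bd hz t) (Q := Q) hQ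
  rw [← hL] at hfr
  clear_value L
  have hfm : Measurable (fun x => ‖osc μ (bx t) x‖ₑ^2) := (osc_measurable μ (bx_meas t)).enorm.pow_const 2
  obtain ⟨f, hf⟩ : ∃ f : ℝ → ℝ≥0∞, ∀ x, f x = ‖osc μ (bx t) x‖ₑ^2 := ⟨_, fun _ => rfl⟩
  have hpt := ax_point hz t
  simp_rw [← hf] at hfr hfm hpt
  have gm := gs_meas
  have hInt : Integrable (fun p : ℝ × ℝ => Complex.exp (Complex.I * (t * (p.1-p.2)^2 : ℝ))) (μ.prod μ) := by
    refine Integrable.mono' (g := fun _ => (1:ℝ)) (integrable_const _) (by fun_prop) (ae_of_all _ fun p => ?_)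
    rw [norm_exp_I]
  have e1 : ∫ p, Complex.exp (Complex.I * (t * (p.1-p.2)^2 : ℝ)) ∂(μ.prod μ) = ∫ y, Complex.exp (Complex.I * (t*y^2 : ℝ)) * osc μ (ax t) (-(2*t*y)) ∂μ := by
    rw [integral_prod_symm _ hInt]
    refine integral_congr_ae (ae_of_all _ fun y => ?_)
    simp only [osc, ax]
    rw [← integral_const_mul]
    refine integral_congr_ae (ae_of_all _ fun x => ?_)
    simp only
    rw [← Complex.exp_add, ← Complex.exp_add]
    congr 1; push_cast; ring
  have hom : Measurable (fun y => ‖osc μ (ax t) (-(2*t*y))‖ₑ) := by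
    have h1 : Measurable (ax t) := by unfold ax; fun_prop
    exact ((osc_measurable μ h1).comp (by fun_prop : Measurable fun y : ℝ => -(2*t*y))).enorm
  calc _ ≤ (∫⁻ y, ‖osc μ (ax t) (-(2*t*y))‖ₑ ∂μ)^2 := by
        rw [e1]
        refine pow_le_pow_left' ((enorm_integral_le_lintegral_enorm _).trans (le_of_eq ?_)) 2
        refine lintegral_congr fun y => ?_
        rw [enorm_mul, enorm_exp_I, one_mul]
    _ ≤ μ univ * ∫⁻ y, ‖osc μ (ax t) (-(2*t*y))‖ₑ^2 ∂μ := cs_one μ _ hom.aemeasurable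
    _ ≤ μ univ * ∫⁻ y, (∫⁻ x, ENNReal.ofReal (Real.exp 1) * (f x * (gs (x/(4*B*|t|)) * gs ((x+2*t*y)/2)))) ∂μ := by
        refine mul_le_mul_right (lintegral_mono_ae ?_) _
        filter_upwards [hz] with y hy
        refine (hpt _).trans (lintegral_mono fun x => ?_)
        have := gs_split (x := x) hB ht hy
        rw [show x - -(2*t*y) = x+2*t*y by ring]
        refine (mul_le_mul_right this _).trans (le_of_eq ?_)
        ring
    _ = μ univ * (ENNReal.ofReal (Real.exp 1) * ∫⁻ x, f x * gs (x/(4*B*|t|)) * ∫⁻ y, gs ((x+2*t*y)/2) ∂μ) := by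
        congr 1
        rw [lintegral_lintegral_swap (by apply Measurable.aemeasurable; simp only [Function.uncurry_def]; fun_prop)]
        rw [← lintegral_const_mul' _ _ (by finiteness)]
        refine lintegral_congr fun x => ?_
        rw [lintegral_const_mul _ (by fun_prop), lintegral_const_mul _ (by fun_prop), lintegral_const_mul _ (by fun_prop)]
        ring
    _ ≤ μ univ * (ENNReal.ofReal (Real.exp 1) * ∫⁻ x, f x * gs (x/(4*B*|t|)) * (c0 * (C * ENNReal.ofReal ((1/|t|)^s)))) := by
        refine mul_le_mul_right (mul_le_mul_right (lintegral_mono fun x => mul_le_mul_right ?_ _) _) _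
        refine le_trans (lintegral_mono fun y => ?_) (frost_gauss hs hF (-(x/(2*t))) (by positivity))
        apply gs_anti
        apply le_of_eq
        rw [show (y - -(x/(2*t)))/(1/|t|) = (y + x/(2*t))*|t| by field_simp; ring, show (x+2*t*y)/2 = (y+x/(2*t))*t by field_simp; ring, abs_mul, abs_mul, abs_abs]
    _ ≤ μ univ * (ENNReal.ofReal (Real.exp 1) * ((L * ENNReal.ofReal ((4*B*|t|)^(1-s))) * (c0 * (C * ENNReal.ofReal ((1/|t|)^s))))) := by
        rw [lintegral_mul_const _ (by fun_prop)]
        exact mul_le_mul_right (mul_le_mul_right (mul_le_mul_left (hfr _ (by positivity)) _) _) _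
    _ = _ := by
        have : ENNReal.ofReal (|t|^(1-2*s)) = ENNReal.ofReal (|t|^(1-s)) * ENNReal.ofReal ((1/|t|)^s) := by
          rw [← ENNReal.ofReal_mul (by positivity), one_div, Real.inv_rpow ht0.le, ← Real.rpow_neg ht0.le, ← Real.rpow_add ht0]
          congr 2; ring
        rw [this, Real.mul_rpow (by positivity) ht0.le, ENNReal.ofReal_mul (by positivity)]
        ring

lemma osc_ga (σ : Measure ℝ) [IsFiniteMeasure σ] {Q : ℝ} (hQ : 0 < Q) (x : ℝ) :
    ∫ t, ((Real.exp (-(t/Q)^2/2) : ℝ) : ℂ) * (osc σ (fun _ => 1) t * Complex.exp (Complex.I * (-(t*x) : ℝ))) =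
      ((Q * √(2*Real.pi) : ℝ) : ℂ) * ∫ y, ((Real.exp (-(Q*(y-x))^2/2) : ℝ) : ℂ) ∂σ := by
  have hp := sqrt2pi_pos
  have h1 : ∫ t, osc σ (fun _ => 1) t * Complex.exp (Complex.I * (-(t*x) : ℝ)) ∂(ga Q) = ∫ y, ((Real.exp (-(Q*(y-x))^2/2) : ℝ) : ℂ) ∂σ := by
    have e : ∀ t, osc σ (fun _ => 1) t * Complex.exp (Complex.I * (-(t*x) : ℝ)) = ∫ y, Complex.exp (Complex.I * ((t*(y-x) : ℝ))) ∂σ := by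
      intro t
      unfold osc
      rw [← integral_mul_const]
      refine integral_congr_ae (ae_of_all _ fun y => ?_)
      simp only [one_mul]
      rw [← Complex.exp_add]; congr 1; push_cast; ring
    simp_rw [e]
    rw [integral_integral_swap]
    · refine integral_congr_ae (ae_of_all _ fun y => ?_)
      simp only
      rw [← ga_char]
      refine integral_congr_ae (ae_of_all _ fun t => ?_)
      simp
    · refine Integrable.mono' (g := fun _ => (1:ℝ)) (integrable_const _) ?_ (ae_of_all _ fun p => ?_)
      · simp only [Function.uncurry_def]; fun_prop
      · simp only [Function.uncurry_def]; rw [norm_exp_I]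
  rw [← h1, ga_int hQ, ← integral_const_mul]
  refine integral_congr_ae (ae_of_all _ fun t => ?_)
  simp only
  rw [← mul_assoc ((Q * √(2*Real.pi) : ℝ) : ℂ), ← Complex.ofReal_mul]
  congr 2
  field_simp

lemma interior_of_charFun {S : Set ℝ} (hS : IsCompact S) {σ : Measure ℝ} [IsFiniteMeasure σ] (h0 : σ univ ≠ 0)
    (hσ : ∀ᵐ x ∂σ, x ∈ S) (hInt : ∫⁻ t, ‖osc σ (fun _ => 1) t‖ₑ ≠ ⊤) : (interior S).Nonempty := by
  rw [nonempty_iff_ne_empty]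
  intro hemp
  rw [interior_eq_empty_iff_dense_compl] at hemp
  have hp := sqrt2pi_pos
  have hgm := osc_measurable σ (measurable_const (a := (1:ℂ)))
  have hgi : Integrable (osc σ (fun _ => 1)) := ⟨hgm.aestronglyMeasurable, hInt.lt_top⟩
  obtain ⟨h, hh⟩ : ∃ h : ℝ → ℂ, ∀ x, h x = ∫ t, osc σ (fun _ => 1) t * Complex.exp (Complex.I * (-(t*x) : ℝ)) := ⟨_, fun _ => rfl⟩
  have hcont : Continuous h := by
    have : h = fun x => ∫ t, osc σ (fun _ => 1) t * Complex.exp (Complex.I * (-(t*x) : ℝ)) := funext hh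
    rw [this]
    refine continuous_of_dominated (bound := fun t => ‖osc σ (fun _ => 1) t‖) (fun x => ?_) (fun x => ae_of_all _ fun t => ?_) hgi.norm (ae_of_all _ fun t => by fun_prop)
    · exact (hgm.mul (by fun_prop)).aestronglyMeasurable
    · rw [norm_mul, norm_exp_I, mul_one]
  have hzero : ∀ x ∈ Sᶜ, h x = 0 := by
    intro x hx
    obtain ⟨ρ, hρ, hb⟩ := Metric.isOpen_iff.1 hS.isClosed.isOpen_compl x hx
    have hlim : Tendsto (fun Q : ℝ => ∫ t, ((Real.exp (-(t/Q)^2/2) : ℝ) : ℂ) * (osc σ (fun _ => 1) t * Complex.exp (Complex.I * (-(t*x) : ℝ)))) atTop (𝓝 (h x)) := by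
      rw [hh]
      refine tendsto_integral_filter_of_dominated_convergence (fun t => ‖osc σ (fun _ => 1) t‖) (Eventually.of_forall fun Q => ?_) (Eventually.of_forall fun Q => ae_of_all _ fun t => ?_) hgi.norm (ae_of_all _ fun t => ?_)
      · exact (Measurable.mul (by fun_prop) (hgm.mul (by fun_prop))).aestronglyMeasurable
      · rw [norm_mul, norm_mul, norm_exp_I, mul_one, Complex.norm_real, Real.norm_of_nonneg (by positivity)]
        refine mul_le_of_le_one_left (norm_nonneg _) (Real.exp_le_one_iff.2 ?_)
        have := sq_nonneg (t/Q); linarith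
      · have t1 : Tendsto (fun Q : ℝ => t/Q) atTop (𝓝 0) := tendsto_const_nhds.div_atTop tendsto_id
        have t2 : Continuous (fun u : ℝ => ((Real.exp (-u^2/2) : ℝ) : ℂ) * (osc σ (fun _ => 1) t * Complex.exp (Complex.I * (-(t*x) : ℝ)))) := by fun_prop
        have := (t2.tendsto 0).comp t1
        simpa [Function.comp_def] using this
    have hlim0 : Tendsto (fun Q : ℝ => ∫ t, ((Real.exp (-(t/Q)^2/2) : ℝ) : ℂ) * (osc σ (fun _ => 1) t * Complex.exp (Complex.I * (-(t*x) : ℝ)))) atTop (𝓝 0) := by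
      have hK : Tendsto (fun Q : ℝ => (√(2*Real.pi) * (2/ρ^2 * σ.real univ)) / Q) atTop (𝓝 0) := tendsto_const_nhds.div_atTop tendsto_id
      refine squeeze_zero_norm' ?_ hK
      filter_upwards [eventually_gt_atTop 0] with Q hQ
      rw [osc_ga σ hQ, norm_mul, Complex.norm_real, Real.norm_of_nonneg (by positivity)]
      have hbd : ‖∫ y, ((Real.exp (-(Q*(y-x))^2/2) : ℝ) : ℂ) ∂σ‖ ≤ (2/(Q^2*ρ^2)) * σ.real univ := by
        refine norm_integral_le_of_norm_le_const ?_
        filter_upwards [hσ] with y hy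
        rw [Complex.norm_real, Real.norm_of_nonneg (by positivity)]
        have hxy : ρ ≤ |y-x| := by
          by_contra hlt
          push Not at hlt
          exact hb (by rw [Metric.mem_ball, Real.dist_eq]; exact hlt) hy
        have h2 : ρ^2 ≤ (y-x)^2 := by rw [← sq_abs (y-x)]; exact pow_le_pow_left₀ hρ.le hxy 2
        have h3 : -(Q*(y-x))^2/2 ≤ -(Q^2*ρ^2/2) := by
          rw [mul_pow]; nlinarith [mul_le_mul_of_nonneg_left h2 (sq_nonneg Q)]
        refine (Real.exp_le_exp.2 h3).trans ?_
        have hv : 0 < Q^2*ρ^2/2 := by positivity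
        rw [Real.exp_neg, show 2/(Q^2*ρ^2) = (Q^2*ρ^2/2)⁻¹ by rw [inv_div]]
        exact inv_anti₀ hv (by linarith [Real.add_one_le_exp (Q^2*ρ^2/2)])
      refine (mul_le_mul_of_nonneg_left hbd (by positivity)).trans (le_of_eq ?_)
      field_simp
    exact tendsto_nhds_unique hlim hlim0
  have hz : h = fun _ => 0 := Continuous.ext_on hemp hcont continuous_const (fun x hx => hzero x hx)
  have hA : ∫ x, h x ∂(ga 1) = ∫ t, ((Real.exp (-(t/1)^2/2) : ℝ) : ℂ) * (osc σ (fun _ => 1) t * Complex.exp (Complex.I * (-(t*0) : ℝ))) := by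
    simp_rw [hh]
    rw [integral_integral_swap]
    · refine integral_congr_ae (ae_of_all _ fun t => ?_)
      simp only
      rw [integral_const_mul]
      have := ga_char 1 (-t)
      have e2 : ∫ x, Complex.exp (Complex.I * (-(t*x) : ℝ)) ∂(ga 1) = ((Real.exp (-(t/1)^2/2) : ℝ) : ℂ) := by
        rw [show -(t/1)^2/2 = -(1*-t)^2/2 by ring, ← this]
        refine integral_congr_ae (ae_of_all _ fun x => ?_)
        simp only
        congr 1; push_cast; ring
      rw [e2]; simp; ring
    · have i1 : Integrable (fun q : ℝ × ℝ => osc σ (fun _ => 1) q.2) ((ga 1).prod volume) := hgi.comp_snd (ga 1)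
      refine Integrable.mono i1 ?_ (ae_of_all _ fun p => ?_)
      · simp only [Function.uncurry_def]
        exact ((hgm.comp measurable_snd).mul (by fun_prop)).aestronglyMeasurable
      · simp only [Function.uncurry_def]
        rw [norm_mul, norm_exp_I, mul_one]
  rw [osc_ga σ one_pos, hz] at hA
  simp only [integral_zero] at hA
  have hA2 := hA.symm
  have hcast : ∫ y, ((Real.exp (-(1*(y-0))^2/2) : ℝ) : ℂ) ∂σ = ((∫ y, Real.exp (-(1*(y-0))^2/2) ∂σ : ℝ) : ℂ) := integral_ofReal
  rw [hcast, ← Complex.ofReal_mul, Complex.ofReal_eq_zero] at hA2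
  have hpos : 0 < ∫ y, Real.exp (-(1*(y-0))^2/2) ∂σ := by
    have hi : Integrable (fun y : ℝ => Real.exp (-(1*(y-0))^2/2)) σ := by
      refine Integrable.mono' (g := fun _ => (1:ℝ)) (integrable_const _) (by fun_prop) (ae_of_all _ fun y => ?_)
      rw [Real.norm_of_nonneg (by positivity), Real.exp_le_one_iff]
      nlinarith [sq_nonneg (1*(y-0))]
    rw [integral_pos_iff_support_of_nonneg (fun y => by positivity) hi]
    have : Function.support (fun y : ℝ => Real.exp (-(1*(y-0))^2/2)) = univ := by
      ext y; simp [Real.exp_ne_zero]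
    rw [this]; exact pos_iff_ne_zero.2 h0
  have : 0 < 1 * √(2*Real.pi) * ∫ y, Real.exp (-(1*(y-0))^2/2) ∂σ := by positivity
  exact this.ne' hA2

lemma osc_eq_charFun (μ : Measure ℝ) (t : ℝ) : osc μ (fun _ => 1) t = charFun μ t := by
  rw [charFun_apply_real]
  unfold osc
  refine integral_congr_ae (ae_of_all _ fun x => ?_)
  simp only [one_mul]
  congr 1; push_cast; ring

lemma osc_conv (μ ν : Measure ℝ) [IsFiniteMeasure μ] [IsFiniteMeasure ν] (t : ℝ) :
    osc (μ.conv ν) (fun _ => 1) t = osc μ (fun _ => 1) t * osc ν (fun _ => 1) t := by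
  simp only [osc_eq_charFun, charFun_conv]

lemma conv_univ_ne (μ ν : Measure ℝ) [IsFiniteMeasure μ] [IsFiniteMeasure ν] (h1 : μ univ ≠ 0) (h2 : ν univ ≠ 0) : (μ.conv ν) univ ≠ 0 := by
  rw [Measure.conv, Measure.map_apply (by fun_prop) MeasurableSet.univ, preimage_univ, ← univ_prod_univ, Measure.prod_prod]
  exact mul_ne_zero h1 h2

lemma conv_ae {μ ν : Measure ℝ} [IsFiniteMeasure μ] [IsFiniteMeasure ν] {S1 S2 S : Set ℝ} (h1 : ∀ᵐ x ∂μ, x ∈ S1) (h2 : ∀ᵐ x ∂ν, x ∈ S2) 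
    (hS : MeasurableSet S) (h : ∀ a ∈ S1, ∀ b ∈ S2, a + b ∈ S) : ∀ᵐ x ∂(μ.conv ν), x ∈ S := by
  have hm : Measurable (fun p : ℝ × ℝ => p.1 + p.2) := by fun_prop
  refine (ae_map_iff hm.aemeasurable (p := fun x => x ∈ S) hS).2 ?_
  filter_upwards [(Measure.quasiMeasurePreserving_fst.ae h1).and (Measure.quasiMeasurePreserving_snd.ae h2)] with p hp
  exact h _ hp.1 _ hp.2

lemma chain {A : Set ℝ} (hA : IsCompact A) {η ν : Measure ℝ} [IsFiniteMeasure η] [IsFiniteMeasure ν] (h1 : η univ ≠ 0) (h2 : ν univ ≠ 0) {k : ℕ}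
    (hη : ∀ᵐ x ∂η, x ∈ DD A k) (hν : ∀ᵐ x ∂ν, x ∈ D1 A) (m : ℕ) :
    ∃ σ : Measure ℝ, IsFiniteMeasure σ ∧ σ univ ≠ 0 ∧ (∀ᵐ x ∂σ, x ∈ DD A (k+m)) ∧ ∀ t, osc σ (fun _ => 1) t = osc ν (fun _ => 1) t^m * osc η (fun _ => 1) t := by
  induction m with
  | zero => exact ⟨η, inferInstance, h1, hη, fun t => by simp⟩
  | succ m ih => 
    obtain ⟨σ, hσ, a, b, c⟩ := ih
    refine ⟨ν.conv σ, inferInstance, conv_univ_ne _ _ h2 a, ?_, ?_⟩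
    · exact conv_ae hν b (DD_compact hA _).measurableSet (fun x hx y hy => DD_succ hx hy)
    · intro t; rw [osc_conv, c]; ring

lemma nu_exists {μ : Measure ℝ} [IsFiniteMeasure μ] (h0 : μ univ ≠ 0) {A : Set ℝ} (hA : IsCompact A) (hμ : ∀ᵐ x ∂μ, x ∈ A)
    {C : ℝ≥0∞} (hC : C ≠ ⊤) {ε : ℝ} (hε : 0 < ε) (hε1 : ε ≤ 55/1000) (hF : Frost μ C (1/2+ε)) :
    ∃ ν : Measure ℝ, IsFiniteMeasure ν ∧ ν univ ≠ 0 ∧ (∀ᵐ x ∂ν, x ∈ D1 A) ∧ ∃ E : ℝ≥0∞, E ≠ ⊤ ∧ ∀ t, ‖osc ν (fun _ => 1) t‖ₑ ≤ E * ENNReal.ofReal ((1+|t|)^(-ε)) := by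
  obtain ⟨R, hR⟩ := hA.isBounded.subset_closedBall 0
  have hz : ∀ᵐ z ∂μ, |z| ≤ max R 1 := by
    filter_upwards [hμ] with z hz
    have : |z| ≤ R := by simpa using hR hz
    exact this.trans (le_max_left _ _)
  obtain ⟨D, hD, h⟩ := nu_decay hC (by linarith) hF (le_max_right R 1) hz
  have hm : Measurable (fun p : ℝ × ℝ => (p.1-p.2)^2) := by fun_prop
  have hnu : ((μ.prod μ).map (fun p => (p.1-p.2)^2)) univ ≠ 0 := by
    rw [Measure.map_apply hm MeasurableSet.univ, preimage_univ, ← univ_prod_univ, Measure.prod_prod]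
    exact mul_ne_zero h0 h0
  refine ⟨(μ.prod μ).map (fun p => (p.1-p.2)^2), inferInstance, hnu, ?_, ?_⟩
  · refine (ae_map_iff hm.aemeasurable (p := fun x => x ∈ D1 A) (D1_compact hA).measurableSet).2 ?_
    filter_upwards [(Measure.quasiMeasurePreserving_fst.ae hμ).and (Measure.quasiMeasurePreserving_snd.ae hμ)] with p hp
    exact D1_mem hp.1 hp.2
  have hosc : ∀ t, osc ((μ.prod μ).map (fun p => (p.1-p.2)^2)) (fun _ => 1) t = ∫ p, Complex.exp (Complex.I * (t * (p.1-p.2)^2 : ℝ)) ∂(μ.prod μ) := by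
    intro t
    unfold osc
    rw [integral_map hm.aemeasurable (by fun_prop)]
    simp only [one_mul]
  set ν := (μ.prod μ).map (fun p => (p.1-p.2)^2) with hν
  haveI : IsFiniteMeasure ν := by rw [hν]; infer_instance
  clear_value ν
  refine ⟨(ν univ + (D+1)) * ENNReal.ofReal (2^ε), by clear h; finiteness, ?_⟩
  intro t
  by_cases ht : 1 ≤ |t|
  · have h1 := h t ht
    rw [← hosc] at h1
    rw [← ENNReal.pow_le_pow_left_iff (n := 2) (by norm_num)]
    refine h1.trans ?_
    rw [mul_assoc, ← ENNReal.ofReal_mul (by positivity), mul_pow, ← ENNReal.ofReal_pow (by positivity)]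
    apply mul_le_mul'
    · calc D ≤ ν univ + (D+1) := le_self_add.trans le_add_self
        _ = (ν univ + (D+1))*1 := by rw [mul_one]
        _ ≤ (ν univ + (D+1))*(ν univ + (D+1)) := mul_le_mul_right (le_add_self.trans le_add_self) _
        _ = _ := by rw [sq]
    · apply ENNReal.ofReal_le_ofReal
      have e1 : |t|^(1-2*(1/2+ε)) = (|t|^(-ε))^2 := by
        rw [← Real.rpow_natCast, ← Real.rpow_mul (abs_nonneg t)]; congr 1; push_cast; ring
      rw [e1]
      refine pow_le_pow_left₀ (by positivity) ?_ 2
      rw [show (2:ℝ)^ε = (1/2)^(-ε) by rw [one_div, Real.inv_rpow (by norm_num), Real.rpow_neg (by norm_num), inv_inv], ← Real.mul_rpow (by norm_num) (by positivity)]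
      exact Real.rpow_le_rpow_of_nonpos (by positivity) (by linarith) (by linarith)
  · push Not at ht
    refine (enorm_osc_le ν t).trans ?_
    rw [mul_assoc, ← ENNReal.ofReal_mul (by positivity)]
    calc ν univ = ν univ * 1 := by rw [mul_one]
      _ ≤ _ := by
        refine mul_le_mul' le_self_add ?_
        rw [ENNReal.one_le_ofReal, Real.rpow_neg (by positivity), ← div_eq_mul_inv, one_le_div (by positivity)]
        exact Real.rpow_le_rpow (by positivity) (by linarith) hε.le

lemma DD_interior {A : Set ℝ} (hA : IsCompact A) {ε : ℝ} (hε : 0 < ε) (hε1 : ε ≤ 55/1000) (hd : ENNReal.ofReal (1/2+ε) < dimH A)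
    {m : ℕ} (hm : 1/4 < (m+105/100)*ε) : (interior (DD A (3+3+m))).Nonempty := by
  obtain ⟨μ, hμf, hμ0, hμA, hF⟩ := frostman_exists (by linarith) hA hd
  obtain ⟨η, hηf, hη0, hηA, C', hC', hF'⟩ := eta_exists hμ0 hA hμA (by finiteness) hε hε1 hF
  obtain ⟨ν, hνf, hν0, hνA, E, hE, hνt⟩ := nu_exists hμ0 hA hμA (by finiteness) hε hε1 hF
  have hηη : ∀ᵐ x ∂(η.conv η), x ∈ DD A (3+3) := conv_ae hηA hηA (DD_compact hA _).measurableSet (fun x hx y hy => DD_add hx hy)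
  obtain ⟨σ, hσf, hσ0, hσA, hσt⟩ := chain hA (conv_univ_ne _ _ hη0 hη0) hν0 hηη hνA m
  refine interior_of_charFun (DD_compact hA _) hσ0 hσA ?_
  obtain ⟨K, hK, hdw⟩ := dyadic_weight (1-(3/4+105/100*ε)) (m*ε) (by linarith) (by positivity)
  have hgm := osc_measurable η (measurable_const (a := (1:ℂ)))
  have h1 := hdw (fun t => ‖osc η (fun _ => 1) t‖ₑ^2) _ (hgm.enorm.pow_const 2) (fun Q hQ => osc_frost (by linarith) hF' (a := fun _ => 1) measurable_const (c := 1) (ae_of_all _ fun z => by simp) (by linarith)) 1 le_rfl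
  have h2 : ∫⁻ t, ‖osc σ (fun _ => 1) t‖ₑ ≤ E^m * ∫⁻ t, ‖osc η (fun _ => 1) t‖ₑ^2 * ENNReal.ofReal ((1+|t|)^(-(m*ε))) := by
    rw [← lintegral_const_mul' _ _ (ENNReal.pow_ne_top hE)]
    refine lintegral_mono fun t => ?_
    rw [hσt, osc_conv, enorm_mul, enorm_mul, enorm_pow]
    refine (mul_le_mul_left (pow_le_pow_left' (hνt t) m) _).trans (le_of_eq ?_)
    rw [mul_pow, ← ENNReal.ofReal_pow (by positivity), ← Real.rpow_natCast, ← Real.rpow_mul (by positivity), show -ε*m = -(m*ε) by ring]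
    ring
  refine ne_top_of_le_ne_top ?_ (h2.trans (mul_le_mul_right h1 _))
  have := c0_ne_top
  clear h1 h2 hdw hνt hσt
  finiteness

lemma thr_choice {d : ℕ} (hd : 10 ≤ d) {A : Set ℝ} 
    (hdim : dimH A > ENNReal.ofReal (((d : ℝ) - 2) / (2 * ((d : ℝ) - 4)) - 40 / (57 * ((d : ℝ) - 4)))) :
    ∃ ε : ℝ, 0 < ε ∧ ε ≤ 55/1000 ∧ ENNReal.ofReal (1/2+ε) < dimH A ∧ 1/4 < (((d-6 : ℕ) : ℝ)+105/100)*ε := by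
  have hd' : (10:ℝ) ≤ d := by exact_mod_cast hd
  have hd4 : (0:ℝ) < d - 4 := by linarith
  set e := 17/(57*((d:ℝ)-4)) with he
  have e0 : ((d : ℝ) - 2) / (2 * ((d : ℝ) - 4)) - 40 / (57 * ((d : ℝ) - 4)) = 1/2+e := by
    rw [he]; field_simp; ring
  have he0 : 0 < e := by positivity
  have he1 : e < 55/1000 := by
    rw [he, div_lt_iff₀ (by positivity)]; linarith
  have hcast : ((d-6:ℕ):ℝ) = d - 6 := by push_cast [Nat.cast_sub (show 6 ≤ d by omega)]; ring
  have he2 : 1/4 < ((d-6:ℕ):ℝ)*e + 105/100*e := by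
    rw [hcast, he, ← add_mul, mul_div_assoc', lt_div_iff₀ (by positivity)]
    linarith
  rw [e0, gt_iff_lt, ENNReal.lt_iff_exists_real_btwn] at hdim
  obtain ⟨r, hr0, hr1, hr2⟩ := hdim
  have hr1' : 1/2+e < r := by
    by_contra hc; push Not at hc
    exact absurd hr1 (not_lt.2 (ENNReal.ofReal_le_ofReal hc))
  refine ⟨min (r-1/2) (55/1000), lt_min (by linarith) (by norm_num), min_le_right _ _, lt_of_le_of_lt (ENNReal.ofReal_le_ofReal ?_) hr2, ?_⟩
  · linarith [min_le_left (r-1/2) (55/1000)]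
  · have : e ≤ min (r-1/2) (55/1000) := le_min (by linarith) he1.le
    have h6 : 0 ≤ ((d-6:ℕ):ℝ) := by positivity
    nlinarith

end MattilaSjolinProof

theorem mattila_sjolin_product_d_ge_10 (d : ℕ) (hd : 10 ≤ d) (A : Set ℝ)
    (hA : IsCompact A)
    (hdim : dimH A >
      ENNReal.ofReal (((d : ℝ) - 2) / (2 * ((d : ℝ) - 4)) - 40 / (57 * ((d : ℝ) - 4)))) :
    (interior (distSet (prodSet A d))).Nonempty := by
  obtain ⟨ε, hε, hε1, hdimε, hm⟩ := thr_choice hd hdim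
  obtain ⟨t0, ht0⟩ := DD_interior hA hε hε1 hdimε hm
  have hd6 : 3 + 3 + (d - 6) = d := by omega
  rw [hd6] at ht0
  have hnn : ∀ t ∈ DD A d, 0 ≤ t := by
    intro t ht
    obtain ⟨x, y, -, -, rfl⟩ := DD_dist d t ht
    exact Finset.sum_nonneg fun i _ => sq_nonneg _
  have ht0pos : 0 < t0 := by
    obtain ⟨r, hr, hb⟩ := Metric.isOpen_iff.1 isOpen_interior t0 ht0
    have hmem : t0 - r/2 ∈ Metric.ball t0 r := by
      rw [Metric.mem_ball, Real.dist_eq, abs_lt]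
      constructor <;> linarith
    have := hnn _ (interior_subset (hb hmem))
    linarith
  have hopen : IsOpen {u : ℝ | 0 < u ∧ u^2 ∈ interior (DD A d)} := by
    refine IsOpen.inter (isOpen_lt continuous_const continuous_id) ?_
    exact isOpen_interior.preimage (continuous_pow 2)
  refine ⟨√t0, interior_maximal ?_ hopen ⟨Real.sqrt_pos.2 ht0pos, ?_⟩⟩
  · rintro u ⟨hu0, hu⟩
    obtain ⟨x, y, hx, hy, hxy⟩ := DD_dist d _ (interior_subset hu)
    refine ⟨WithLp.toLp 2 x, fun i => hx i, WithLp.toLp 2 y, fun i => hy i, ?_⟩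
    rw [EuclideanSpace.dist_eq]
    simp only [Real.dist_eq, sq_abs]
    rw [← hxy, Real.sqrt_sq hu0.le]
  · rw [Real.sq_sqrt ht0pos.le]
    exact ht0
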